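/- Riesz distributions at the discrete Wallach points: Let k > 0, let R be a family of type-A Riesz distributions, and let r ∈ {1,…,n−1}. Then R_{kr} is the positive measure given as follows: for every Schwartz function φ on ℝⁿ, ⟨R_{kr}, φ⟩ = (1/n!) · Σ_{σ∈S_n} (d_r(k)Γ_r(kn;k))^{−1} ∫_{(0,∞)^r} φ(σ·(x₁,…,x_r,0,…,0)) · (x₁⋯x_r)^{k(n−r+1)−1} · ∏_{1≤i<j≤r}|x_i−x_j|^{2k} dx₁⋯dx_r, where σ ∈ S_n acts on ℝⁿ by permuting coordinates, d_r(k) = ∏_{j=1}^r Γ(1+jk)/Γ(1+k) and Γ_r(kn;k) = ∏_{j=1}^r Γ(kn − k(j−1)). In particular, ⟨R_{kr}, φ⟩ ≥ 0 for every nonnegative Schwartz function φ. -/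

import Mathlib

/-!
For `p` a polynomial and `c > 0` consider the functions `p(x) e^{-c∑x}`. Mollification together with
the Weierstrass theorem shows that they are dense enough for a tempered distribution supported on
the closed positive orthant to be determined by its values on them (`eq_zero_of_expPoly`). The idea
of the proof is that a distribution `S` of Riesz type satisfies, for every coordinate `i`,
`c S(x_i p e) = S((α p + x_i ∂_i p + k ∑_{j≠i} (x_i p - x_j s_{ij}p)/(x_i - x_j)) e)`,
where `e = e^{-c∑x}` and `s_{ij}` exchanges two variables. The polynomial on the right has no larger
degree than `p`, so this recursion and the values `S(e)` determine `S` (`eq_zero_of_recursion`).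

For `α > 0` the density `D(x)^{α-1} ω_k(x)` satisfies the recursion by integration by parts in `x_i`
followed by symmetrisation in `x_i ↔ x_j` (`recursion`). Since `μ ↦ ⟨R_μ, φ⟩` is entire, `R_μ`
satisfies it with `α = μ - k(n-1)` for all real `μ` (`riesz_rec`). Likewise `R_μ(e) = c^{-nμ}` for
all `μ` (`riesz_base`), because for large `μ` this is the Laguerre–Selberg integral
(`integral_rho`), which is evaluated as follows. Aomoto's recursion computes the quotient of its
values at `α + 1` and `α`, log-convexity then gives the dependence on `α` up to a constant
(`bohr_mollerup`), and the boundary term on a wall of the orthant, which survives at `α = 1`, gives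
the constant by induction on `n` (`selberg_succ_one`).

At `μ = kr` the parameter is `α = -k(n-1-r)`. On the face where `n - r` coordinates vanish, the
density of the claim is of the same type in `r` variables, with parameter `k(n-r+1)`. Along a
coordinate that does not vanish on the face, integration by parts gives the recursion with a
different value of `α` (`J_rec`), so its defect is a multiple of the integral of `p e`. Along a
vanishing coordinate the left-hand side is zero, and the quotients by non-vanishing coordinates are
integrals over adjacent faces (`J_recPoly_of_le`). In the sum over all faces these defects cancel
(`sum_J_rec`). The face measure and `R_{kr}` thus satisfy the same recursion, and they agree on `e`
by the Laguerre–Selberg integral in `r` variables. Hence they are equal (`riesz_eq`), and positivity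
is read off the formula (`riesz_nonneg`).
-/

open MeasureTheory Finset

/-- The type-A Dunkl weight `ω_k(x) = ∏_{i<j} |x_i - x_j|^{2k}`. -/
noncomputable def wk (n : ℕ) (k : ℝ) (x : Fin n → ℝ) : ℝ :=
  ∏ i : Fin n, ∏ j ∈ Finset.Ioi i, |x i - x j| ^ (2 * k)

/-- The open positive orthant `ℝ₊ⁿ = (0,∞)ⁿ`. -/
def Rplus (n : ℕ) : Set (Fin n → ℝ) := {x | ∀ i, 0 < x i}

/-- The constant `d_n(k) = ∏_{j=1}^n Γ(1+jk)/Γ(1+k)`. -/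
noncomputable def dnk (n : ℕ) (k : ℝ) : ℝ :=
  ∏ j ∈ Finset.range n, Real.Gamma (1 + (j + 1) * k) / Real.Gamma (1 + k)

/-- The multivariable Gamma function `Γ_n(μ;k) = ∏_{j=1}^n Γ(μ - k(j-1))`. -/
noncomputable def Gammank (n : ℕ) (k : ℝ) (μ : ℂ) : ℂ :=
  ∏ j ∈ Finset.range n, Complex.Gamma (μ - ((k * (j : ℝ) : ℝ) : ℂ))

/-- A family of type-A Riesz distributions for multiplicity `k > 0`: a map `R : ℂ → 𝓢'(ℝⁿ)`
such that `μ ↦ ⟨R_μ, φ⟩` is entire for every Schwartz `φ`, and for `Re μ > μ₀ = k(n-1)`,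
`⟨R_μ, φ⟩ = (d_n(k)Γ_n(μ;k))⁻¹ ∫_{ℝ₊ⁿ} φ(x) D(x)^{μ-μ₀-1} ω_k(x) dx`. -/
def IsRieszFamily (n : ℕ) (k : ℝ)
    (R : ℂ → (SchwartzMap (Fin n → ℝ) ℂ →L[ℂ] ℂ)) : Prop :=
  (∀ φ : SchwartzMap (Fin n → ℝ) ℂ, Differentiable ℂ (fun μ => R μ φ)) ∧
  ∀ μ : ℂ, k * ((n : ℝ) - 1) < μ.re → ∀ φ : SchwartzMap (Fin n → ℝ) ℂ,
    R μ φ = ((dnk n k : ℂ) * Gammank n k μ)⁻¹ *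
      ∫ x in Rplus n,
        φ x * (∏ i, (x i : ℂ) ^ (μ - ((k * ((n : ℝ) - 1) : ℝ) : ℂ) - 1)) * (wk n k x : ℂ)

/-- The embedding `(0,∞)^r → ℝⁿ`, `x ↦ (x₁,…,x_r,0,…,0)`. -/
def embOrth (n r : ℕ) (x : Fin r → ℝ) : Fin n → ℝ :=
  fun i => if h : (i : ℕ) < r then x ⟨(i : ℕ), h⟩ else 0

namespace RieszWallach

/-! ### The regularised weight and its integrability -/

/-- The regularised Vandermonde weight `∏_{i<j} ((x_i - x_j)² + δ)^k`, written as a product over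
ordered pairs so that its symmetry is visible. -/
noncomputable def vd (n : ℕ) (k δ : ℝ) (x : Fin n → ℝ) : ℝ :=
  ∏ i, ∏ j ∈ ({i} : Finset (Fin n))ᶜ, ((x i - x j) ^ 2 + δ) ^ (k / 2)

/-- The density `D(x)^{α-1} e^{-c(x₁+⋯+x_n)} ∏_{i<j} ((x_i - x_j)² + δ)^k`. -/
noncomputable def rho (n : ℕ) (k α c δ : ℝ) (x : Fin n → ℝ) : ℝ :=
  (∏ i, (x i ^ (α - 1) * Real.exp (-(c * x i)))) * vd n k δ x

/-- The growth function `∏ (1 + x_i)` on the orthant. -/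
def grow {n : ℕ} (x : Fin n → ℝ) : ℝ := ∏ i, (1 + x i)

/-- Measurable functions that are polynomially bounded on the open orthant. -/
structure PB {n : ℕ} (F : (Fin n → ℝ) → ℝ) : Prop where
  meas : Measurable F
  bd : ∃ (C : ℝ) (N : ℕ), ∀ x ∈ Rplus n, |F x| ≤ C * grow x ^ N

lemma Rplus_eq (n : ℕ) : Rplus n = Set.univ.pi fun _ : Fin n => Set.Ioi (0 : ℝ) := by
  ext x; simp [Rplus]

lemma measurableSet_Rplus (n : ℕ) : MeasurableSet (Rplus n) := by
  rw [Rplus_eq]; exact MeasurableSet.univ_pi fun _ => measurableSet_Ioi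

lemma restrict_Rplus (n : ℕ) : (volume : Measure (Fin n → ℝ)).restrict (Rplus n) =
    Measure.pi fun _ => volume.restrict (Set.Ioi (0 : ℝ)) := by
  rw [Rplus_eq, volume_pi, Measure.restrict_pi_pi]

lemma one_le_grow {n : ℕ} {x : Fin n → ℝ} (hx : x ∈ Rplus n) : 1 ≤ grow x :=
  Finset.one_le_prod fun i _ => by linarith [hx i]

lemma one_add_le_grow {n : ℕ} {x : Fin n → ℝ} (hx : x ∈ Rplus n) (i : Fin n) :
    1 + x i ≤ grow x := by
  have h := Finset.prod_erase_mul univ (fun i => 1 + x i) (mem_univ i)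
  have h1 : 1 ≤ ∏ j ∈ univ.erase i, (1 + x j) :=
    Finset.one_le_prod fun j _ => by linarith [hx j]
  rw [grow, ← h]
  nlinarith [hx i]

lemma vd_zero (n : ℕ) (k : ℝ) : vd n k 0 = wk n k := by
  funext x
  rw [vd, ← Finset.prod_prod_Ioi_mul_eq_prod_prod_off_diag
    (fun j i => ((x i - x j) ^ 2 + 0) ^ (k / 2)), wk]
  refine Finset.prod_congr rfl fun i _ => Finset.prod_congr rfl fun j _ => ?_
  have h : ∀ a : ℝ, (a ^ 2 + 0) ^ (k / 2) = |a| ^ k := fun a => by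
    rw [add_zero, ← sq_abs, ← Real.rpow_natCast, ← Real.rpow_mul (abs_nonneg _)]
    congr 1; push_cast; ring
  rw [h, h, abs_sub_comm (x j), two_mul, ← Real.mul_rpow (abs_nonneg _) (abs_nonneg _),
    ← sq, ← Real.rpow_natCast, ← Real.rpow_mul (abs_nonneg _)]
  congr 1; push_cast; ring

lemma vd_nonneg {n : ℕ} {k δ : ℝ} (hδ : 0 ≤ δ) (x : Fin n → ℝ) : 0 ≤ vd n k δ x :=
  Finset.prod_nonneg fun i _ => Finset.prod_nonneg fun j _ =>
    Real.rpow_nonneg (by positivity) _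

lemma vd_pos {n : ℕ} {k δ : ℝ} (hδ : 0 < δ) (x : Fin n → ℝ) : 0 < vd n k δ x :=
  Finset.prod_pos fun i _ => Finset.prod_pos fun j _ =>
    Real.rpow_pos_of_pos (by positivity) _

lemma continuous_vd {n : ℕ} {k δ : ℝ} (hk : 0 < k) : Continuous (vd n k δ) := by
  unfold vd
  refine continuous_finsetProd _ fun i _ => continuous_finsetProd _ fun j _ => ?_
  exact Continuous.rpow_const (by fun_prop) fun x => Or.inr (by positivity)

lemma vd_perm {n : ℕ} (k δ : ℝ) (x : Fin n → ℝ) (σ : Equiv.Perm (Fin n)) :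
    vd n k δ (fun i => x (σ i)) = vd n k δ x := by
  have h : ∀ y : Fin n → ℝ, vd n k δ y =
      ∏ i, ∏ j, if j = i then 1 else ((y i - y j) ^ 2 + δ) ^ (k / 2) := fun y => by
    refine Finset.prod_congr rfl fun i _ => ?_
    rw [← Finset.prod_subset (Finset.subset_univ ({i}ᶜ : Finset (Fin n)))]
    · exact Finset.prod_congr rfl fun j hj => by simp at hj; simp [hj]
    · intro j _ hj; simp at hj; simp [hj]
  rw [h, h x, ← Equiv.prod_comp σ (fun i => ∏ j, if j = i then 1 else
    ((x i - x j) ^ 2 + δ) ^ (k / 2))]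
  refine Finset.prod_congr rfl fun i _ => ?_
  rw [← Equiv.prod_comp σ (fun j => if j = σ i then 1 else
    ((x (σ i) - x j) ^ 2 + δ) ^ (k / 2))]
  simp

lemma vd_insertNth {m : ℕ} (k δ : ℝ) (hδ : 0 ≤ δ) (i : Fin (m + 1)) (t : ℝ) (y : Fin m → ℝ) :
    vd (m + 1) k δ (i.insertNth t y) = (∏ j, ((t - y j) ^ 2 + δ) ^ k) * vd m k δ y := by
  have h : ∀ (n : ℕ) (y : Fin n → ℝ), vd n k δ y =
      ∏ i, ∏ j, if j = i then 1 else ((y i - y j) ^ 2 + δ) ^ (k / 2) := fun n y => by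
    refine Finset.prod_congr rfl fun i _ => ?_
    rw [← Finset.prod_subset (Finset.subset_univ ({i}ᶜ : Finset (Fin n)))]
    · exact Finset.prod_congr rfl fun j hj => by simp at hj; simp [hj]
    · intro j _ hj; simp at hj; simp [hj]
  rw [h, h, Fin.prod_univ_succAbove _ i]
  simp_rw [Fin.prod_univ_succAbove _ i]
  simp only [Fin.insertNth_apply_same, Fin.insertNth_apply_succAbove, if_true, one_mul,
    Fin.succAbove_ne, (Fin.succAbove_ne i _).symm, if_false, Finset.prod_mul_distrib,
    Fin.succAbove_right_inj]
  rw [← mul_assoc, ← Finset.prod_mul_distrib]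
  congr 1
  refine Finset.prod_congr rfl fun j _ => ?_
  have h0 : 0 ≤ (t - y j) ^ 2 + δ := by positivity
  rw [show (y j - t) ^ 2 = (t - y j) ^ 2 by ring, ← Real.mul_rpow h0 h0, ← sq,
    ← Real.rpow_natCast, ← Real.rpow_mul h0]
  congr 1; push_cast; ring

lemma vd_le {n : ℕ} {k : ℝ} (hk : 0 < k) : ∃ N : ℕ, ∀ δ, 0 ≤ δ → δ ≤ 1 → ∀ x ∈ Rplus n,
    vd n k δ x ≤ grow x ^ N := by
  refine ⟨⌈k⌉₊ * n * n, fun δ h0 h1 x hx => ?_⟩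
  have hg := one_le_grow hx
  have hf : ∀ i j, ((x i - x j) ^ 2 + δ) ^ (k / 2) ≤ grow x ^ ⌈k⌉₊ := fun i j => by
    have ha : (x i - x j) ^ 2 + δ ≤ grow x ^ 2 := by
      have hi := one_add_le_grow hx i
      have hj := one_add_le_grow hx j
      have := hx i; have := hx j
      rcases le_total (x i) (x j) with h | h <;> nlinarith
    calc ((x i - x j) ^ 2 + δ) ^ (k / 2) ≤ (grow x ^ 2) ^ (k / 2) :=
          Real.rpow_le_rpow (by positivity) ha (by positivity)
      _ = grow x ^ k := by
          rw [← Real.rpow_natCast, ← Real.rpow_mul (by linarith)]; congr 1; push_cast; ring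
      _ ≤ grow x ^ (⌈k⌉₊ : ℝ) := Real.rpow_le_rpow_of_exponent_le hg (Nat.le_ceil k)
      _ = _ := Real.rpow_natCast _ _
  have hc : ∀ i : Fin n, (({i} : Finset (Fin n))ᶜ).card ≤ n := fun i =>
    (Finset.card_le_univ _).trans (by simp)
  have hp : (1 : ℝ) ≤ grow x ^ ⌈k⌉₊ := one_le_pow₀ hg
  calc vd n k δ x ≤ ∏ i : Fin n, ∏ j ∈ ({i} : Finset (Fin n))ᶜ, grow x ^ ⌈k⌉₊ := by
        refine Finset.prod_le_prod (fun i _ => Finset.prod_nonneg fun j _ =>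
          Real.rpow_nonneg (by positivity) _) fun i _ => Finset.prod_le_prod (fun j _ =>
          Real.rpow_nonneg (by positivity) _) fun j _ => hf i j
    _ ≤ ∏ i : Fin n, (grow x ^ ⌈k⌉₊) ^ n := by
        refine Finset.prod_le_prod (fun i _ => by positivity) fun i _ => ?_
        rw [Finset.prod_const]
        exact pow_le_pow_right₀ hp (hc i)
    _ = _ := by
        rw [Finset.prod_const, Finset.card_univ, Fintype.card_fin, ← pow_mul, ← pow_mul, mul_assoc]

lemma PB.const {n : ℕ} (a : ℝ) : PB (fun _ : Fin n → ℝ => a) :=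
  ⟨measurable_const, |a|, 0, fun x _ => by simp⟩

lemma PB.coord {n : ℕ} (i : Fin n) : PB (fun x : Fin n → ℝ => x i) :=
  ⟨measurable_pi_apply i, 1, 1, fun x hx => by
    rw [abs_of_pos (hx i)]; linarith [one_add_le_grow hx i]⟩

lemma PB.add {n : ℕ} {F G : (Fin n → ℝ) → ℝ} (hF : PB F) (hG : PB G) :
    PB (fun x => F x + G x) := by
  obtain ⟨C, N, h⟩ := hF.bd
  obtain ⟨C', N', h'⟩ := hG.bd
  refine ⟨hF.meas.add hG.meas, |C| + |C'|, N + N', fun x hx => ?_⟩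
  have hg := one_le_grow hx
  have e1 : C * grow x ^ N ≤ |C| * grow x ^ (N + N') :=
    mul_le_mul (le_abs_self _) (pow_le_pow_right₀ hg (by omega)) (by positivity) (abs_nonneg _)
  have e2 : C' * grow x ^ N' ≤ |C'| * grow x ^ (N + N') :=
    mul_le_mul (le_abs_self _) (pow_le_pow_right₀ hg (by omega)) (by positivity) (abs_nonneg _)
  calc |F x + G x| ≤ |F x| + |G x| := abs_add_le _ _
    _ ≤ _ := by linarith [h x hx, h' x hx]

lemma PB.mul {n : ℕ} {F G : (Fin n → ℝ) → ℝ} (hF : PB F) (hG : PB G) :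
    PB (fun x => F x * G x) := by
  obtain ⟨C, N, h⟩ := hF.bd
  obtain ⟨C', N', h'⟩ := hG.bd
  refine ⟨hF.meas.mul hG.meas, C * C', N + N', fun x hx => ?_⟩
  rw [abs_mul, pow_add]
  calc |F x| * |G x| ≤ (C * grow x ^ N) * (C' * grow x ^ N') :=
        mul_le_mul (h x hx) (h' x hx) (abs_nonneg _) ((abs_nonneg _).trans (h x hx))
    _ = _ := by ring

lemma PB.neg {n : ℕ} {F : (Fin n → ℝ) → ℝ} (hF : PB F) : PB (fun x => - F x) := by
  simpa using (PB.const (-1)).mul hF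

lemma PB.sub {n : ℕ} {F G : (Fin n → ℝ) → ℝ} (hF : PB F) (hG : PB G) :
    PB (fun x => F x - G x) := by
  simpa [sub_eq_add_neg] using hF.add hG.neg

lemma PB.sum {n : ℕ} {ι : Type*} (s : Finset ι) {F : ι → (Fin n → ℝ) → ℝ}
    (hF : ∀ i ∈ s, PB (F i)) : PB (fun x => ∑ i ∈ s, F i x) := by
  classical
  induction s using Finset.induction_on with
  | empty => simpa using PB.const 0
  | insert a s ha ih =>
    simp_rw [Finset.sum_insert ha]
    exact (hF a (by simp)).add (ih fun i hi => hF i (by simp [hi]))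

lemma PB.mono {n : ℕ} {F G : (Fin n → ℝ) → ℝ} (hF : PB F) (hG : Measurable G)
    (h : ∀ x ∈ Rplus n, |G x| ≤ |F x|) : PB G := by
  obtain ⟨C, N, h'⟩ := hF.bd
  exact ⟨hG, C, N, fun x hx => (h x hx).trans (h' x hx)⟩

lemma rho_meas {n : ℕ} {k α c δ : ℝ} : Measurable (rho n k α c δ) := by
  unfold rho vd
  refine Measurable.mul ?_ ?_
  · exact Finset.measurable_fun_prod _ fun i _ => by fun_prop
  · exact Finset.measurable_fun_prod _ fun i _ =>
      Finset.measurable_fun_prod _ fun j _ => by fun_prop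

lemma rho_nonneg {n : ℕ} {k α c δ : ℝ} (hδ : 0 ≤ δ) {x : Fin n → ℝ} (hx : x ∈ Rplus n) :
    0 ≤ rho n k α c δ x :=
  mul_nonneg (Finset.prod_nonneg fun i _ =>
    mul_nonneg (Real.rpow_nonneg (hx i).le _) (Real.exp_pos _).le) (vd_nonneg hδ x)

lemma integrable_one_dim {α c : ℝ} (hα : 0 < α) (hc : 0 < c) (N : ℕ) :
    IntegrableOn (fun t : ℝ => (1 + t) ^ N * (t ^ (α - 1) * Real.exp (-(c * t))))
      (Set.Ioi 0) := by
  have h : ∀ m : ℕ, IntegrableOn (fun t : ℝ => t ^ (m : ℕ) * (t ^ (α - 1) * Real.exp (-(c * t))))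
      (Set.Ioi 0) := fun m => by
    have := integrableOn_rpow_mul_exp_neg_mul_rpow (p := 1) (s := α - 1 + m) (b := c)
      (by have : (0 : ℝ) ≤ m := by positivity
          linarith) one_pos hc
    refine this.congr_fun (fun t ht => ?_) measurableSet_Ioi
    simp only [Real.rpow_one]
    rw [Real.rpow_add_natCast (ne_of_gt ht)]
    ring_nf
  have e : (fun t : ℝ => (1 + t) ^ N * (t ^ (α - 1) * Real.exp (-(c * t)))) =
      fun t => ∑ m ∈ range (N + 1), (N.choose m : ℝ) *
        (t ^ (m : ℕ) * (t ^ (α - 1) * Real.exp (-(c * t)))) := by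
    funext t
    rw [add_comm 1 t, add_pow, Finset.sum_mul]
    exact Finset.sum_congr rfl fun m _ => by ring
  rw [e]
  exact integrable_finsetSum _ fun m _ => (h m).const_mul _

/-- Polynomial growth times the exponentially damped density is dominated, uniformly in
`δ ∈ [0,1]`, by one integrable function. -/
lemma exists_dom {n : ℕ} {k α c : ℝ} (hk : 0 < k) (hα : 0 < α) (hc : 0 < c)
    {F : (Fin n → ℝ) → ℝ} (hF : PB F) :
    ∃ G : (Fin n → ℝ) → ℝ, IntegrableOn G (Rplus n) ∧ ∀ δ, 0 ≤ δ → δ ≤ 1 → ∀ x ∈ Rplus n,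
      |F x * rho n k α c δ x| ≤ G x := by
  obtain ⟨C, N, h⟩ := hF.bd
  obtain ⟨M, hM⟩ := vd_le (n := n) hk
  refine ⟨fun x => C * ∏ i, ((1 + x i) ^ (N + M) * (x i ^ (α - 1) * Real.exp (-(c * x i)))),
    ?_, fun δ h0 h1 x hx => ?_⟩
  · refine Integrable.const_mul ?_ C
    rw [restrict_Rplus]
    exact Integrable.fintype_prod (f := fun _ t => (1 + t) ^ (N + M) *
      (t ^ (α - 1) * Real.exp (-(c * t)))) fun _ => integrable_one_dim hα hc _
  · have hr := rho_nonneg (k := k) (α := α) (c := c) h0 hx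
    simp only [abs_mul, abs_of_nonneg hr, Finset.prod_mul_distrib, Finset.prod_pow]
    have hC : 0 ≤ C * grow x ^ N := (abs_nonneg _).trans (h x hx)
    have hp : 0 ≤ ∏ i, (x i ^ (α - 1) * Real.exp (-(c * x i))) := Finset.prod_nonneg fun i _ =>
      mul_nonneg (Real.rpow_nonneg (hx i).le _) (Real.exp_pos _).le
    calc |F x| * rho n k α c δ x ≤ (C * grow x ^ N) *
          ((∏ i, (x i ^ (α - 1) * Real.exp (-(c * x i)))) * grow x ^ M) :=
          mul_le_mul (h x hx) (mul_le_mul_of_nonneg_left (hM δ h0 h1 x hx) hp) hr hC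
      _ = _ := by rw [grow, pow_add, Finset.prod_mul_distrib]; ring

lemma PB.integrable {n : ℕ} {k α c δ : ℝ} (hk : 0 < k) (hα : 0 < α) (hc : 0 < c)
    (h0 : 0 ≤ δ) (h1 : δ ≤ 1) {F : (Fin n → ℝ) → ℝ} (hF : PB F) :
    IntegrableOn (fun x => F x * rho n k α c δ x) (Rplus n) := by
  obtain ⟨G, hG, h⟩ := exists_dom hk hα hc hF
  refine Integrable.mono' hG (hF.meas.mul rho_meas).aestronglyMeasurable ?_
  filter_upwards [ae_restrict_mem (measurableSet_Rplus n)] with x hx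
  exact h δ h0 h1 x hx

lemma rho_perm {n : ℕ} (k α c δ : ℝ) (x : Fin n → ℝ) (σ : Equiv.Perm (Fin n)) :
    rho n k α c δ (fun i => x (σ i)) = rho n k α c δ x := by
  rw [rho, rho, vd_perm]
  congr 1
  exact Equiv.prod_comp σ (fun i => x i ^ (α - 1) * Real.exp (-(c * x i)))

/-- The orthant integral is invariant under permutations of the coordinates. -/
lemma setIntegral_perm {n : ℕ} (σ : Equiv.Perm (Fin n)) {E : Type*} [NormedAddCommGroup E]
    [NormedSpace ℝ E] (F : (Fin n → ℝ) → E) :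
    ∫ x in Rplus n, F (fun i => x (σ i)) = ∫ x in Rplus n, F x := by
  have hmp := volume_measurePreserving_piCongrLeft (fun _ : Fin n => ℝ) σ.symm
  have h := hmp.setIntegral_preimage_emb (MeasurableEquiv.measurableEmbedding _) F (Rplus n)
  have e : ∀ x : Fin n → ℝ, MeasurableEquiv.piCongrLeft (fun _ : Fin n => ℝ) σ.symm x =
      fun i => x (σ i) := fun x => by
    funext i
    have := MeasurableEquiv.piCongrLeft_apply_apply (β := fun _ : Fin n => ℝ) σ.symm x (σ i)
    simpa using this
  rw [← h]
  have e2 : (MeasurableEquiv.piCongrLeft (fun _ : Fin n => ℝ) σ.symm) ⁻¹' Rplus n = Rplus n := by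
    ext x
    simp only [Set.mem_preimage, e, Rplus, Set.mem_ofPred_eq]
    exact ⟨fun h i => by simpa using h (σ.symm i), fun h i => h _⟩
  rw [e2]
  simp_rw [e]

/-! ### Integration by parts on the orthant -/

open Filter Topology in
/-- The fundamental theorem of calculus in the `i`-th variable, integrated over the others. -/
lemma integral_partial {m : ℕ} (i : Fin (m + 1)) {G G' : (Fin (m + 1) → ℝ) → ℝ}
    {b : (Fin m → ℝ) → ℝ} (hG' : IntegrableOn G' (Rplus (m + 1)))
    (hd : ∀ y ∈ Rplus m, ∀ t, 0 < t →
      HasDerivAt (fun t => G (i.insertNth t y)) (G' (i.insertNth t y)) t)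
    (h0 : ∀ y ∈ Rplus m, Tendsto (fun t => G (i.insertNth t y)) (𝓝[>] 0) (𝓝 (b y)))
    (hinf : ∀ y ∈ Rplus m, Tendsto (fun t => G (i.insertNth t y)) atTop (𝓝 0)) :
    ∫ x in Rplus (m + 1), G' x = - ∫ y in Rplus m, b y := by
  have hmp := (measurePreserving_piFinSuccAbove
    (fun _ : Fin (m + 1) => (volume : Measure ℝ).restrict (Set.Ioi 0)) i).symm
  have e : ∀ p : ℝ × (Fin m → ℝ),
      (MeasurableEquiv.piFinSuccAbove (fun _ : Fin (m + 1) => ℝ) i).symm p =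
        i.insertNth p.1 p.2 := fun p => rfl
  rw [IntegrableOn, restrict_Rplus, ← hmp.integrable_comp_emb
    (MeasurableEquiv.measurableEmbedding _)] at hG'
  rw [restrict_Rplus, ← hmp.integral_comp', integral_prod_symm (fun p => G' ((MeasurableEquiv.piFinSuccAbove
    (fun _ : Fin (m + 1) => ℝ) i).symm p)) hG', ← restrict_Rplus,
    ← integral_neg]
  have hae := hG'.prod_left_ae
  rw [← restrict_Rplus] at hae
  refine integral_congr_ae ?_
  filter_upwards [hae, ae_restrict_mem (measurableSet_Rplus m)] with y hy hy'
  simp only [e, Function.comp_def] at hy ⊢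
  have h := integral_Ioi_mul_deriv_eq_deriv_mul (a := 0) (u := fun _ => (1 : ℝ))
    (u' := fun _ => 0) (v := fun t => G (i.insertNth t y))
    (v' := fun t => G' (i.insertNth t y)) (a' := b y) (b' := 0)
    (fun t _ => hasDerivAt_const t 1) (fun t ht => hd y hy' t ht)
    (by simpa [Pi.mul_def, IntegrableOn] using hy) (by simp [Pi.mul_def])
    (by simpa [Pi.mul_def] using h0 y hy') (by simpa [Pi.mul_def] using hinf y hy')
  simpa using h

lemma rho_insertNth {m : ℕ} (k α c δ : ℝ) (hδ : 0 ≤ δ) (i : Fin (m + 1)) (t : ℝ)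
    (y : Fin m → ℝ) :
    rho (m + 1) k α c δ (i.insertNth t y) =
      t ^ (α - 1) * Real.exp (-(c * t)) * (∏ j, ((t - y j) ^ 2 + δ) ^ k) *
        rho m k α c δ y := by
  rw [rho, rho, vd_insertNth k δ hδ, Fin.prod_univ_succAbove _ i]
  simp only [Fin.insertNth_apply_same, Fin.insertNth_apply_succAbove]
  ring

lemma insertNth_mem {m : ℕ} (i : Fin (m + 1)) {t : ℝ} (ht : 0 < t) {y : Fin m → ℝ}
    (hy : y ∈ Rplus m) : (i.insertNth t y : Fin (m + 1) → ℝ) ∈ Rplus (m + 1) := by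
  intro j
  rcases Fin.eq_self_or_eq_succAbove i j with rfl | ⟨j, rfl⟩
  · simpa using ht
  · simpa using hy j

/-- The function `(x_i - x_j) / ((x_i - x_j)² + δ)`: `2k` times it is the logarithmic derivative in
`x_i` of the factor of the regularised weight belonging to `i` and `j`. -/
noncomputable def drift {n : ℕ} (δ : ℝ) (i j : Fin n) (x : Fin n → ℝ) : ℝ :=
  (x i - x j) / ((x i - x j) ^ 2 + δ)

lemma hasDerivAt_rho {m : ℕ} {k α c δ : ℝ} (hδ : 0 < δ) (i : Fin (m + 1)) {t : ℝ} (ht : 0 < t)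
    (y : Fin m → ℝ) :
    HasDerivAt (fun t => rho (m + 1) k α c δ (i.insertNth t y))
      (rho (m + 1) k α c δ (i.insertNth t y) *
        ((α - 1) / t - c + ∑ j, 2 * k * drift δ i j (i.insertNth t y))) t := by
  have hpos : ∀ j, 0 < (t - y j) ^ 2 + δ := fun j => by positivity
  have h1 : HasDerivAt (fun t : ℝ => t ^ (α - 1)) ((α - 1) * t ^ (α - 1 - 1)) t :=
    Real.hasDerivAt_rpow_const (Or.inl ht.ne')
  have h2 : HasDerivAt (fun t : ℝ => Real.exp (-(c * t))) (Real.exp (-(c * t)) * (-c)) t := by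
    have : HasDerivAt (fun t : ℝ => -(c * t)) (-c) t := by
      simpa using ((hasDerivAt_id' t).const_mul (-c)).congr_deriv (mul_one _)
    exact this.exp
  have h3 : ∀ j, HasDerivAt (fun t : ℝ => ((t - y j) ^ 2 + δ) ^ k)
      (2 * (t - y j) * k * ((t - y j) ^ 2 + δ) ^ (k - 1)) t := fun j => by
    have : HasDerivAt (fun t : ℝ => (t - y j) ^ 2 + δ) (2 * (t - y j)) t := by
      simpa using (((hasDerivAt_id t).sub_const (y j)).pow 2).add_const δ
    exact this.rpow_const (Or.inl (hpos j).ne')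
  have h4 := HasDerivAt.fun_finsetProd (u := univ) fun j _ => h3 j
  have h5 := ((h1.mul h2).mul h4).mul_const (rho m k α c δ y)
  have e : ∀ t, rho (m + 1) k α c δ (i.insertNth t y) =
      t ^ (α - 1) * Real.exp (-(c * t)) * (∏ j, ((t - y j) ^ 2 + δ) ^ k) *
        rho m k α c δ y := fun t => rho_insertNth k α c δ hδ.le i t y
  simp_rw [e]
  refine h5.congr_deriv ?_
  have e3 : ∑ j, (∏ l ∈ univ.erase j, ((t - y l) ^ 2 + δ) ^ k) •
      (2 * (t - y j) * k * ((t - y j) ^ 2 + δ) ^ (k - 1)) =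
      (∏ j, ((t - y j) ^ 2 + δ) ^ k) * ∑ j, 2 * k * ((t - y j) / ((t - y j) ^ 2 + δ)) := by
    rw [Finset.mul_sum]
    refine Finset.sum_congr rfl fun j _ => ?_
    rw [← Finset.prod_erase_mul univ _ (mem_univ j), Real.rpow_sub_one (hpos j).ne', smul_eq_mul]
    ring
  have e4 : ∑ j, 2 * k * drift δ i j (i.insertNth t y : Fin (m + 1) → ℝ) =
      ∑ j, 2 * k * ((t - y j) / ((t - y j) ^ 2 + δ)) := by
    rw [Fin.sum_univ_succAbove _ i]
    simp [drift]
  rw [e3, e4, Real.rpow_sub_one ht.ne']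
  simp only [Pi.mul_apply]
  generalize ∏ j, ((t - y j) ^ 2 + δ) ^ k = A
  ring

lemma PB.drift {n : ℕ} {δ : ℝ} (hδ : 0 < δ) (i j : Fin n) :
    PB (RieszWallach.drift δ i j) := by
  refine PB.mono ((PB.const δ⁻¹).mul ((PB.coord i).sub (PB.coord j))) ?_ fun x _ => ?_
  · unfold RieszWallach.drift; fun_prop
  · rw [RieszWallach.drift, abs_div, abs_mul, div_eq_inv_mul, abs_of_pos (inv_pos.2 hδ)]
    refine mul_le_mul_of_nonneg_right ?_ (abs_nonneg _)
    rw [abs_of_pos (by positivity)]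
    exact inv_anti₀ hδ (by nlinarith [sq_nonneg (x i - x j)])

lemma grow_insertNth {m : ℕ} (i : Fin (m + 1)) (t : ℝ) (y : Fin m → ℝ) :
    grow (i.insertNth t y : Fin (m + 1) → ℝ) = (1 + t) * grow y := by
  rw [grow, Fin.prod_univ_succAbove _ i]
  simp [grow]

open Filter Topology in
lemma tendsto_boundary {α c : ℝ} (hα : 0 < α) (hc : 0 < c) (N : ℕ) :
    Tendsto (fun t : ℝ => (1 + t) ^ N * (t ^ α * Real.exp (-(c * t)))) (𝓝[>] 0) (𝓝 0) ∧
    Tendsto (fun t : ℝ => (1 + t) ^ N * (t ^ α * Real.exp (-(c * t)))) atTop (𝓝 0) := by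
  constructor
  · have : ContinuousAt (fun t : ℝ => (1 + t) ^ N * (t ^ α * Real.exp (-(c * t)))) 0 := by
      refine ContinuousAt.mul (by fun_prop) (ContinuousAt.mul ?_ (by fun_prop))
      exact Real.continuousAt_rpow_const _ _ (Or.inr hα.le)
    have h := this.tendsto
    simp only [Real.zero_rpow hα.ne', zero_mul, mul_zero] at h
    exact h.mono_left nhdsWithin_le_nhds
  · have e : ∀ t : ℝ, 0 < t → (1 + t) ^ N * (t ^ α * Real.exp (-(c * t))) =
        ∑ j ∈ range (N + 1), (N.choose j : ℝ) * (t ^ (α + j) * Real.exp (-c * t)) := by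
      intro t ht
      rw [add_comm 1 t, add_pow, Finset.sum_mul]
      refine Finset.sum_congr rfl fun j _ => ?_
      rw [Real.rpow_add_natCast ht.ne']
      ring_nf
    have h : Tendsto (fun t : ℝ => ∑ j ∈ range (N + 1),
        (N.choose j : ℝ) * (t ^ (α + j) * Real.exp (-c * t))) atTop (𝓝 0) := by
      have := tendsto_finsetSum (range (N + 1)) fun j _ =>
        (tendsto_rpow_mul_exp_neg_mul_atTop_nhds_zero (α + j) c hc).const_mul (N.choose j : ℝ)
      simpa using this
    refine h.congr' ?_
    filter_upwards [eventually_gt_atTop 0] with t ht using (e t ht).symm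

open Filter Topology in
/-- The boundary terms `x_i f ρ_δ` vanish both at the wall `x_i = 0` and at infinity. -/
lemma boundary_zero {m : ℕ} {k α c δ : ℝ} (hk : 0 < k) (h0 : 0 ≤ δ)
    (h1 : δ ≤ 1) (i : Fin (m + 1)) {f : (Fin (m + 1) → ℝ) → ℝ} (hf : PB f) {y : Fin m → ℝ}
    (hy : y ∈ Rplus m) {l : Filter ℝ}
    (hl : ∀ N : ℕ, Tendsto (fun t : ℝ => (1 + t) ^ N * (t ^ α * Real.exp (-(c * t)))) l (𝓝 0))
    (hl' : ∀ᶠ t in l, 0 < t) :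
    Tendsto (fun t => t * f (i.insertNth t y) * rho (m + 1) k α c δ (i.insertNth t y))
      l (𝓝 0) := by
  obtain ⟨C, N, hC⟩ := hf.bd
  obtain ⟨M, hM⟩ := vd_le (n := m + 1) hk
  set K : ℝ := C * grow y ^ (N + M) * ∏ j, (y j ^ (α - 1) * Real.exp (-(c * y j)))
  have hlim := (hl (N + M)).const_mul K
  rw [mul_zero] at hlim
  refine squeeze_zero_norm' ?_ hlim
  filter_upwards [hl'] with t ht
  have hm := insertNth_mem i ht hy
  have hq : 0 ≤ ∏ j, (y j ^ (α - 1) * Real.exp (-(c * y j))) := Finset.prod_nonneg fun j _ =>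
    mul_nonneg (Real.rpow_nonneg (hy j).le _) (Real.exp_pos _).le
  have hF := hC _ hm
  have hV := hM δ h0 h1 _ hm
  have hV0 := vd_nonneg (k := k) h0 (i.insertNth t y : Fin (m + 1) → ℝ)
  rw [grow_insertNth] at hF hV
  rw [rho, Fin.prod_univ_succAbove _ i]
  simp only [Fin.insertNth_apply_same, Fin.insertNth_apply_succAbove]
  rw [Real.norm_eq_abs, abs_mul, abs_mul, abs_mul, abs_mul, abs_of_nonneg hq, abs_of_nonneg hV0,
    abs_of_pos ht, abs_of_nonneg (mul_nonneg (Real.rpow_nonneg ht.le _) (Real.exp_pos _).le)]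
  have ht' : t ^ α = t * t ^ (α - 1) := by
    rw [Real.rpow_sub_one ht.ne']; field_simp
  have hte : 0 ≤ t ^ (α - 1) * Real.exp (-(c * t)) :=
    mul_nonneg (Real.rpow_nonneg ht.le _) (Real.exp_pos _).le
  calc t * |f (i.insertNth t y)| * (t ^ (α - 1) * Real.exp (-(c * t)) *
        (∏ j, (y j ^ (α - 1) * Real.exp (-(c * y j)))) * vd (m + 1) k δ (i.insertNth t y))
      ≤ t * (C * ((1 + t) * grow y) ^ N) * (t ^ (α - 1) * Real.exp (-(c * t)) *
        (∏ j, (y j ^ (α - 1) * Real.exp (-(c * y j)))) * ((1 + t) * grow y) ^ M) := by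
        have hb : 0 ≤ t * (C * ((1 + t) * grow y) ^ N) :=
          mul_nonneg ht.le ((abs_nonneg _).trans hF)
        exact mul_le_mul (mul_le_mul_of_nonneg_left hF ht.le)
          (mul_le_mul_of_nonneg_left hV (mul_nonneg hte hq))
          (mul_nonneg (mul_nonneg hte hq) hV0) hb
    _ = K * ((1 + t) ^ (N + M) * (t ^ α * Real.exp (-(c * t)))) := by
        rw [ht']; simp only [K, mul_pow, pow_add]; ring

open Filter Topology in
/-- Integration by parts against the regularised density. -/
lemma ibp_reg {m : ℕ} {k α c δ : ℝ} (hk : 0 < k) (hα : 0 < α) (hc : 0 < c) (h0 : 0 < δ)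
    (h1 : δ ≤ 1) (i : Fin (m + 1)) {f f' : (Fin (m + 1) → ℝ) → ℝ} (hf : PB f) (hf' : PB f')
    (hd : ∀ y ∈ Rplus m, ∀ t, 0 < t →
      HasDerivAt (fun t => f (i.insertNth t y)) (f' (i.insertNth t y)) t) :
    ∫ x in Rplus (m + 1), (α * f x + x i * f' x - c * (x i * f x) +
      ∑ j, 2 * k * drift δ i j x * (x i * f x)) * rho (m + 1) k α c δ x = 0 := by
  have hb := fun N => tendsto_boundary hα hc N
  have hPB : PB fun x : Fin (m + 1) → ℝ => α * f x + x i * f' x - c * (x i * f x) +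
      ∑ j, 2 * k * drift δ i j x * (x i * f x) := by
    have hi := PB.coord i
    refine ((((PB.const α).mul hf).add (hi.mul hf')).sub ((PB.const c).mul (hi.mul hf))).add
      (PB.sum _ fun j _ => ((PB.const (2 * k)).mul (PB.drift h0 i j)).mul (hi.mul hf))
  have h := integral_partial i (G := fun x => x i * f x * rho (m + 1) k α c δ x)
    (b := fun _ => 0) (hPB.integrable hk hα hc h0.le h1) ?_ ?_ ?_
  · simpa using h
  · intro y hy t ht
    simp only [Fin.insertNth_apply_same]
    have h := (((hasDerivAt_id t).mul (hd y hy t ht)).mul (hasDerivAt_rho h0 i ht y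
      (k := k) (α := α) (c := c)))
    refine h.congr_deriv ?_
    simp only [id_eq, ← Finset.sum_mul, Pi.mul_apply]
    field_simp
    ring
  · intro y hy
    simp only [Fin.insertNth_apply_same]
    exact boundary_zero hk h0.le h1 i hf hy (fun N => (hb N).1) self_mem_nhdsWithin
  · intro y hy
    simp only [Fin.insertNth_apply_same]
    exact boundary_zero hk h0.le h1 i hf hy (fun N => (hb N).2) (eventually_gt_atTop 0)

open Filter Topology in
lemma tendsto_rho {n : ℕ} {k α c : ℝ} (hk : 0 < k) (x : Fin n → ℝ) :
    Tendsto (fun d : ℕ => rho n k α c (1 / ((d : ℝ) + 1)) x) atTop (𝓝 (rho n k α c 0 x)) := by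
  have hδ := tendsto_one_div_add_atTop_nhds_zero_nat (𝕜 := ℝ)
  have : Continuous fun δ => rho n k α c δ x := by
    unfold rho vd
    refine continuous_const.mul (continuous_finsetProd _ fun i _ =>
      continuous_finsetProd _ fun j _ => ?_)
    exact Continuous.rpow_const (by fun_prop) fun x => Or.inr (by positivity)
  exact (this.tendsto 0).comp hδ

open Filter Topology in
/-- Passage to the limit `δ → 0` under the orthant integral. -/
lemma tendsto_integral_rho {n : ℕ} {k α c : ℝ} (hk : 0 < k) (hα : 0 < α) (hc : 0 < c)
    {H : (Fin n → ℝ) → ℝ} (hH : PB H) {F : ℕ → (Fin n → ℝ) → ℝ} {F₀ : (Fin n → ℝ) → ℝ}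
    (hm : ∀ d, Measurable (F d)) (hb : ∀ d, ∀ x ∈ Rplus n, |F d x| ≤ |H x|)
    (hlim : ∀ x ∈ Rplus n, Tendsto
      (fun d : ℕ => F d x * rho n k α c (1 / ((d : ℝ) + 1)) x) atTop
        (𝓝 (F₀ x * rho n k α c 0 x))) :
    Tendsto (fun d : ℕ => ∫ x in Rplus n, F d x * rho n k α c (1 / ((d : ℝ) + 1)) x) atTop
      (𝓝 (∫ x in Rplus n, F₀ x * rho n k α c 0 x)) := by
  obtain ⟨D, hD, hD'⟩ := exists_dom hk hα hc hH
  refine tendsto_integral_of_dominated_convergence D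
    (fun d => ((hm d).mul rho_meas).aestronglyMeasurable) hD (fun d => ?_) ?_
  · filter_upwards [ae_restrict_mem (measurableSet_Rplus n)] with x hx
    have h0 : (0 : ℝ) ≤ 1 / ((d : ℝ) + 1) := by positivity
    have h1 : 1 / ((d : ℝ) + 1) ≤ 1 := by
      rw [div_le_one (by positivity)]; linarith [Nat.cast_nonneg (α := ℝ) d]
    refine le_trans ?_ (hD' _ h0 h1 x hx)
    rw [Real.norm_eq_abs, abs_mul, abs_mul]
    exact mul_le_mul_of_nonneg_right (hb d x hx) (abs_nonneg _)
  · filter_upwards [ae_restrict_mem (measurableSet_Rplus n)] with x hx using hlim x hx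

lemma rho_zero_of_eq {n : ℕ} {k α c : ℝ} (hk : 0 < k) {i j : Fin n} (hij : i ≠ j)
    {x : Fin n → ℝ} (h : x i = x j) : rho n k α c 0 x = 0 := by
  have : vd n k 0 x = 0 := by
    refine Finset.prod_eq_zero (mem_univ i) (Finset.prod_eq_zero (i := j) (by simpa using hij.symm) ?_)
    rw [h]; simp [hk.ne']
  rw [rho, this, mul_zero]

/-- Symmetrising `i ↔ j` turns the singular drift into a divided difference. -/
lemma integral_drift {n : ℕ} {k α c δ : ℝ} (hk : 0 < k) (hα : 0 < α) (hc : 0 < c) (h0 : 0 < δ)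
    (h1 : δ ≤ 1) (i j : Fin n) {g q : (Fin n → ℝ) → ℝ} (hg : PB g)
    (hgs : PB fun x => g (fun l => x (Equiv.swap i j l)))
    (hq : ∀ x, g x - g (fun l => x (Equiv.swap i j l)) = (x i - x j) * q x) :
    ∫ x in Rplus n, (2 * k * drift δ i j x * g x) * rho n k α c δ x =
      k * ∫ x in Rplus n, (q x * ((x i - x j) ^ 2 / ((x i - x j) ^ 2 + δ))) *
        rho n k α c δ x := by
  have hI : ∀ {F : (Fin n → ℝ) → ℝ}, PB F →
      IntegrableOn (fun x => F x * rho n k α c δ x) (Rplus n) :=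
    fun hF => hF.integrable hk hα hc h0.le h1
  have hdr := PB.drift h0 i j
  have e := setIntegral_perm (Equiv.swap i j) (fun x => drift δ i j x * g x * rho n k α c δ x)
  simp only [rho_perm] at e
  have e1 : ∀ x : Fin n → ℝ, drift δ i j (fun l => x (Equiv.swap i j l)) = - drift δ i j x :=
    fun x => by simp only [drift, Equiv.swap_apply_left, Equiv.swap_apply_right]; ring_nf
  simp only [e1] at e
  have e2 : ∫ x in Rplus n, (2 * k * drift δ i j x * g x) * rho n k α c δ x =
      k * ((∫ x in Rplus n, drift δ i j x * g x * rho n k α c δ x) +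
        ∫ x in Rplus n, drift δ i j x * g x * rho n k α c δ x) := by
    rw [← two_mul, ← mul_assoc, ← integral_const_mul]
    exact integral_congr_ae (Filter.Eventually.of_forall fun x => by ring)
  rw [e2]
  -- The drift is antisymmetric under `i ↔ j`, so averaging over the exchange leaves `g - g ∘ (i j)`.
  nth_rewrite 2 [← e]
  rw [← integral_add (hI (hdr.mul hg)) (hI (hdr.neg.mul hgs))]
  congr 1
  refine integral_congr_ae (Filter.Eventually.of_forall fun x => ?_)
  have := hq x
  simp only [drift]
  linear_combination ((x i - x j) / ((x i - x j) ^ 2 + δ) * rho n k α c δ x) * this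

open Filter Topology in
/-- The recursion satisfied by the Laguerre-type functional: in the `i`-th variable, the Euler
operator, the divided differences `q_j = (x_i f - (x_i f)∘(i j))/(x_i - x_j)` and multiplication
by `x_i` are tied together by integration by parts. -/
lemma recursion {n : ℕ} {k α c : ℝ} (hk : 0 < k) (hα : 0 < α) (hc : 0 < c)
    (i : Fin n) {f f' : (Fin n → ℝ) → ℝ} {q : Fin n → (Fin n → ℝ) → ℝ}
    (hf : PB f) (hf' : PB f') (hq : ∀ j, PB (q j))
    (hfs : ∀ j, PB fun x => f (fun l => x (Equiv.swap i j l)))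
    (hd : ∀ x, HasDerivAt (fun t => f (Function.update x i t)) (f' x) (x i))
    (hqe : ∀ j, j ≠ i → ∀ x,
      x i * f x - x j * f (fun l => x (Equiv.swap i j l)) = (x i - x j) * q j x) :
    c * ∫ x in Rplus n, x i * f x * rho n k α c 0 x =
      ∫ x in Rplus n, (α * f x + x i * f' x + k * ∑ j ∈ {i}ᶜ, q j x) * rho n k α c 0 x := by
  obtain ⟨m, rfl⟩ : ∃ m, n = m + 1 := ⟨n - 1, by have := i.pos; omega⟩
  have hd' : ∀ y ∈ Rplus m, ∀ t, 0 < t →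
      HasDerivAt (fun t => f (i.insertNth t y)) (f' (i.insertNth t y)) t := fun y _ t _ => by
    have := hd (i.insertNth t y)
    simpa using this
  have hi := PB.coord i
  have hg : PB fun x => x i * f x := hi.mul hf
  have hgs : ∀ j, PB fun x : Fin (m + 1) → ℝ => x (Equiv.swap i j i) *
      f (fun l => x (Equiv.swap i j l)) := fun j => (PB.coord _).mul (hfs j)
  have h01 : ∀ d : ℕ, (0 : ℝ) < 1 / ((d : ℝ) + 1) ∧ 1 / ((d : ℝ) + 1) ≤ 1 := fun d => by
    refine ⟨by positivity, ?_⟩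
    rw [div_le_one (by positivity)]; linarith [Nat.cast_nonneg (α := ℝ) d]
  have hA : PB fun x => α * f x + x i * f' x - c * (x i * f x) :=
    (((PB.const α).mul hf).add (hi.mul hf')).sub ((PB.const c).mul hg)
  -- the regularised identity, symmetrised
  have hreg : ∀ d : ℕ, (∫ x in Rplus (m + 1), (α * f x + x i * f' x - c * (x i * f x)) *
      rho (m + 1) k α c (1 / ((d : ℝ) + 1)) x) + ∑ j ∈ {i}ᶜ, k * ∫ x in Rplus (m + 1),
        (q j x * ((x i - x j) ^ 2 / ((x i - x j) ^ 2 + 1 / ((d : ℝ) + 1)))) *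
          rho (m + 1) k α c (1 / ((d : ℝ) + 1)) x = 0 := fun d => by
    obtain ⟨h0, h1⟩ := h01 d
    have hI : ∀ {F : (Fin (m + 1) → ℝ) → ℝ}, PB F → IntegrableOn (fun x => F x *
        rho (m + 1) k α c (1 / ((d : ℝ) + 1)) x) (Rplus (m + 1)) :=
      fun hF => hF.integrable hk hα hc h0.le h1
    have hB : ∀ j, PB fun x => 2 * k * drift (1 / ((d : ℝ) + 1)) i j x * (x i * f x) :=
      fun j => ((PB.const (2 * k)).mul (PB.drift h0 i j)).mul hg
    rw [← ibp_reg hk hα hc h0 h1 i hf hf' hd']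
    simp_rw [add_mul (α * f _ + _ - _), Finset.sum_mul]
    rw [integral_add (hI hA) (integrable_finsetSum _ fun j _ => hI (hB j)),
      integral_finsetSum _ fun j _ => hI (hB j)]
    congr 1
    rw [← Finset.sum_subset (Finset.subset_univ ({i}ᶜ : Finset (Fin (m + 1))))]
    · refine Finset.sum_congr rfl fun j hj => (integral_drift hk hα hc h0 h1 i j hg (hgs j) ?_).symm
      intro x
      rw [← hqe j (by simpa using hj) x]
      simp
    · intro j _ hj
      obtain rfl : j = i := by simpa using hj
      simp [drift]
  have hlim : Tendsto (fun d : ℕ => (∫ x in Rplus (m + 1), (α * f x + x i * f' x -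
      c * (x i * f x)) * rho (m + 1) k α c (1 / ((d : ℝ) + 1)) x) + ∑ j ∈ {i}ᶜ,
        k * ∫ x in Rplus (m + 1),
        (q j x * ((x i - x j) ^ 2 / ((x i - x j) ^ 2 + 1 / ((d : ℝ) + 1)))) *
          rho (m + 1) k α c (1 / ((d : ℝ) + 1)) x) atTop
      (𝓝 ((∫ x in Rplus (m + 1), (α * f x + x i * f' x - c * (x i * f x)) *
        rho (m + 1) k α c 0 x) + ∑ j ∈ {i}ᶜ, k * ∫ x in Rplus (m + 1), q j x *
          rho (m + 1) k α c 0 x)) := by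
    refine (tendsto_integral_rho hk hα hc hA (fun _ => hA.meas) (fun _ _ _ => le_rfl)
      fun x _ => (tendsto_rho hk x).const_mul _).add (tendsto_finsetSum _ fun j hj =>
      (tendsto_integral_rho hk hα hc (hq j) (fun d => ?_) (fun d x _ => ?_)
        fun x _ => ?_).const_mul k)
    · have := (hq j).meas
      fun_prop
    · have h0 := (h01 d).1
      rw [abs_mul]
      refine mul_le_of_le_one_right (abs_nonneg _) ?_
      rw [abs_of_nonneg (by positivity)]
      exact div_le_one_of_le₀ (by linarith) (by positivity)
    -- Where `x_i = x_j` the damping factor does not tend to `1`, but the limit density vanishes.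
    · by_cases hx : x i = x j
      · have hz : (x i - x j) ^ 2 = 0 := by rw [hx]; ring
        have hij : i ≠ j := by simp at hj; exact fun h => hj h.symm
        simp [hz, rho_zero_of_eq hk hij hx]
      · refine Tendsto.mul ?_ (tendsto_rho hk x)
        have hpos : (x i - x j) ^ 2 ≠ 0 := pow_ne_zero 2 (sub_ne_zero.2 hx)
        have h := tendsto_one_div_add_atTop_nhds_zero_nat (𝕜 := ℝ)
        have := ((tendsto_const_nhds (x := (x i - x j) ^ 2)).div
          (h.const_add ((x i - x j) ^ 2)) (by simpa using hpos)).const_mul (q j x)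
        simpa [hpos] using this
  have h0 := tendsto_nhds_unique hlim (by simp only [hreg]; exact tendsto_const_nhds)
  have hI : ∀ {F : (Fin (m + 1) → ℝ) → ℝ}, PB F → IntegrableOn (fun x => F x *
      rho (m + 1) k α c 0 x) (Rplus (m + 1)) :=
    fun hF => hF.integrable hk hα hc le_rfl zero_le_one
  have hA' : PB fun x => α * f x + x i * f' x := ((PB.const α).mul hf).add (hi.mul hf')
  simp_rw [sub_mul (α * f _ + _), mul_assoc c] at h0
  simp_rw [add_mul (α * f _ + _), Finset.mul_sum, Finset.sum_mul, mul_assoc k]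
  rw [integral_sub (hI hA') ((hI hg).const_mul c), integral_const_mul] at h0
  rw [integral_add (hI hA') (integrable_finsetSum _ fun j _ => (hI (hq j)).const_mul k),
    integral_finsetSum _ fun j _ => (hI (hq j)).const_mul k]
  simp_rw [integral_const_mul]
  linarith

/-! ### The Laguerre–Selberg integral -/

/-- The Laguerre–Selberg integral `∫ D(x)^{α-1} e^{-(x₁+⋯+x_n)} ω_k(x) dx` over the orthant. -/
noncomputable def selberg (n : ℕ) (k α : ℝ) : ℝ := ∫ x in Rplus n, rho n k α 1 0 x

lemma integrable_rho {n : ℕ} {k α c : ℝ} (hk : 0 < k) (hα : 0 < α) (hc : 0 < c) :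
    IntegrableOn (rho n k α c 0) (Rplus n) := by
  simpa using (PB.const (n := n) 1).integrable hk hα hc le_rfl zero_le_one

lemma PB.prod {n : ℕ} {ι : Type*} (s : Finset ι) {F : ι → (Fin n → ℝ) → ℝ}
    (hF : ∀ i ∈ s, PB (F i)) : PB (fun x => ∏ i ∈ s, F i x) := by
  classical
  induction s using Finset.induction_on with
  | empty => simpa using PB.const 1
  | insert a s ha ih =>
    simp_rw [Finset.prod_insert ha]
    exact (hF a (by simp)).mul (ih fun i hi => hF i (by simp [hi]))

/-- One step of the Aomoto recursion: multiplying `x₁⋯x_s` by the next coordinate. -/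
lemma aomoto_step {n : ℕ} {k α : ℝ} (hk : 0 < k) (hα : 0 < α) {s : ℕ} (hs : s < n) :
    ∫ x in Rplus n, (∏ j : Fin n with j.val < s + 1, x j) * rho n k α 1 0 x =
      (α + k * ((n - 1 - s : ℕ) : ℝ)) *
        ∫ x in Rplus n, (∏ j : Fin n with j.val < s, x j) * rho n k α 1 0 x := by
  set i : Fin n := ⟨s, hs⟩
  set f : (Fin n → ℝ) → ℝ := fun x => ∏ j : Fin n with j.val < s, x j with hfdef
  have hf : PB f := PB.prod _ fun j _ => PB.coord j
  have hset : (univ.filter fun j : Fin n => j.val < s + 1) =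
      insert i (univ.filter fun j : Fin n => j.val < s) := by
    ext j
    simp only [mem_filter, mem_univ, true_and, mem_insert, i, Fin.ext_iff]
    omega
  have hi : i ∉ (univ.filter fun j : Fin n => j.val < s) := by simp [i]
  have h := recursion (c := 1) hk hα one_pos i (f := f) (f' := fun _ => 0)
    (q := fun j x => if j.val < s then 0 else f x) hf (PB.const 0) (fun j => by
      split_ifs
      · exact PB.const 0
      · exact hf) (fun j => PB.prod _ fun l _ => PB.coord _) (fun x => by
      have : ∀ t, f (Function.update x i t) = f x := fun t =>
        Finset.prod_congr rfl fun j hj =>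
          Function.update_of_ne (fun e => hi (by rw [← e]; exact hj)) _ _
      simp_rw [this]
      exact hasDerivAt_const _ _) (fun j hj x => by
      by_cases hjs : j.val < s
      · have hjm : j ∈ (univ.filter fun j : Fin n => j.val < s) := by simpa using hjs
        simp only [hjs, if_true, mul_zero, f]
        rw [← Finset.mul_prod_erase _ _ hjm, ← Finset.mul_prod_erase _ _ hjm,
          Equiv.swap_apply_right]
        have : ∏ l ∈ (univ.filter fun j : Fin n => j.val < s).erase j, x (Equiv.swap i j l) =
            ∏ l ∈ (univ.filter fun j : Fin n => j.val < s).erase j, x l :=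
          Finset.prod_congr rfl fun l hl => by
            rw [Finset.mem_erase] at hl
            have hli : l ≠ i := fun e => hi (by rw [← e]; exact hl.2)
            rw [Equiv.swap_apply_of_ne_of_ne hli hl.1]
        rw [this]; ring
      · simp only [hjs, if_false]
        have : f (fun l => x (Equiv.swap i j l)) = f x := Finset.prod_congr rfl fun l hl => by
          have hl' : l.val < s := by simpa using hl
          have hli : l ≠ i := fun e => hi (by rw [← e]; exact hl)
          have hlj : l ≠ j := fun e => hjs (by rw [← e]; exact hl')
          simp only [Equiv.swap_apply_of_ne_of_ne hli hlj]
        rw [this]; ring)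
  have hcard : ∀ x, ∑ j ∈ ({i}ᶜ : Finset (Fin n)), (if j.val < s then 0 else f x) =
      ((n - 1 - s : ℕ) : ℝ) * f x := fun x => by
    rw [Finset.sum_ite, Finset.sum_const_zero, zero_add]
    have : (filter (fun j : Fin n => ¬ j.val < s) {i}ᶜ) = Finset.Ioi i := by
      ext j
      simp only [mem_filter, mem_compl, mem_singleton, mem_Ioi, i, Fin.ext_iff, Fin.lt_def]
      omega
    rw [this, Finset.sum_const, Fin.card_Ioi]
    simp [i]
  simp only [hcard, mul_zero, add_zero, one_mul] at h
  simp_rw [hset, Finset.prod_insert hi]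
  rw [h, ← integral_const_mul]
  refine integral_congr_ae (Filter.Eventually.of_forall fun x => ?_)
  simp only [f]
  ring

/-- The quotient of consecutive values, obtained by telescoping the Aomoto recursion. -/
lemma selberg_add_one {n : ℕ} {k α : ℝ} (hk : 0 < k) (hα : 0 < α) :
    selberg n k (α + 1) = (∏ j ∈ range n, (α + k * j)) * selberg n k α := by
  have key : ∀ s, s ≤ n → ∫ x in Rplus n, (∏ j : Fin n with j.val < s, x j) *
      rho n k α 1 0 x = (∏ t ∈ range s, (α + k * ((n - 1 - t : ℕ) : ℝ))) * selberg n k α := by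
    intro s
    induction s with
    | zero => intro _; simp [selberg]
    | succ s ih =>
      intro hs
      rw [aomoto_step hk hα hs, ih (by omega), Finset.prod_range_succ]
      ring
  have h := key n le_rfl
  rw [Finset.prod_range_reflect (fun t => α + k * (t : ℝ)) n] at h
  rw [← h, selberg]
  refine setIntegral_congr_fun (measurableSet_Rplus n) fun x hx => ?_
  simp only [rho, add_sub_cancel_right, Fin.is_lt, filter_true, ← mul_assoc,
    ← Finset.prod_mul_distrib]
  congr 1
  refine Finset.prod_congr rfl fun i _ => ?_
  rw [Real.rpow_sub_one (hx i).ne']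
  field_simp [(hx i).ne']

lemma selberg_pos {n : ℕ} {k α : ℝ} (hk : 0 < k) (hα : 0 < α) : 0 < selberg n k α := by
  rw [selberg, setIntegral_pos_iff_support_of_nonneg_ae _ (integrable_rho hk hα one_pos)]
  · have hopen : IsOpen (Rplus n ∩ {x | 0 < vd n k 0 x}) := by
      refine IsOpen.inter ?_ (isOpen_lt continuous_const (continuous_vd hk))
      rw [Rplus_eq]
      exact isOpen_set_pi Set.finite_univ fun _ _ => isOpen_Ioi
    have hne : (Rplus n ∩ {x | 0 < vd n k 0 x}).Nonempty := by
      refine ⟨fun i => (i : ℝ) + 1, fun i => by positivity, ?_⟩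
      refine Finset.prod_pos fun i _ => Finset.prod_pos fun j hj => Real.rpow_pos_of_pos ?_ _
      have : (i : ℝ) - j ≠ 0 := sub_ne_zero.2 fun h => by
        simp only [mem_compl, mem_singleton] at hj
        exact hj (Fin.ext (by exact_mod_cast h.symm))
      have := pow_pos (abs_pos.2 this) 2
      simpa [sq_abs] using this
    refine lt_of_lt_of_le (hopen.measure_pos volume hne) (measure_mono fun x hx => ⟨?_, hx.1⟩)
    have : 0 < rho n k α 1 0 x := mul_pos (Finset.prod_pos fun i _ =>
      mul_pos (Real.rpow_pos_of_pos (hx.1 i) _) (Real.exp_pos _)) hx.2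
    exact this.ne'
  · filter_upwards [ae_restrict_mem (measurableSet_Rplus n)] with x hx
    exact rho_nonneg le_rfl hx

/-- Hölder's inequality: the Selberg integral is logarithmically convex in `α`. -/
lemma selberg_convex {n : ℕ} {k : ℝ} (hk : 0 < k) :
    ConvexOn ℝ (Set.Ioi 0) fun α => Real.log (selberg n k α) := by
  refine convexOn_iff_forall_pos.2 ⟨convex_Ioi 0, fun α hα β hβ a b ha hb hab => ?_⟩
  have hα : 0 < α := hα
  have hβ : 0 < β := hβ
  have hpq : (1 / a).HolderConjugate (1 / b) := Real.holderConjugate_one_div ha hb hab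
  simp only [smul_eq_mul]
  rw [← Real.log_rpow (selberg_pos hk hα), ← Real.log_rpow (selberg_pos hk hβ),
    ← Real.log_mul (Real.rpow_pos_of_pos (selberg_pos hk hα) _).ne'
      (Real.rpow_pos_of_pos (selberg_pos hk hβ) _).ne']
  refine Real.log_le_log (selberg_pos hk (by positivity)) ?_
  have hmem : ∀ {γ e : ℝ}, 0 < γ → 0 < e →
      MemLp (fun x => rho n k γ 1 0 x ^ e) (ENNReal.ofReal (1 / e))
        (volume.restrict (Rplus n)) := by
    intro γ e hγ he
    have A : ENNReal.ofReal (1 / e) ≠ 0 := by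
      rwa [Ne, ENNReal.ofReal_eq_zero, not_le, one_div_pos]
    rw [← memLp_norm_rpow_iff _ A ENNReal.ofReal_ne_top, ENNReal.toReal_ofReal (by positivity),
      ENNReal.div_self A ENNReal.ofReal_ne_top, memLp_one_iff_integrable]
    · refine (integrable_rho hk hγ one_pos).congr ?_
      filter_upwards [ae_restrict_mem (measurableSet_Rplus n)] with x hx
      have h0 := rho_nonneg (k := k) (α := γ) (c := 1) le_rfl hx
      rw [Real.norm_of_nonneg (Real.rpow_nonneg h0 _), ← Real.rpow_mul h0,
        mul_one_div_cancel he.ne', Real.rpow_one]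
    · exact (rho_meas.pow_const e).aestronglyMeasurable
  have hnn : ∀ {γ e : ℝ}, 0 ≤ᵐ[volume.restrict (Rplus n)] fun x => rho n k γ 1 0 x ^ e := by
    intro γ e
    filter_upwards [ae_restrict_mem (measurableSet_Rplus n)] with x hx
    exact Real.rpow_nonneg (rho_nonneg le_rfl hx) _
  have h := integral_mul_le_Lp_mul_Lq_of_nonneg hpq (hnn (γ := α) (e := a))
    (hnn (γ := β) (e := b)) (hmem hα ha) (hmem hβ hb)
  have e1 : ∀ {γ e : ℝ}, 0 < e → ∫ x in Rplus n, (rho n k γ 1 0 x ^ e) ^ (1 / e) =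
      selberg n k γ := fun {γ e} he =>
    setIntegral_congr_fun (measurableSet_Rplus n) fun x hx => by
      rw [← Real.rpow_mul (rho_nonneg le_rfl hx), mul_one_div_cancel he.ne', Real.rpow_one]
  rw [e1 ha, e1 hb, one_div_one_div, one_div_one_div] at h
  refine le_trans (le_of_eq ?_) h
  refine setIntegral_congr_fun (measurableSet_Rplus n) fun x hx => ?_
  have hp : ∀ γ : ℝ, 0 ≤ ∏ i, (x i ^ (γ - 1) * Real.exp (-(1 * x i))) := fun γ =>
    Finset.prod_nonneg fun i _ => mul_nonneg (Real.rpow_nonneg (hx i).le _) (Real.exp_pos _).le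
  have hv := vd_nonneg (k := k) le_rfl x
  have hv' : vd n k 0 x = vd n k 0 x ^ a * vd n k 0 x ^ b := by
    rw [← Real.rpow_add_of_nonneg hv ha.le hb.le, hab, Real.rpow_one]
  rw [rho, rho, rho, Real.mul_rpow (hp α) hv, Real.mul_rpow (hp β) hv, mul_mul_mul_comm, ← hv']
  congr 1
  rw [← Real.finsetProd_rpow _ _ fun i _ =>
      mul_nonneg (Real.rpow_nonneg (hx i).le _) (Real.exp_pos _).le,
    ← Real.finsetProd_rpow _ _ fun i _ =>
      mul_nonneg (Real.rpow_nonneg (hx i).le _) (Real.exp_pos _).le, ← Finset.prod_mul_distrib]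
  refine Finset.prod_congr rfl fun i _ => ?_
  have hxi := hx i
  rw [Real.mul_rpow (Real.rpow_nonneg hxi.le _) (Real.exp_pos _).le,
    Real.mul_rpow (Real.rpow_nonneg hxi.le _) (Real.exp_pos _).le, mul_mul_mul_comm,
    ← Real.rpow_mul hxi.le, ← Real.rpow_mul hxi.le, ← Real.rpow_add hxi, ← Real.exp_mul,
    ← Real.exp_mul, ← Real.exp_add]
  obtain rfl : b = 1 - a := by linarith
  congr 2 <;> ring

open Filter Topology in
/-- A Bohr–Mollerup type uniqueness statement: convex functions with the same unit increments,
these increments having asymptotically vanishing differences, differ by a constant. -/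
lemma bohr_mollerup {f g s : ℝ → ℝ} (hf : ConvexOn ℝ (Set.Ioi 0) f)
    (hg : ConvexOn ℝ (Set.Ioi 0) g) (hfs : ∀ x, 0 < x → f (x + 1) = f x + s x)
    (hgs : ∀ x, 0 < x → g (x + 1) = g x + s x)
    (hs : Tendsto (fun x => s (x + 1) - s x) atTop (𝓝 0)) (x y : ℝ) (hx : 0 < x) (hy : 0 < y) :
    f x - g x = f y - g y := by
  have hper : ∀ (N : ℕ) x, 0 < x → f (x + N) - g (x + N) = f x - g x := by
    intro N
    induction N with
    | zero => intro x _; simp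
    | succ N ih =>
      intro x hx
      have h0 : 0 < x + N := by positivity
      rw [← ih x hx, Nat.cast_succ, ← add_assoc, hfs _ h0, hgs _ h0]; ring
  -- Convexity bounds the increment of `h` from `z + 1` to `z + 1 + t` between `t s(z)` and
  -- `t s(z + 1)`, so two such functions have asymptotically the same increments.
  have up : ∀ {h : ℝ → ℝ}, ConvexOn ℝ (Set.Ioi 0) h → (∀ x, 0 < x → h (x + 1) = h x + s x) →
      ∀ z, 0 < z → ∀ t, 0 ≤ t → t ≤ 1 → h (z + 1 + t) ≤ h (z + 1) + t * s (z + 1) := by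
    intro h hc hh z hz t h0 h1
    have := hc.2 (show z + 1 ∈ Set.Ioi (0 : ℝ) by simp; linarith)
      (show z + 1 + 1 ∈ Set.Ioi (0 : ℝ) by simp; linarith) (sub_nonneg.2 h1) h0 (by ring)
    simp only [smul_eq_mul, hh (z + 1) (by linarith)] at this
    rw [show (1 - t) * (z + 1) + t * (z + 1 + 1) = z + 1 + t by ring] at this
    linarith
  have lo : ∀ {h : ℝ → ℝ}, ConvexOn ℝ (Set.Ioi 0) h → (∀ x, 0 < x → h (x + 1) = h x + s x) →
      ∀ z, 0 < z → ∀ t, 0 ≤ t → t ≤ 1 → h (z + 1) + t * s z ≤ h (z + 1 + t) := by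
    intro h hc hh z hz t h0 h1
    have ht : 0 < 1 + t := by linarith
    have := hc.2 (show z ∈ Set.Ioi (0 : ℝ) from hz)
      (show z + 1 + t ∈ Set.Ioi (0 : ℝ) by simp; linarith)
      (show 0 ≤ t / (1 + t) by positivity) (show 0 ≤ 1 / (1 + t) by positivity)
      (by field_simp; ring)
    simp only [smul_eq_mul] at this
    rw [show t / (1 + t) * z + 1 / (1 + t) * (z + 1 + t) = z + 1 by field_simp; ring] at this
    have h2 := mul_le_mul_of_nonneg_left this ht.le
    rw [show (1 + t) * (t / (1 + t) * h z + 1 / (1 + t) * h (z + 1 + t)) =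
      t * h z + h (z + 1 + t) by field_simp] at h2
    have := hh z hz
    nlinarith
  have main : ∀ x, 0 < x → ∀ t, 0 ≤ t → t ≤ 1 → f (x + t) - g (x + t) = f x - g x := by
    intro x hx t h0 h1
    have hb : ∀ N : ℕ, |(f (x + t) - g (x + t)) - (f x - g x)| ≤
        s ((x + N) + 1) - s (x + N) := fun N => by
      have hz : 0 < x + N := by positivity
      rw [← hper (N + 1) (x + t) (by linarith), ← hper (N + 1) x hx]
      push_cast
      rw [show x + t + (N + 1 : ℝ) = x + N + 1 + t by ring,
        show x + (N + 1 : ℝ) = x + N + 1 by ring]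
      have h1' := up hf hfs _ hz t h0 h1
      have h2' := up hg hgs _ hz t h0 h1
      have h3' := lo hf hfs _ hz t h0 h1
      have h4' := lo hg hgs _ hz t h0 h1
      have h5 := lo hf hfs _ hz 1 zero_le_one le_rfl
      have h6 := up hf hfs _ hz 1 zero_le_one le_rfl
      have h7 : t * (s (x + N + 1) - s (x + N)) ≤ s (x + N + 1) - s (x + N) :=
        mul_le_of_le_one_left (by linarith) h1
      rw [abs_le]
      constructor <;> nlinarith
    have hlim : Tendsto (fun N : ℕ => s ((x + N) + 1) - s (x + N)) atTop (𝓝 0) :=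
      hs.comp (tendsto_atTop_add_const_left _ x tendsto_natCast_atTop_atTop)
    have := ge_of_tendsto' hlim hb
    exact sub_eq_zero.1 (abs_nonpos_iff.1 this)
  have main' : ∀ x y, 0 < x → x ≤ y → f y - g y = f x - g x := by
    intro x y hx hxy
    have hfl := Nat.floor_le (sub_nonneg.2 hxy)
    have hfl' := Nat.lt_floor_add_one (y - x)
    have h0 : 0 < x + ⌊y - x⌋₊ := by positivity
    rw [← hper ⌊y - x⌋₊ x hx, ← main _ h0 (y - x - ⌊y - x⌋₊) (by linarith) (by linarith)]
    congr 2 <;> ring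
  rcases le_total x y with h | h
  · exact (main' x y hx h).symm
  · exact main' y x hy h

open Filter Topology in
/-- The Laguerre–Selberg integral up to a constant independent of `α`: both sides are
logarithmically convex with the same unit increments. -/
lemma selberg_eq_const_mul {n : ℕ} {k : ℝ} (hk : 0 < k) : ∃ C : ℝ, 0 < C ∧ ∀ α, 0 < α →
    selberg n k α = C * ∏ j ∈ range n, Real.Gamma (α + k * j) := by
  have hG : ∀ α, 0 < α → 0 < ∏ j ∈ range n, Real.Gamma (α + k * j) := fun α hα =>
    Finset.prod_pos fun j _ => Real.Gamma_pos_of_pos (by positivity)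
  have hlogG : ∀ α, 0 < α → Real.log (∏ j ∈ range n, Real.Gamma (α + k * j)) =
      ∑ j ∈ range n, Real.log (Real.Gamma (α + k * j)) := fun α hα =>
    Real.log_prod fun j _ => (Real.Gamma_pos_of_pos (by positivity)).ne'
  have hs := bohr_mollerup (selberg_convex (n := n) hk)
    (g := fun α => ∑ j ∈ range n, Real.log (Real.Gamma (α + k * j)))
    (s := fun α => ∑ j ∈ range n, Real.log (α + k * j)) ?_ ?_ ?_ ?_
  · refine ⟨selberg n k 1 / ∏ j ∈ range n, Real.Gamma (1 + k * j),
      div_pos (selberg_pos hk one_pos) (hG 1 one_pos), fun α hα => ?_⟩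
    have h := hs α 1 hα one_pos
    rw [← hlogG α hα, ← hlogG 1 one_pos,
      ← Real.log_div (selberg_pos hk hα).ne' (hG α hα).ne',
      ← Real.log_div (selberg_pos hk one_pos).ne' (hG 1 one_pos).ne'] at h
    have h' := Real.log_injOn_pos (div_pos (selberg_pos hk hα) (hG α hα))
      (div_pos (selberg_pos hk one_pos) (hG 1 one_pos)) h
    rw [← h', div_mul_cancel₀ _ (hG α hα).ne']
  · have : ∀ j : ℕ, ConvexOn ℝ (Set.Ioi 0) fun α => Real.log (Real.Gamma (α + k * j)) := fun j => by
      have h := (Real.convexOn_log_Gamma.translate_left (k * j))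
      refine h.subset (fun α hα => ?_) (convex_Ioi 0)
      simp only [Set.mem_preimage, Set.mem_Ioi] at hα ⊢
      positivity
    have h : ∀ N : ℕ, ConvexOn ℝ (Set.Ioi 0)
        fun α => ∑ j ∈ range N, Real.log (Real.Gamma (α + k * j)) := fun N => by
      induction N with
      | zero => simpa using convexOn_const (0 : ℝ) (convex_Ioi (0 : ℝ))
      | succ N ih => simp_rw [Finset.sum_range_succ]; exact ih.add (this N)
    exact h n
  · intro α hα
    have hp : ∀ j : ℕ, 0 < α + k * j := fun j => by positivity
    rw [selberg_add_one hk hα, Real.log_mul (Finset.prod_pos fun j _ => hp j).ne'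
      (selberg_pos hk hα).ne', Real.log_prod fun j _ => (hp j).ne']
    ring
  · intro α hα
    have hp : ∀ j : ℕ, 0 < α + k * j := fun j => by positivity
    rw [← Finset.sum_add_distrib]
    refine Finset.sum_congr rfl fun j _ => ?_
    rw [show α + 1 + k * j = α + k * j + 1 by ring, Real.Gamma_add_one (hp j).ne',
      Real.log_mul (hp j).ne' (Real.Gamma_pos_of_pos (hp j)).ne']
    ring
  · simp_rw [← Finset.sum_sub_distrib]
    have : ∀ j : ℕ, Tendsto (fun x : ℝ => Real.log (x + 1 + k * j) - Real.log (x + k * j))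
        atTop (𝓝 0) := fun j => by
      have h1 : Tendsto (fun x : ℝ => x + k * j) atTop atTop :=
        tendsto_atTop_add_const_right _ _ tendsto_id
      have h2 : Tendsto (fun z : ℝ => Real.log (1 + z⁻¹)) atTop (𝓝 0) := by
        have h3 : Tendsto (fun z : ℝ => 1 + z⁻¹) atTop (𝓝 1) := by
          simpa using tendsto_inv_atTop_zero.const_add (1 : ℝ)
        simpa using h3.log one_ne_zero
      refine (h2.comp h1).congr' ?_
      filter_upwards [eventually_gt_atTop 0] with x hx
      have hp : 0 < x + k * j := by positivity
      simp only [Function.comp]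
      rw [← Real.log_div (by positivity) hp.ne']
      congr 1
      field_simp
      ring
    simpa using tendsto_finsetSum (range n) fun j _ => this j

open Filter Topology in
/-- Integrating `∂₀ ρ_δ` over the orthant and letting `δ → 0` identifies the face contribution:
the Selberg integral in `m+1` variables at `α = 1` is the one in `m` variables at `2k+1`. -/
lemma selberg_succ_one (m : ℕ) {k : ℝ} (hk : 0 < k) :
    selberg (m + 1) k 1 = selberg m k (2 * k + 1) := by
  have h01 : ∀ d : ℕ, (0 : ℝ) < 1 / ((d : ℝ) + 1) ∧ 1 / ((d : ℝ) + 1) ≤ 1 := fun d => by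
    refine ⟨by positivity, ?_⟩
    rw [div_le_one (by positivity)]; linarith [Nat.cast_nonneg (α := ℝ) d]
  have hreg : ∀ d : ℕ, ∫ x in Rplus (m + 1), 1 * rho (m + 1) k 1 1 (1 / ((d : ℝ) + 1)) x =
      ∫ y in Rplus m, (∏ j, (y j ^ 2 + 1 / ((d : ℝ) + 1)) ^ k) *
        rho m k 1 1 (1 / ((d : ℝ) + 1)) y := by
    -- At `α = 1` the density does not vanish on `x₀ = 0`, so `∫ ∂₀ ρ_δ` is minus the integral over
    -- that wall; the drift terms integrate to zero by antisymmetry.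
    intro d
    obtain ⟨h0, h1⟩ := h01 d
    set δ : ℝ := 1 / ((d : ℝ) + 1)
    have hI : ∀ {F : (Fin (m + 1) → ℝ) → ℝ}, PB F → IntegrableOn (fun x => F x *
        rho (m + 1) k 1 1 δ x) (Rplus (m + 1)) :=
      fun hF => hF.integrable hk one_pos one_pos h0.le h1
    have hdr : ∀ j : Fin (m + 1), PB fun x => 2 * k * drift δ 0 j x * 1 :=
      fun j => ((PB.const (2 * k)).mul (PB.drift h0 0 j)).mul (PB.const 1)
    have hPB : PB fun x : Fin (m + 1) → ℝ => (-1 : ℝ) + ∑ j, 2 * k * drift δ 0 j x * 1 :=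
      (PB.const _).add (PB.sum _ fun j _ => hdr j)
    have h := integral_partial 0 (G := rho (m + 1) k 1 1 δ)
      (b := fun y => (∏ j, (y j ^ 2 + δ) ^ k) * rho m k 1 1 δ y) (hI hPB) ?_ ?_ ?_
    · simp_rw [add_mul, Finset.sum_mul] at h
      rw [integral_add (hI (PB.const (-1))) (integrable_finsetSum _ fun j _ => hI (hdr j)),
        integral_finsetSum _ fun j _ => hI (hdr j)] at h
      have hz : ∀ j : Fin (m + 1), ∫ x in Rplus (m + 1), 2 * k * drift δ 0 j x * 1 *
          rho (m + 1) k 1 1 δ x = 0 := fun j => by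
        rw [integral_drift hk one_pos one_pos h0 h1 0 j (g := fun _ => 1) (q := fun _ => 0)
          (PB.const 1) (PB.const 1) (fun x => by simp)]
        simp
      rw [Finset.sum_eq_zero fun j _ => hz j, add_zero] at h
      simp_rw [neg_mul, integral_neg] at h
      exact neg_injective h
    · intro y _ t ht
      refine (hasDerivAt_rho h0 0 ht y).congr_deriv ?_
      simp only [mul_one]; ring
    · intro y hy
      have hc : Continuous fun t : ℝ => Real.exp (-(1 * t)) *
          (∏ j, ((t - y j) ^ 2 + δ) ^ k) * rho m k 1 1 δ y := by
        refine (Continuous.mul (by fun_prop) (continuous_finsetProd _ fun j _ => ?_)).mul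
          continuous_const
        exact Continuous.rpow_const (by fun_prop) fun x => Or.inr hk.le
      have h := (hc.tendsto 0).mono_left (nhdsWithin_le_nhds (s := Set.Ioi 0))
      simp only [rho_insertNth _ _ _ _ h0.le]
      simpa using h
    · intro y hy
      -- away from the wall the extra factor `1 / t` is harmless
      have hb := boundary_zero (c := 1) (α := 1) hk h0.le h1 0 (f := fun _ => 1) (PB.const 1) hy
        (fun N => (tendsto_boundary one_pos one_pos N).2) (eventually_gt_atTop 0)
      have hb' := hb.mul tendsto_inv_atTop_zero
      rw [mul_zero] at hb'
      refine hb'.congr' ?_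
      filter_upwards [eventually_gt_atTop 0] with t ht
      field_simp
  have hL := tendsto_integral_rho (n := m + 1) (α := 1) hk one_pos one_pos (PB.const 1)
    (F := fun _ _ => 1) (F₀ := fun _ => 1) (fun _ => measurable_const) (fun _ _ _ => le_rfl)
    (fun x _ => (tendsto_rho hk x).const_mul 1)
  have hH : PB fun y : Fin m → ℝ => ∏ j, (y j ^ 2 + 1) ^ k := by
    refine PB.mono (F := fun y => ∏ j, (y j * y j + 1) ^ ⌈k⌉₊) (PB.prod _ fun j _ => ?_)
      (Finset.measurable_fun_prod _ fun j _ => by fun_prop) fun y _ => ?_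
    · have h : PB fun y : Fin m → ℝ => y j * y j + 1 :=
        ((PB.coord j).mul (PB.coord j)).add (PB.const 1)
      simpa using PB.prod (range ⌈k⌉₊) fun _ _ => h
    · rw [Finset.abs_prod, Finset.abs_prod]
      refine Finset.prod_le_prod (fun j _ => abs_nonneg _) fun j _ => ?_
      have h1 : 1 ≤ y j ^ 2 + 1 := by nlinarith [sq_nonneg (y j)]
      rw [← sq, abs_of_nonneg (by positivity), abs_of_nonneg (by positivity),
        ← Real.rpow_natCast (y j ^ 2 + 1)]
      exact Real.rpow_le_rpow_of_exponent_le h1 (Nat.le_ceil k)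
  have hR := tendsto_integral_rho (n := m) (α := 1) hk one_pos one_pos hH
    (F := fun d y => ∏ j, (y j ^ 2 + 1 / ((d : ℝ) + 1)) ^ k)
    (F₀ := fun y => ∏ j, (y j ^ 2) ^ k)
    (fun d => Finset.measurable_fun_prod _ fun j _ => by fun_prop) (fun d y _ => by
      obtain ⟨h0, h1⟩ := h01 d
      rw [Finset.abs_prod, Finset.abs_prod]
      refine Finset.prod_le_prod (fun j _ => abs_nonneg _) fun j _ => ?_
      rw [abs_of_nonneg (by positivity), abs_of_nonneg (by positivity)]
      gcongr)
    (fun y hy => by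
      refine Tendsto.mul (tendsto_finsetProd _ fun j _ => ?_) (tendsto_rho hk y)
      have h := (tendsto_one_div_add_atTop_nhds_zero_nat (𝕜 := ℝ)).const_add (y j ^ 2)
      rw [add_zero] at h
      exact h.rpow_const (Or.inr hk.le))
  simp only [hreg] at hL
  have h := tendsto_nhds_unique hL hR
  simp only [one_mul] at h
  rw [selberg, h, selberg]
  refine setIntegral_congr_fun (measurableSet_Rplus m) fun y hy => ?_
  simp only [rho, ← mul_assoc, ← Finset.prod_mul_distrib]
  congr 1
  refine Finset.prod_congr rfl fun j _ => ?_
  have hj := hy j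
  rw [← Real.rpow_natCast, ← Real.rpow_mul hj.le, ← Real.rpow_add hj]
  congr 2; push_cast; ring

/-- The Laguerre–Selberg integral. -/
theorem selberg_eq (n : ℕ) {k : ℝ} (hk : 0 < k) {α : ℝ} (hα : 0 < α) :
    selberg n k α = dnk n k * ∏ j ∈ range n, Real.Gamma (α + k * j) := by
  induction n generalizing α with
  | zero =>
    have : Rplus 0 = Set.univ := by ext; simp [Rplus]
    simp [selberg, dnk, this, rho, vd, Measure.real, volume_pi]
  | succ n ih =>
    obtain ⟨C, _, hC⟩ := selberg_eq_const_mul (n := n + 1) hk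
    have h1 := hC 1 one_pos
    rw [selberg_succ_one n hk, ih (by positivity), Finset.prod_range_succ'] at h1
    have hp : ∀ j : ℕ, 0 < Real.Gamma (1 + k * ((j + 1 : ℕ) : ℝ)) := fun j =>
      Real.Gamma_pos_of_pos (by positivity)
    have htel : (∏ j ∈ range n, Real.Gamma (2 * k + 1 + k * j)) * Real.Gamma (1 + k) =
        (∏ j ∈ range n, Real.Gamma (1 + k * ((j + 1 : ℕ) : ℝ))) *
          Real.Gamma (1 + ((n : ℝ) + 1) * k) := by
      have h2 := Finset.prod_range_succ (fun j : ℕ => Real.Gamma (1 + k * ((j + 1 : ℕ) : ℝ))) n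
      rw [Finset.prod_range_succ'] at h2
      have e1 : ∀ j : ℕ, 2 * k + 1 + k * (j : ℝ) = 1 + k * ((j + 1 + 1 : ℕ) : ℝ) :=
        fun j => by push_cast; ring
      have e2 : 1 + ((n : ℝ) + 1) * k = 1 + k * ((n + 1 : ℕ) : ℝ) := by push_cast; ring
      simp_rw [e1, e2, ← h2]
      simp
    have hg : 0 < Real.Gamma (1 + k) := Real.Gamma_pos_of_pos (by positivity)
    have hne : (∏ j ∈ range n, Real.Gamma (1 + k * ((j + 1 : ℕ) : ℝ))) ≠ 0 :=
      (Finset.prod_pos fun j _ => hp j).ne'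
    have hd : dnk (n + 1) k = dnk n k * (Real.Gamma (1 + (n + 1) * k) / Real.Gamma (1 + k)) := by
      rw [dnk, dnk, Finset.prod_range_succ]
    simp only [CharP.cast_eq_zero, mul_zero, add_zero, Real.Gamma_one, mul_one] at h1
    have hCe : C = dnk (n + 1) k := by
      rw [hd]
      field_simp
      apply mul_right_cancel₀ hne
      linear_combination (-Real.Gamma (1 + k)) * h1 + dnk n k * htel
    rw [hC α hα, hCe]

lemma rho_smul {n : ℕ} (k α : ℝ) {c : ℝ} (hc : 0 < c) {x : Fin n → ℝ} (hx : x ∈ Rplus n) :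
    rho n k α 1 0 (c • x) = c ^ (n * (α - 1) + k * n * ((n : ℝ) - 1)) * rho n k α c 0 x := by
  have hv : vd n k 0 (c • x) = c ^ (k * n * ((n : ℝ) - 1)) * vd n k 0 x := by
    have e : ∀ i j : Fin n, ((c * x i - c * x j) ^ 2 + 0) ^ (k / 2) =
        c ^ k * ((x i - x j) ^ 2 + 0) ^ (k / 2) := fun i j => by
      rw [show (c * x i - c * x j) ^ 2 + 0 = c ^ 2 * ((x i - x j) ^ 2 + 0) by ring,
        Real.mul_rpow (by positivity) (by positivity), ← Real.rpow_natCast,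
        ← Real.rpow_mul hc.le]
      congr 2; push_cast; ring
    simp only [vd, Pi.smul_apply, smul_eq_mul, e, Finset.prod_mul_distrib]
    congr 1
    simp only [Finset.prod_const, Finset.card_compl, Fintype.card_fin, Finset.card_singleton,
      Finset.card_univ]
    rw [← pow_mul, ← Real.rpow_natCast, ← Real.rpow_mul hc.le]
    congr 1
    rcases Nat.eq_zero_or_pos n with rfl | hn
    · simp
    · push_cast [Nat.cast_sub hn]; ring
  have hp : ∏ i, ((c • x) i ^ (α - 1) * Real.exp (-(1 * (c • x) i))) =
      c ^ (n * (α - 1)) * ∏ i, (x i ^ (α - 1) * Real.exp (-(c * x i))) := by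
    have e : ∀ i, (c • x) i ^ (α - 1) * Real.exp (-(1 * (c • x) i)) =
        c ^ (α - 1) * (x i ^ (α - 1) * Real.exp (-(c * x i))) := fun i => by
      rw [Pi.smul_apply, smul_eq_mul, Real.mul_rpow hc.le (hx i).le, one_mul]; ring
    simp_rw [e]
    rw [Finset.prod_mul_distrib, Finset.prod_const, Finset.card_univ, Fintype.card_fin,
      ← Real.rpow_natCast, ← Real.rpow_mul hc.le, mul_comm (α - 1)]
  rw [rho, hp, hv, rho, Real.rpow_add hc]
  ring

open Pointwise in
/-- The Laguerre–Selberg integral with the exponential scaled by `c`. -/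
lemma integral_rho (n : ℕ) {k : ℝ} (hk : 0 < k) {α c : ℝ} (hα : 0 < α) (hc : 0 < c) :
    ∫ x in Rplus n, rho n k α c 0 x = c ^ (-(n * (α + k * ((n : ℝ) - 1)))) *
      (dnk n k * ∏ j ∈ range n, Real.Gamma (α + k * j)) := by
  rw [← selberg_eq n hk hα]
  have h := Measure.setIntegral_comp_smul_of_pos volume (rho n k α 1 0) (Rplus n) hc
  have hs : c • Rplus n = Rplus n := by
    ext x
    rw [Set.mem_smul_set_iff_inv_smul_mem₀ hc.ne']
    simp [Rplus, hc]
  rw [hs, setIntegral_congr_fun (measurableSet_Rplus n) (fun x hx => rho_smul k α hc hx),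
    integral_const_mul, smul_eq_mul, Module.finrank_fin_fun, ← selberg] at h
  have h2 : c ^ (n * (α - 1) + k * n * ((n : ℝ) - 1)) * c ^ n =
      c ^ (n * (α + k * ((n : ℝ) - 1))) := by
    rw [← Real.rpow_natCast c n, ← Real.rpow_add hc]; congr 1; ring
  have h3 : c ^ (n * (α - 1) + k * n * ((n : ℝ) - 1)) ≠ 0 := (Real.rpow_pos_of_pos hc _).ne'
  have h4 : c ^ n ≠ 0 := pow_ne_zero _ hc.ne'
  rw [Real.rpow_neg hc.le, ← h2]
  field_simp at h ⊢
  linear_combination h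

/-! ### Mollification of rapidly decaying functions -/

section Convolution

open scoped Convolution ContDiff

/-- Derivatives of a convolution fall on the smooth factor. The vector-valued generality is what
the induction on the order needs, as each step replaces `g` by `fderiv ℝ g`. -/
lemma norm_iteratedFDeriv_conv {n : ℕ} {f : (Fin n → ℝ) → ℝ} (hf : Continuous f) (b : ℕ) :
    ∀ {E F : Type} [NormedAddCommGroup E] [NormedSpace ℝ E] [NormedAddCommGroup F]
      [NormedSpace ℝ F] (L : ℝ →L[ℝ] E →L[ℝ] F) {g : (Fin n → ℝ) → E}
      (_ : HasCompactSupport g) (_ : ContDiff ℝ ∞ g) (x : Fin n → ℝ),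
      ‖iteratedFDeriv ℝ b (f ⋆[L, volume] g) x‖ ≤
        ‖L‖ * ∫ t, |f t| * ‖iteratedFDeriv ℝ b g (x - t)‖ := by
  induction b with
  | zero =>
    intro E F _ _ _ _ L g hcg hg x
    simp only [norm_iteratedFDeriv_zero, ← integral_const_mul]
    refine norm_integral_le_of_norm_le (Continuous.integrable_of_hasCompactSupport
      (by fun_prop) ?_) (.of_forall fun t => ?_)
    · refine HasCompactSupport.mul_left (HasCompactSupport.mul_left ?_)
      have := (hcg.norm).comp_homeomorph (Homeomorph.subLeft x)
      exact this
    · calc ‖L (f t) (g (x - t))‖ ≤ ‖L‖ * ‖f t‖ * ‖g (x - t)‖ := L.le_opNorm₂ _ _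
        _ = _ := by rw [Real.norm_eq_abs]; ring
  | succ b ih =>
    intro E F _ _ _ _ L g hcg hg x
    have h1 : fderiv ℝ (f ⋆[L, volume] g) =
        f ⋆[L.precompR (Fin n → ℝ), volume] fderiv ℝ g := by
      ext1 y
      exact (hcg.hasFDerivAt_convolution_right L hf.locallyIntegrable
        (hg.of_le (by simp)) y).fderiv
    rw [← norm_iteratedFDeriv_fderiv, h1]
    refine (ih (L.precompR (Fin n → ℝ)) (hcg.fderiv ℝ) (hg.fderiv_right (by simp)) x).trans ?_
    simp only [norm_iteratedFDeriv_fderiv]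
    gcongr
    exact L.norm_precompR_le _

/-- Continuous functions decaying faster than any power. -/
structure Rapid {n : ℕ} (F : (Fin n → ℝ) → ℝ) : Prop where
  cont : Continuous F
  decay : ∀ a : ℕ, ∃ C, ∀ x, (1 + ‖x‖) ^ a * |F x| ≤ C

/-- Mollification of `F` by the normalised bump `η`. -/
noncomputable def moll {n : ℕ} (η : ContDiffBump (0 : Fin n → ℝ)) (F : (Fin n → ℝ) → ℝ) :
    (Fin n → ℝ) → ℝ :=
  F ⋆[ContinuousLinearMap.lsmul ℝ ℝ, volume] η.normed volume

lemma moll_apply {n : ℕ} (η : ContDiffBump (0 : Fin n → ℝ)) (F : (Fin n → ℝ) → ℝ)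
    (x : Fin n → ℝ) : moll η F x = ∫ t, F (x - t) * η.normed volume t := by
  rw [moll, convolution_eq_swap]
  rfl

lemma normed_eq_zero {n : ℕ} (η : ContDiffBump (0 : Fin n → ℝ)) {t : Fin n → ℝ}
    (h : η.rOut ≤ ‖t‖) : η.normed volume t = 0 := by
  by_contra h0
  have : t ∈ Function.support (η.normed volume) := h0
  rw [η.support_normed_eq] at this
  simp at this; linarith

/-- Mollification gains derivatives at no cost in decay: the constant depends only on the bump. -/
lemma moll_bound {n : ℕ} (η : ContDiffBump (0 : Fin n → ℝ)) (hη : η.rOut ≤ 1) (a b : ℕ) :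
    ∃ K, 0 ≤ K ∧ ∀ F : (Fin n → ℝ) → ℝ, Continuous F → ∀ M,
      (∀ x, (1 + ‖x‖) ^ a * |F x| ≤ M) →
        ∀ x, ‖x‖ ^ a * ‖iteratedFDeriv ℝ b (moll η F) x‖ ≤ K * M := by
  set L := ContinuousLinearMap.lsmul ℝ ℝ (E := ℝ)
  set g := η.normed (volume : Measure (Fin n → ℝ))
  have hg : ContDiff ℝ ∞ g := η.contDiff_normed
  have hcg : HasCompactSupport g := η.hasCompactSupport_normed
  have hD : Continuous fun t => ‖iteratedFDeriv ℝ b g t‖ :=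
    (hg.continuous_iteratedFDeriv (by exact_mod_cast le_top)).norm
  have hDc : HasCompactSupport fun t => ‖iteratedFDeriv ℝ b g t‖ :=
    (hcg.iteratedFDeriv b).norm
  have hDs : ∀ t, 1 < ‖t‖ → iteratedFDeriv ℝ b g t = 0 := fun t ht => by
    by_contra h0
    have h1 : t ∈ tsupport g := support_iteratedFDeriv_subset b h0
    rw [η.tsupport_normed_eq] at h1
    simp at h1; linarith
  refine ⟨‖L‖ * 2 ^ a * ∫ t, ‖iteratedFDeriv ℝ b g t‖, by positivity, fun F hF M hM x => ?_⟩
  have h := norm_iteratedFDeriv_conv hF b L hcg hg x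
  have hshift : ∫ t, ‖iteratedFDeriv ℝ b g (x - t)‖ = ∫ t, ‖iteratedFDeriv ℝ b g t‖ :=
    integral_sub_left_eq_self (fun t => ‖iteratedFDeriv ℝ b g t‖) volume x
  have hc2 : HasCompactSupport fun t => ‖iteratedFDeriv ℝ b g (x - t)‖ :=
    hDc.comp_homeomorph (Homeomorph.subLeft x)
  have hcont2 : Continuous fun t => ‖iteratedFDeriv ℝ b g (x - t)‖ :=
    hD.comp (continuous_const.sub continuous_id)
  have key : ‖x‖ ^ a * ∫ t, |F t| * ‖iteratedFDeriv ℝ b g (x - t)‖ ≤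
      2 ^ a * M * ∫ t, ‖iteratedFDeriv ℝ b g t‖ := by
    rw [← hshift, ← integral_const_mul, ← integral_const_mul]
    refine integral_mono ?_ ?_ fun t => ?_
    · refine Continuous.integrable_of_hasCompactSupport (by fun_prop) ?_
      exact HasCompactSupport.mul_left (HasCompactSupport.mul_left hc2)
    · exact Continuous.integrable_of_hasCompactSupport (by fun_prop)
        (HasCompactSupport.mul_left hc2)
    · dsimp only
      rcases le_or_gt ‖x - t‖ 1 with ht | ht
      · have h1 : ‖x‖ ≤ 2 * (1 + ‖t‖) := by
          have := norm_le_norm_add_norm_sub' x t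
          linarith [norm_nonneg t]
        have h2 : ‖x‖ ^ a * |F t| ≤ 2 ^ a * M := by
          calc ‖x‖ ^ a * |F t| ≤ (2 * (1 + ‖t‖)) ^ a * |F t| := by gcongr
            _ = 2 ^ a * ((1 + ‖t‖) ^ a * |F t|) := by rw [mul_pow]; ring
            _ ≤ _ := by gcongr; exact hM t
        rw [← mul_assoc]
        gcongr
      · rw [hDs _ ht]; simp
  calc ‖x‖ ^ a * ‖iteratedFDeriv ℝ b (moll η F) x‖
      ≤ ‖x‖ ^ a * (‖L‖ * ∫ t, |F t| * ‖iteratedFDeriv ℝ b g (x - t)‖) := by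
        gcongr; exact h
    _ = ‖L‖ * (‖x‖ ^ a * ∫ t, |F t| * ‖iteratedFDeriv ℝ b g (x - t)‖) := by ring
    _ ≤ ‖L‖ * (2 ^ a * M * ∫ t, ‖iteratedFDeriv ℝ b g t‖) := by gcongr
    _ = _ := by ring

/-- The mollification of a rapidly decaying function as a Schwartz function. -/
noncomputable def mollS {n : ℕ} (η : ContDiffBump (0 : Fin n → ℝ)) (hη : η.rOut ≤ 1)
    {F : (Fin n → ℝ) → ℝ} (hF : Rapid F) : SchwartzMap (Fin n → ℝ) ℝ where
  toFun := moll η F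
  smooth' := η.hasCompactSupport_normed.contDiff_convolution_right _ hF.cont.locallyIntegrable
    η.contDiff_normed
  decay' a b := by
    obtain ⟨K, -, hK⟩ := moll_bound η hη a b
    obtain ⟨C, hC⟩ := hF.decay a
    exact ⟨K * C, hK F hF.cont C hC⟩

lemma mollS_apply {n : ℕ} (η : ContDiffBump (0 : Fin n → ℝ)) (hη : η.rOut ≤ 1)
    {F : (Fin n → ℝ) → ℝ} (hF : Rapid F) (x : Fin n → ℝ) : mollS η hη hF x = moll η F x := rfl

lemma rapid_schwartz {n : ℕ} (φ : SchwartzMap (Fin n → ℝ) ℝ) : Rapid φ := by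
  refine ⟨φ.continuous, fun a => ?_⟩
  have h := SchwartzMap.one_add_le_sup_seminorm_apply (𝕜 := ℝ) (m := (a, 0)) le_rfl le_rfl φ
  simp only [norm_iteratedFDeriv_zero] at h
  exact ⟨_, h⟩

lemma integrable_mul_normed {n : ℕ} (η : ContDiffBump (0 : Fin n → ℝ)) {E : Type}
    [NormedAddCommGroup E] [NormedSpace ℝ E] {f : (Fin n → ℝ) → E} (hf : Continuous f) :
    Integrable fun t => η.normed volume t • f t :=
  Continuous.integrable_of_hasCompactSupport
    (η.continuous_normed.smul hf) η.hasCompactSupport_normed.smul_right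

/-- A smooth function with bounded derivatives is close to its mollification, with all
derivatives, as soon as the bump is narrow. -/
lemma norm_iteratedFDeriv_moll_sub {n : ℕ} (η : ContDiffBump (0 : Fin n → ℝ)) (b : ℕ) :
    ∀ {E : Type} [NormedAddCommGroup E] [NormedSpace ℝ E] [CompleteSpace E]
      {f : (Fin n → ℝ) → E} (_ : ContDiff ℝ ∞ f)
      (_ : ∀ j, ∃ C, ∀ x, ‖iteratedFDeriv ℝ j f x‖ ≤ C) (x : Fin n → ℝ) (M : ℝ)
      (_ : ∀ t, ‖t‖ ≤ η.rOut → ‖iteratedFDeriv ℝ (b + 1) f (x - t)‖ ≤ M),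
      ‖iteratedFDeriv ℝ b (fun x => (∫ t, η.normed volume t • f (x - t)) - f x) x‖ ≤
        η.rOut * M := by
  induction b with
  | zero =>
    intro E _ _ _ f hf _ x M hM
    have hM0 : 0 ≤ M := (norm_nonneg _).trans (hM 0 (by simpa using η.rOut_pos.le))
    rw [norm_iteratedFDeriv_zero]
    have hc : Continuous fun t => f (x - t) := hf.continuous.comp (by fun_prop)
    have h1 : (∫ t, η.normed volume t • f (x - t)) - f x =
        ∫ t, η.normed volume t • (f (x - t) - f x) := by
      simp_rw [smul_sub]
      rw [integral_sub (integrable_mul_normed η hc)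
        (integrable_mul_normed η continuous_const), integral_smul_const, η.integral_normed,
        one_smul]
    rw [h1]
    have h2 : ∫ t, η.normed volume t * (η.rOut * M) = η.rOut * M := by
      rw [integral_mul_const, η.integral_normed, one_mul]
    rw [← h2]
    refine norm_integral_le_of_norm_le
      (by simpa using integrable_mul_normed η (continuous_const (y := η.rOut * M)))
      (.of_forall fun t => ?_)
    rw [norm_smul, Real.norm_of_nonneg (η.nonneg_normed t)]
    rcases le_or_gt η.rOut ‖t‖ with ht | ht
    · rw [normed_eq_zero η ht]; simp
    · refine mul_le_mul_of_nonneg_left ?_ (η.nonneg_normed t)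
      have h3 := (convex_closedBall x η.rOut).norm_image_sub_le_of_norm_fderiv_le
        (𝕜 := ℝ) (f := f) (C := M) (x := x) (y := x - t)
        (fun y _ => hf.differentiable (by simp) y) (fun y hy => ?_)
        (Metric.mem_closedBall_self η.rOut_pos.le) (by simpa using ht.le)
      · refine h3.trans ?_
        rw [mul_comm, sub_sub_cancel_left, norm_neg]
        gcongr
      · have := hM (x - y) (by rwa [mem_closedBall_iff_norm'] at hy)
        rw [zero_add, sub_sub_cancel, ← norm_iteratedFDeriv_fderiv,
          norm_iteratedFDeriv_zero] at this
        exact this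
  | succ b ih =>
    intro E _ _ _ f hf hb x M hM
    have hf' : ContDiff ℝ ∞ (fderiv ℝ f) := hf.fderiv_right (by simp)
    have hd : fderiv ℝ (fun x => (∫ t, η.normed volume t • f (x - t)) - f x) =
        fun x => (∫ t, η.normed volume t • fderiv ℝ f (x - t)) - fderiv ℝ f x := by
      ext1 y
      obtain ⟨C, hC⟩ := hb 1
      have h1 := hasFDerivAt_integral_of_dominated_of_fderiv_le (𝕜 := ℝ) (μ := volume)
        (F := fun x t => η.normed volume t • f (x - t))
        (F' := fun x t => η.normed volume t • fderiv ℝ f (x - t)) (x₀ := y) (s := Set.univ)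
        (bound := fun t => η.normed volume t * C) Filter.univ_mem
        (.of_forall fun z => (integrable_mul_normed η
          (hf.continuous.comp (by fun_prop))).aestronglyMeasurable)
        (integrable_mul_normed η (hf.continuous.comp (by fun_prop)))
        (integrable_mul_normed η (hf'.continuous.comp (by fun_prop))).aestronglyMeasurable
        (.of_forall fun t z _ => ?_)
        (by simpa using integrable_mul_normed η (continuous_const (y := C)))
        (.of_forall fun t z _ => ?_)
      · exact (h1.sub (hf.differentiable (by simp) y).hasFDerivAt).fderiv
      · rw [norm_smul, Real.norm_of_nonneg (η.nonneg_normed t)]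
        refine mul_le_mul_of_nonneg_left ?_ (η.nonneg_normed t)
        have := hC (z - t)
        rwa [← zero_add 1, ← norm_iteratedFDeriv_fderiv, norm_iteratedFDeriv_zero] at this
      · have h2 := (hf.differentiable (by simp) (z - t)).hasFDerivAt
        have h3 := h2.comp z ((hasFDerivAt_id z).sub_const t)
        exact h3.const_smul _
    rw [← norm_iteratedFDeriv_fderiv, hd]
    refine ih hf' (fun j => ?_) x M fun t ht => ?_
    · obtain ⟨C, hC⟩ := hb (j + 1)
      exact ⟨C, fun x => by rw [norm_iteratedFDeriv_fderiv]; exact hC x⟩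
    · rw [norm_iteratedFDeriv_fderiv]; exact hM t ht

/-- A tempered distribution is bounded by finitely many Schwartz seminorms. -/
lemma clm_bound {n : ℕ} (S : SchwartzMap (Fin n → ℝ) ℝ →L[ℝ] ℂ) :
    ∃ s : Finset (ℕ × ℕ), ∃ C : ℝ, 0 ≤ C ∧ ∀ (ψ : SchwartzMap (Fin n → ℝ) ℝ) (M : ℝ), 0 ≤ M →
      (∀ m ∈ s, ∀ x, ‖x‖ ^ m.1 * ‖iteratedFDeriv ℝ m.2 ψ x‖ ≤ M) → ‖S ψ‖ ≤ C * M := by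
  obtain ⟨s, C, -, h⟩ := Seminorm.bound_of_continuous
    (schwartz_withSeminorms ℝ (Fin n → ℝ) ℝ) ((normSeminorm ℝ ℂ).comp S.toLinearMap)
    (continuous_norm.comp S.continuous)
  refine ⟨s, C, C.2, fun ψ M hM hψ => (h ψ).trans ?_⟩
  refine mul_le_mul_of_nonneg_left ?_ C.2
  refine Seminorm.finset_sup_apply_le hM fun m hm => ?_
  exact SchwartzMap.seminorm_le_bound ℝ m.1 m.2 ψ hM (hψ m hm)

/-- Mollifications are dense among Schwartz functions. -/
lemma eq_zero_of_moll {n : ℕ} (S : SchwartzMap (Fin n → ℝ) ℝ →L[ℝ] ℂ)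
    (h : ∀ (η : ContDiffBump (0 : Fin n → ℝ)) (hη : η.rOut ≤ 1)
      (φ : SchwartzMap (Fin n → ℝ) ℝ), S (mollS η hη (rapid_schwartz φ)) = 0)
    (φ : SchwartzMap (Fin n → ℝ) ℝ) : S φ = 0 := by
  obtain ⟨s, C, hC, hS⟩ := clm_bound S
  have hdec : ∀ m : ℕ × ℕ, ∃ K, 0 ≤ K ∧
      ∀ x, (1 + ‖x‖) ^ m.1 * ‖iteratedFDeriv ℝ m.2 φ x‖ ≤ K := fun m => by
    have h := SchwartzMap.one_add_le_sup_seminorm_apply (𝕜 := ℝ) (m := m) le_rfl le_rfl φ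
    exact ⟨_, by positivity, h⟩
  choose K hK0 hK using hdec
  set B : ℝ := ∑ m ∈ s, 2 ^ m.1 * K (m.1, m.2 + 1)
  have hB : 0 ≤ B := Finset.sum_nonneg fun m _ => mul_nonneg (by positivity) (hK0 _)
  have key : ∀ δ : ℝ, 0 < δ → δ ≤ 1 → ‖S φ‖ ≤ C * (δ * B) := by
    intro δ hδ hδ1
    -- `S` kills the mollification of `φ` at scale `δ`, so `S φ` is as small as the mollification error.
    let η : ContDiffBump (0 : Fin n → ℝ) := ⟨δ / 2, δ, by positivity, by linarith⟩
    have hη : η.rOut ≤ 1 := hδ1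
    have e : ‖S φ‖ = ‖S (mollS η hη (rapid_schwartz φ) - φ)‖ := by
      rw [map_sub, h, zero_sub, norm_neg]
    rw [e]
    refine hS _ _ (by positivity) fun m hm x => ?_
    have e2 : (⇑(mollS η hη (rapid_schwartz φ) - φ) : (Fin n → ℝ) → ℝ) =
        fun x => (∫ t, η.normed volume t • φ (x - t)) - φ x := by
      ext y
      rw [sub_apply, mollS_apply, moll_apply]
      simp only [smul_eq_mul, mul_comm]
    rw [e2]
    have hM : ∀ t, ‖t‖ ≤ η.rOut → ‖iteratedFDeriv ℝ (m.2 + 1) φ (x - t)‖ ≤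
        2 ^ m.1 * K (m.1, m.2 + 1) / (1 + ‖x‖) ^ m.1 := fun t ht => by
      have h1 : 1 + ‖x‖ ≤ 2 * (1 + ‖x - t‖) := by
        have := norm_le_norm_add_norm_sub' x (x - t)
        rw [sub_sub_cancel] at this
        linarith [norm_nonneg (x - t), ht.trans hη]
      rw [le_div_iff₀ (by positivity)]
      calc _ ≤ ‖iteratedFDeriv ℝ (m.2 + 1) φ (x - t)‖ * (2 * (1 + ‖x - t‖)) ^ m.1 := by gcongr
        _ = 2 ^ m.1 * ((1 + ‖x - t‖) ^ m.1 * ‖iteratedFDeriv ℝ (m.2 + 1) φ (x - t)‖) := by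
          rw [mul_pow]; ring
        _ ≤ _ := by gcongr; exact hK (m.1, m.2 + 1) _
    have h3 := norm_iteratedFDeriv_moll_sub η m.2 (φ.smooth ⊤) (fun j => by
      obtain ⟨c, hc⟩ := φ.decay 0 j
      exact ⟨c, fun x => by simpa using hc.2 x⟩) x _ hM
    have hs : 2 ^ m.1 * K (m.1, m.2 + 1) ≤ B :=
      Finset.single_le_sum (f := fun m : ℕ × ℕ => 2 ^ m.1 * K (m.1, m.2 + 1))
        (fun m _ => mul_nonneg (by positivity) (hK0 _)) hm
    have hm0 := hK0 (m.1, m.2 + 1)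
    calc _ ≤ ‖x‖ ^ m.1 * (δ * (2 ^ m.1 * K (m.1, m.2 + 1) / (1 + ‖x‖) ^ m.1)) := by
          gcongr
      _ ≤ (1 + ‖x‖) ^ m.1 * (δ * (2 ^ m.1 * K (m.1, m.2 + 1) / (1 + ‖x‖) ^ m.1)) := by
          gcongr
          linarith
      _ = δ * (2 ^ m.1 * K (m.1, m.2 + 1)) := by field_simp
      _ ≤ _ := by gcongr
  have hlim : Filter.Tendsto (fun δ : ℝ => C * (δ * B)) (nhdsWithin 0 (Set.Ioi 0)) (nhds 0) := by
    have : Continuous fun δ : ℝ => C * (δ * B) := by fun_prop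
    simpa using (this.tendsto 0).mono_left nhdsWithin_le_nhds
  have := ge_of_tendsto hlim (b := ‖S φ‖) (by
    filter_upwards [Ioc_mem_nhdsGT (zero_lt_one' ℝ)] with δ hδ using key δ hδ.1 hδ.2)
  exact norm_le_zero_iff.mp this

end Convolution

/-! ### Density of polynomials times exponentials -/

/-- The span of the functions `p(x) e^{-c ∑ xᵢ}` with `p` polynomial and `c > 0`. -/
noncomputable def expPoly (n : ℕ) : Submodule ℝ ((Fin n → ℝ) → ℝ) :=
  Submodule.span ℝ {f | ∃ (p : MvPolynomial (Fin n) ℝ) (c : ℝ), 0 < c ∧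
    f = fun x => MvPolynomial.eval x p * Real.exp (-(c * ∑ i, x i))}

lemma mem_expPoly {n : ℕ} (p : MvPolynomial (Fin n) ℝ) {c : ℝ} (hc : 0 < c) :
    (fun x : Fin n → ℝ => MvPolynomial.eval x p * Real.exp (-(c * ∑ i, x i))) ∈ expPoly n :=
  Submodule.subset_span ⟨p, c, hc, rfl⟩

lemma expPoly_mul {n : ℕ} {a b : (Fin n → ℝ) → ℝ} (ha : a ∈ expPoly n) (hb : b ∈ expPoly n) :
    a * b ∈ expPoly n := by
  refine Submodule.span_induction₂ (p := fun a b _ _ => a * b ∈ expPoly n) ?_ ?_ ?_ ?_ ?_ ?_ ?_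
    ha hb
  · rintro _ _ ⟨p, c, hc, rfl⟩ ⟨q, d, hd, rfl⟩
    convert mem_expPoly (p * q) (add_pos hc hd) using 1
    ext x
    simp only [Pi.mul_apply, map_mul]
    rw [show -((c + d) * ∑ i, x i) = -(c * ∑ i, x i) + -(d * ∑ i, x i) by ring, Real.exp_add]
    ring
  · intro _ _; simp
  · intro _ _; simp
  · intro x y z _ _ _ h1 h2; rw [add_mul]; exact add_mem h1 h2
  · intro x y z _ _ _ h1 h2; rw [mul_add]; exact add_mem h1 h2
  · intro r x y _ _ h; rw [smul_mul_assoc]; exact Submodule.smul_mem _ _ h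
  · intro r x y _ _ h; rw [mul_smul_comm]; exact Submodule.smul_mem _ _ h

lemma continuous_eval {n : ℕ} (p : MvPolynomial (Fin n) ℝ) :
    Continuous fun x : Fin n → ℝ => MvPolynomial.eval x p := MvPolynomial.continuous_eval p

lemma expPoly_continuous {n : ℕ} {a : (Fin n → ℝ) → ℝ} (ha : a ∈ expPoly n) : Continuous a := by
  refine Submodule.span_induction (p := fun a _ => Continuous a) ?_ ?_ ?_ ?_ ha
  · rintro _ ⟨p, c, hc, rfl⟩
    exact (continuous_eval p).mul (by fun_prop)
  · exact continuous_const
  · intro _ _ _ _ h1 h2; exact h1.add h2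
  · intro r _ _ h; exact h.const_smul r

lemma eval_le {n : ℕ} (p : MvPolynomial (Fin n) ℝ) :
    ∃ C, ∃ N : ℕ, ∀ x : Fin n → ℝ, |MvPolynomial.eval x p| ≤ C * (1 + ‖x‖) ^ N := by
  induction p using MvPolynomial.induction_on with
  | C a => exact ⟨|a|, 0, fun x => by simp⟩
  | add p q hp hq =>
    obtain ⟨C, N, h⟩ := hp
    obtain ⟨D, M, h'⟩ := hq
    refine ⟨|C| + |D|, N + M, fun x => ?_⟩
    have h1 : 1 ≤ 1 + ‖x‖ := by linarith [norm_nonneg x]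
    rw [map_add, add_mul]
    refine (abs_add_le _ _).trans (add_le_add ((h x).trans ?_) ((h' x).trans ?_))
    · exact mul_le_mul (le_abs_self C) (pow_le_pow_right₀ h1 (by omega)) (by positivity)
        (by positivity)
    · exact mul_le_mul (le_abs_self D) (pow_le_pow_right₀ h1 (by omega)) (by positivity)
        (by positivity)
  | mul_X p i hp =>
    obtain ⟨C, N, h⟩ := hp
    refine ⟨C, N + 1, fun x => ?_⟩
    rw [map_mul, abs_mul, pow_succ, ← mul_assoc, MvPolynomial.eval_X]
    have hx : |x i| ≤ 1 + ‖x‖ := by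
      have := norm_le_pi_norm x i
      rw [Real.norm_eq_abs] at this; linarith
    exact mul_le_mul (h x) hx (abs_nonneg _) ((abs_nonneg _).trans (h x))

/-- Exponentials beat powers on translates of the positive orthant. -/
lemma exp_bound (n : ℕ) {c : ℝ} (hc : 0 < c) (m : ℕ) :
    ∃ C, 0 < C ∧ ∀ x : Fin n → ℝ, (∀ i, -2 ≤ x i) →
      (1 + ‖x‖) ^ m * Real.exp (-(c * ∑ i, x i)) ≤ C := by
  set B : ℝ := 1 + 2 * (n + 1)
  refine ⟨m.factorial / c ^ m * Real.exp (c * B), by positivity, fun x hx => ?_⟩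
  have hs : ∀ i, 0 ≤ x i + 2 := fun i => by linarith [hx i]
  have hsum : ∑ i, (x i + 2) = ∑ i, x i + 2 * n := by
    rw [Finset.sum_add_distrib]; simp [mul_comm]
  have hn : ‖x‖ ≤ ∑ i, (x i + 2) + 2 := by
    have h0 : 0 ≤ ∑ i, (x i + 2) := Finset.sum_nonneg fun i _ => hs i
    rw [pi_norm_le_iff_of_nonneg (by linarith)]
    intro i
    have h1 : x i + 2 ≤ ∑ i, (x i + 2) :=
      Finset.single_le_sum (f := fun i => x i + 2) (fun i _ => hs i) (mem_univ i)
    rw [Real.norm_eq_abs, abs_le]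
    constructor <;> linarith [hx i]
  have hy : 1 + ‖x‖ ≤ ∑ i, x i + B := by rw [hsum] at hn; simp only [B]; linarith
  set y := ∑ i, x i + B
  have hy0 : 0 ≤ y := by linarith [norm_nonneg x]
  have he := Real.pow_div_factorial_le_exp (c * y) (by positivity) m
  rw [div_le_iff₀ (by positivity), mul_pow] at he
  have hexp : Real.exp (-(c * ∑ i, x i)) * Real.exp (c * y) = Real.exp (c * B) := by
    rw [← Real.exp_add]; congr 1; simp only [y]; ring
  calc (1 + ‖x‖) ^ m * Real.exp (-(c * ∑ i, x i))
      ≤ y ^ m * Real.exp (-(c * ∑ i, x i)) := by gcongr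
    _ = (c ^ m * y ^ m) / c ^ m * Real.exp (-(c * ∑ i, x i)) := by field_simp
    _ ≤ (Real.exp (c * y) * m.factorial) / c ^ m * Real.exp (-(c * ∑ i, x i)) := by gcongr
    _ = m.factorial / c ^ m * (Real.exp (-(c * ∑ i, x i)) * Real.exp (c * y)) := by ring
    _ = _ := by rw [hexp]

lemma expPoly_bound {n : ℕ} {a : (Fin n → ℝ) → ℝ} (ha : a ∈ expPoly n) (m : ℕ) :
    ∃ C, ∀ x : Fin n → ℝ, (∀ i, -2 ≤ x i) → (1 + ‖x‖) ^ m * |a x| ≤ C := by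
  refine Submodule.span_induction (p := fun a _ => ∃ C, ∀ x : Fin n → ℝ, (∀ i, -2 ≤ x i) →
    (1 + ‖x‖) ^ m * |a x| ≤ C) ?_ ?_ ?_ ?_ ha
  · rintro _ ⟨p, c, hc, rfl⟩
    obtain ⟨C, N, hp⟩ := eval_le p
    obtain ⟨D, -, hD⟩ := exp_bound n hc (m + N)
    have hC : 0 ≤ C := by simpa using (abs_nonneg _).trans (hp 0)
    refine ⟨C * D, fun x hx => ?_⟩
    rw [abs_mul, Real.abs_exp]
    calc _ ≤ (1 + ‖x‖) ^ m * (C * (1 + ‖x‖) ^ N * Real.exp (-(c * ∑ i, x i))) := by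
          gcongr; exact hp x
      _ = C * ((1 + ‖x‖) ^ (m + N) * Real.exp (-(c * ∑ i, x i))) := by ring
      _ ≤ _ := by gcongr; exact hD x hx
  · exact ⟨0, by simp⟩
  · rintro a b _ _ ⟨C, hC⟩ ⟨D, hD⟩
    refine ⟨C + D, fun x hx => ?_⟩
    calc _ ≤ (1 + ‖x‖) ^ m * (|a x| + |b x|) := by gcongr; exact abs_add_le _ _
      _ ≤ _ := by rw [mul_add]; exact add_le_add (hC x hx) (hD x hx)
  · rintro r a _ ⟨C, hC⟩
    refine ⟨|r| * C, fun x hx => ?_⟩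
    rw [Pi.smul_apply, smul_eq_mul, abs_mul, mul_left_comm]
    gcongr
    exact hC x hx

/-- A continuous cutoff: `1` where all `xᵢ ≥ -1`, and `0` as soon as some `xᵢ ≤ -2`. -/
noncomputable def cut {n : ℕ} (x : Fin n → ℝ) : ℝ := ∏ i, max 0 (min 1 (x i + 2))

lemma continuous_cut {n : ℕ} : Continuous (cut (n := n)) := by
  unfold cut; fun_prop

lemma cut_nonneg {n : ℕ} (x : Fin n → ℝ) : 0 ≤ cut x :=
  Finset.prod_nonneg fun _ _ => le_max_left _ _

lemma cut_le_one {n : ℕ} (x : Fin n → ℝ) : cut x ≤ 1 :=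
  Finset.prod_le_one (fun _ _ => le_max_left _ _) fun _ _ => max_le zero_le_one (min_le_left _ _)

lemma cut_eq_one {n : ℕ} {x : Fin n → ℝ} (hx : ∀ i, -1 ≤ x i) : cut x = 1 :=
  Finset.prod_eq_one fun i _ => by
    rw [min_eq_left (by linarith [hx i]), max_eq_right zero_le_one]

lemma le_of_cut_ne_zero {n : ℕ} {x : Fin n → ℝ} (h : cut x ≠ 0) (i : Fin n) : -2 ≤ x i := by
  by_contra hi
  refine h (Finset.prod_eq_zero (mem_univ i) ?_)
  rw [max_eq_left]
  exact (min_le_right _ _).trans (by linarith [not_le.mp hi])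

/-- A bound on `{x | ∀ i, -2 ≤ xᵢ}` becomes global after cutting off. -/
lemma cut_bound {n : ℕ} {a : (Fin n → ℝ) → ℝ} {m : ℕ} {C : ℝ}
    (h : ∀ x : Fin n → ℝ, (∀ i, -2 ≤ x i) → (1 + ‖x‖) ^ m * |a x| ≤ C) (hC : 0 ≤ C)
    (x : Fin n → ℝ) : (1 + ‖x‖) ^ m * |cut x * a x| ≤ C := by
  by_cases h0 : cut x = 0
  · simpa [h0] using hC
  · refine le_trans ?_ (h x (le_of_cut_ne_zero h0))
    rw [abs_mul, abs_of_nonneg (cut_nonneg x)]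
    gcongr
    exact mul_le_of_le_one_left (abs_nonneg _) (cut_le_one x)

lemma rapid_cut {n : ℕ} {a : (Fin n → ℝ) → ℝ} (hc : Continuous a)
    (h : ∀ m : ℕ, ∃ C, ∀ x : Fin n → ℝ, (∀ i, -2 ≤ x i) → (1 + ‖x‖) ^ m * |a x| ≤ C) :
    Rapid fun x => cut x * a x := by
  refine ⟨continuous_cut.mul hc, fun m => ?_⟩
  obtain ⟨C, hC⟩ := h m
  exact ⟨|C|, cut_bound (fun x hx => (hC x hx).trans (le_abs_self C)) (abs_nonneg _)⟩

/-- Convolving a polynomial with a compactly supported function gives a polynomial. -/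
lemma polynomial_conv {n : ℕ} (p : MvPolynomial (Fin n) ℝ) :
    ∀ w : (Fin n → ℝ) → ℝ, Continuous w → HasCompactSupport w →
      ∃ q : MvPolynomial (Fin n) ℝ, ∀ x : Fin n → ℝ,
        ∫ t, MvPolynomial.eval (x - t) p * w t = MvPolynomial.eval x q := by
  have hI : ∀ (p : MvPolynomial (Fin n) ℝ) (x : Fin n → ℝ) {w : (Fin n → ℝ) → ℝ},
      Continuous w → HasCompactSupport w →
      Integrable fun t => MvPolynomial.eval (x - t) p * w t := fun p x w h1 h2 =>
    (((continuous_eval p).comp (by fun_prop)).mul h1).integrable_of_hasCompactSupport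
      h2.mul_left
  induction p using MvPolynomial.induction_on with
  | C a =>
    intro w _ _
    exact ⟨MvPolynomial.C (a * ∫ t, w t), fun x => by simp [integral_const_mul]⟩
  | add p q hp hq =>
    intro w h1 h2
    obtain ⟨p', hp'⟩ := hp w h1 h2
    obtain ⟨q', hq'⟩ := hq w h1 h2
    refine ⟨p' + q', fun x => ?_⟩
    simp_rw [map_add, add_mul]
    rw [integral_add (hI p x h1 h2) (hI q x h1 h2), hp', hq']
  | mul_X p i hp =>
    intro w h1 h2
    have h1' : Continuous fun t : Fin n → ℝ => t i * w t := by fun_prop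
    have h2' : HasCompactSupport fun t : Fin n → ℝ => t i * w t := h2.mul_left
    obtain ⟨p', hp'⟩ := hp w h1 h2
    obtain ⟨q', hq'⟩ := hp _ h1' h2'
    refine ⟨MvPolynomial.X i * p' - q', fun x => ?_⟩
    rw [map_sub, map_mul, MvPolynomial.eval_X, ← hp', ← hq', ← integral_const_mul,
      ← integral_sub ((hI p x h1 h2).const_mul _) (hI p x h1' h2')]
    refine integral_congr_ae (.of_forall fun t => ?_)
    simp only [map_mul, MvPolynomial.eval_X, Pi.sub_apply]
    ring

lemma expPoly_conv {n : ℕ} (η : ContDiffBump (0 : Fin n → ℝ)) {a : (Fin n → ℝ) → ℝ}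
    (ha : a ∈ expPoly n) :
    ∃ a' ∈ expPoly n, ∀ x, ∫ t, a (x - t) * η.normed volume t = a' x := by
  have hI : ∀ {a : (Fin n → ℝ) → ℝ} (_ : a ∈ expPoly n) (x : Fin n → ℝ),
      Integrable fun t => a (x - t) * η.normed volume t := fun {a} ha x => by
    have hc := expPoly_continuous ha
    have h : Continuous fun t => a (x - t) := by fun_prop
    simpa only [smul_eq_mul, mul_comm] using integrable_mul_normed η h
  refine Submodule.span_induction (p := fun a _ => ∃ a' ∈ expPoly n, ∀ x,
    ∫ t, a (x - t) * η.normed volume t = a' x) ?_ ?_ ?_ ?_ ha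
  · rintro _ ⟨p, c, hc, rfl⟩
    obtain ⟨q, hq⟩ := polynomial_conv p
      (fun t => Real.exp (c * ∑ i, t i) * η.normed volume t)
      (Continuous.mul (by fun_prop) η.continuous_normed) η.hasCompactSupport_normed.mul_left
    refine ⟨_, mem_expPoly q hc, fun x => ?_⟩
    rw [← hq, ← integral_mul_const]
    refine integral_congr_ae (.of_forall fun t => ?_)
    simp only [Pi.sub_apply, Finset.sum_sub_distrib]
    rw [show -(c * (∑ i, x i - ∑ i, t i)) = c * ∑ i, t i + -(c * ∑ i, x i) by ring,
      Real.exp_add]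
    ring
  · exact ⟨0, zero_mem _, by simp⟩
  · rintro a b ha hb ⟨a', ha', h1⟩ ⟨b', hb', h2⟩
    refine ⟨a' + b', add_mem ha' hb', fun x => ?_⟩
    simp only [Pi.add_apply, add_mul]
    rw [integral_add (hI ha x) (hI hb x), h1, h2]
  · rintro r a ha ⟨a', ha', h1⟩
    refine ⟨r • a', Submodule.smul_mem _ _ ha', fun x => ?_⟩
    simp only [Pi.smul_apply, smul_eq_mul, mul_assoc]
    rw [integral_const_mul, h1]

/-- Mollification by a bump of radius at most `1` preserves the class `expPoly` on the orthant. -/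
lemma moll_expPoly {n : ℕ} (η : ContDiffBump (0 : Fin n → ℝ)) (hη : η.rOut ≤ 1)
    {a : (Fin n → ℝ) → ℝ} (ha : a ∈ expPoly n) :
    ∃ a' ∈ expPoly n, ∀ G : (Fin n → ℝ) → ℝ, (∀ x : Fin n → ℝ, (∀ i, -1 ≤ x i) → G x = a x) →
      ∀ x ∈ Rplus n, moll η G x = a' x := by
  obtain ⟨a', ha', h⟩ := expPoly_conv η ha
  refine ⟨a', ha', fun G hG x hx => ?_⟩
  rw [moll_apply, ← h]
  refine integral_congr_ae (.of_forall fun t => ?_)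
  dsimp only
  rcases le_or_gt η.rOut ‖t‖ with ht | ht
  · rw [normed_eq_zero η ht]; simp
  · rw [hG]
    intro i
    have h1 := (norm_le_pi_norm t i).trans (ht.le.trans hη)
    rw [Real.norm_eq_abs, abs_le] at h1
    have h2 : 0 < x i := hx i
    simp only [Pi.sub_apply]
    linarith

/-- The Weierstrass approximation theorem in several variables. -/
lemma exists_polynomial_near {ι : Type} [Finite ι] {f : (ι → ℝ) → ℝ} (hf : Continuous f)
    {K : Set (ι → ℝ)} (hK : IsCompact K) {ε : ℝ} (hε : 0 < ε) :
    ∃ q : MvPolynomial ι ℝ, ∀ y ∈ K, |MvPolynomial.eval y q - f y| < ε := by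
  let coord : ι → C(ι → ℝ, ℝ) := fun i => ⟨fun y => y i, continuous_apply i⟩
  let A : Subalgebra ℝ C(ι → ℝ, ℝ) := (MvPolynomial.aeval (R := ℝ) coord).range
  have hA : A.SeparatesPoints := fun x y hxy => by
    obtain ⟨i, hi⟩ := Function.ne_iff.mp hxy
    exact ⟨_, ⟨coord i, ⟨MvPolynomial.X i, MvPolynomial.aeval_X _ _⟩, rfl⟩, hi⟩
  obtain ⟨g, ⟨q, rfl⟩, hg⟩ :=
    ContinuousMap.exists_mem_subalgebra_near_continuous_of_isCompact_of_separatesPoints hA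
      ⟨f, hf⟩ hK hε
  refine ⟨q, fun y hy => ?_⟩
  have e : (MvPolynomial.aeval (R := ℝ) coord q) y = MvPolynomial.eval y q := by
    clear hg
    induction q using MvPolynomial.induction_on with
    | C a => simp
    | add p q hp hq => simp_all
    | mul_X p i hp => rw [map_mul, map_mul, MvPolynomial.aeval_X, MvPolynomial.eval_X,
        ContinuousMap.mul_apply, hp]; rfl
  have := hg y hy
  rw [← e]
  exact this

/-- Weighted uniform approximation by `expPoly` on a translated orthant. It reduces to
the Weierstrass theorem through the coordinates `e^{-∑xᵢ}`, `xᵢ e^{-∑xᵢ}`, which are bounded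
there. -/
lemma expPoly_dense {n : ℕ} {φ : (Fin n → ℝ) → ℝ} (hφ : Rapid φ) (m : ℕ) {ε : ℝ} (hε : 0 < ε) :
    ∃ a ∈ expPoly n, ∀ x : Fin n → ℝ, (∀ i, -2 ≤ x i) →
      (1 + ‖x‖) ^ m * |φ x - a x| ≤ ε := by
  -- truncation to a compactly supported function
  obtain ⟨C, hC⟩ := hφ.decay (m + 1)
  have hC0 : 0 ≤ C := (by positivity : (0 : ℝ) ≤ _).trans (hC 0)
  set R : ℝ := 2 * C / ε
  have hR : 0 ≤ R := by positivity
  set φ' : (Fin n → ℝ) → ℝ := fun x => max 0 (min 1 (R + 1 - ‖x‖)) * φ x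
  have hφ'c : Continuous φ' := Continuous.mul (by fun_prop) hφ.cont
  have hφ'0 : ∀ x, R + 1 ≤ ‖x‖ → φ' x = 0 := fun x hx => by
    have : max 0 (min 1 (R + 1 - ‖x‖)) = 0 :=
      max_eq_left ((min_le_right _ _).trans (by linarith))
    simp only [φ', this, zero_mul]
  have hφ' : ∀ x, (1 + ‖x‖) ^ m * |φ x - φ' x| ≤ ε / 2 := fun x => by
    rcases le_or_gt ‖x‖ R with hx | hx
    · have : max 0 (min 1 (R + 1 - ‖x‖)) = 1 := by
        rw [min_eq_left (by linarith), max_eq_right zero_le_one]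
      simp only [φ', this, one_mul, sub_self, abs_zero, mul_zero]
      positivity
    · have h1 : |φ x - φ' x| ≤ |φ x| := by
        have h0 : (0 : ℝ) ≤ max 0 (min 1 (R + 1 - ‖x‖)) := le_max_left _ _
        have h2 : max 0 (min 1 (R + 1 - ‖x‖)) ≤ 1 := max_le zero_le_one (min_le_left _ _)
        have : φ x - φ' x = (1 - max 0 (min 1 (R + 1 - ‖x‖))) * φ x := by simp only [φ']; ring
        rw [this, abs_mul, abs_of_nonneg (by linarith)]
        exact mul_le_of_le_one_left (abs_nonneg _) (by linarith)
      have h3 : (1 + R) * ((1 + ‖x‖) ^ m * |φ x|) ≤ C := by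
        refine le_trans ?_ (hC x)
        rw [pow_succ', mul_assoc]
        gcongr
      have h4 : (1 + ‖x‖) ^ m * |φ x| ≤ ε / 2 := by
        by_contra hlt
        push Not at hlt
        have : (1 + R) * (ε / 2) ≤ C := le_trans (by gcongr) h3
        have h5 : R * (ε / 2) = C := by simp only [R]; field_simp
        nlinarith
      exact le_trans (by gcongr) h4
  -- the bounded coordinates
  obtain ⟨D, hD0, hD⟩ := exp_bound n one_pos m
  obtain ⟨B, hB0, hB⟩ := exp_bound n one_pos 1
  simp only [one_mul, pow_one] at hD hB
  set G : (Fin n → ℝ) → Option (Fin n) → ℝ := fun x o =>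
    (o.elim 1 x) * Real.exp (-∑ i, x i)
  have hG : ∀ x : Fin n → ℝ, (∀ i, -2 ≤ x i) → G x ∈ Metric.closedBall (0 : Option (Fin n) → ℝ) B := by
    intro x hx
    rw [mem_closedBall_zero_iff, pi_norm_le_iff_of_nonneg hB0.le]
    intro o
    refine le_trans ?_ (hB x hx)
    rw [norm_mul, Real.norm_of_nonneg (Real.exp_pos _).le]
    gcongr
    cases o with
    | none => simp
    | some i => simpa using (norm_le_pi_norm x i).trans (by linarith)
  -- on the support of the truncation `e^{-∑xᵢ}` is at least `e0`
  set e0 : ℝ := Real.exp (-(n * (R + 1)))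
  have he0 : 0 < e0 := Real.exp_pos _
  -- In the bounded coordinates `y`, the function `e^{∑xᵢ} φ'(x)` extends continuously to all `y`:
  -- the denominators are kept away from zero and a cutoff removes the region where this matters.
  set f : (Option (Fin n) → ℝ) → ℝ := fun y =>
    max 0 (min 1 (2 * y none / e0 - 1)) / max (y none) (e0 / 2) *
      φ' (fun i => y (some i) / max (y none) (e0 / 2))
  have hmax : ∀ y : Option (Fin n) → ℝ, max (y none) (e0 / 2) ≠ 0 := fun y =>
    (lt_of_lt_of_le (by positivity) (le_max_right _ _)).ne'
  have hf : Continuous f := by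
    refine Continuous.mul (Continuous.div (by fun_prop) (by fun_prop) hmax) (hφ'c.comp ?_)
    exact continuous_pi fun i => Continuous.div (by fun_prop) (by fun_prop) hmax
  have hfG : ∀ x, f (G x) * Real.exp (-∑ i, x i) = φ' x := fun x => by
    have hpos : 0 < Real.exp (-∑ i, x i) := Real.exp_pos _
    have hgn : G x none = Real.exp (-∑ i, x i) := by simp [G]
    simp only [f, hgn]
    rcases le_or_gt (e0 / 2) (Real.exp (-∑ i, x i)) with h | h
    · rw [max_eq_left h]
      have e1 : (fun i => G x (some i) / Real.exp (-∑ i, x i)) = x := by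
        ext i; simp only [G, Option.elim]; field_simp
      rw [e1]
      by_cases h0 : φ' x = 0
      · simp [h0]
      · have hx : ‖x‖ < R + 1 := by
          by_contra hx
          exact h0 (hφ'0 x (not_lt.mp hx))
        have hsum : ∑ i, x i ≤ n * (R + 1) := by
          refine (Finset.sum_le_card_nsmul _ _ (R + 1) fun i _ => ?_).trans_eq
            (by rw [card_univ, Fintype.card_fin, nsmul_eq_mul])
          exact (le_abs_self _).trans ((norm_le_pi_norm x i).trans hx.le)
        have h1 : e0 ≤ Real.exp (-∑ i, x i) := Real.exp_le_exp.mpr (by linarith)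
        have h2 : 1 ≤ 2 * Real.exp (-∑ i, x i) / e0 - 1 := by
          rw [le_sub_iff_add_le, le_div_iff₀ he0]; linarith
        rw [min_eq_left h2, max_eq_right zero_le_one]
        field_simp
    · have h1 : 2 * Real.exp (-∑ i, x i) / e0 - 1 ≤ 0 := by
        rw [sub_nonpos, div_le_one he0]; linarith
      rw [max_eq_left ((min_le_right _ _).trans h1), zero_div, zero_mul, zero_mul]
      refine (hφ'0 x ?_).symm
      by_contra hx
      push Not at hx
      have hsum : ∑ i, x i ≤ n * (R + 1) := by
        refine (Finset.sum_le_card_nsmul _ _ (R + 1) fun i _ => ?_).trans_eq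
            (by rw [card_univ, Fintype.card_fin, nsmul_eq_mul])
        exact (le_abs_self _).trans ((norm_le_pi_norm x i).trans hx.le)
      have h1 : e0 ≤ Real.exp (-∑ i, x i) := Real.exp_le_exp.mpr (by linarith)
      linarith
  obtain ⟨q, hq⟩ := exists_polynomial_near hf (isCompact_closedBall (0 : Option (Fin n) → ℝ) B)
    (ε := ε / (2 * D)) (by positivity)
  -- A polynomial in the coordinates `e^{-∑xᵢ}`, `xᵢ e^{-∑xᵢ}` has a constant term, which is not in
  -- `expPoly`; the additional factor `b` takes care of it.
  have hmem : ∀ (q : MvPolynomial (Option (Fin n)) ℝ) (b : (Fin n → ℝ) → ℝ), b ∈ expPoly n →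
      (fun x => MvPolynomial.eval (G x) q * b x) ∈ expPoly n := by
    intro q
    induction q using MvPolynomial.induction_on with
    | C a => intro b hb; simp only [MvPolynomial.eval_C]; exact Submodule.smul_mem _ a hb
    | add p q hp hq =>
      intro b hb
      simp_rw [map_add, add_mul]
      exact add_mem (hp b hb) (hq b hb)
    | mul_X p o hp =>
      intro b hb
      simp_rw [map_mul, MvPolynomial.eval_X, mul_assoc]
      refine hp (fun x => G x o * b x) (expPoly_mul (a := fun x => G x o) ?_ hb)
      cases o with
      | none => simpa [G] using mem_expPoly (n := n) 1 one_pos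
      | some i => simpa [G] using mem_expPoly (n := n) (MvPolynomial.X i) one_pos
  refine ⟨_, hmem q (fun x => Real.exp (-∑ i, x i))
    (by simpa using mem_expPoly (n := n) 1 one_pos), fun x hx => ?_⟩
  have h1 : |φ' x - MvPolynomial.eval (G x) q * Real.exp (-∑ i, x i)| ≤
      ε / (2 * D) * Real.exp (-∑ i, x i) := by
    rw [← hfG x, ← sub_mul, abs_mul, Real.abs_exp, abs_sub_comm]
    gcongr
    exact (hq _ (hG x hx)).le
  calc _ ≤ (1 + ‖x‖) ^ m * (|φ x - φ' x| +
        |φ' x - MvPolynomial.eval (G x) q * Real.exp (-∑ i, x i)|) := by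
        gcongr; exact abs_sub_le _ _ _
    _ ≤ (1 + ‖x‖) ^ m * |φ x - φ' x| +
        (1 + ‖x‖) ^ m * (ε / (2 * D) * Real.exp (-∑ i, x i)) := by
        rw [mul_add]; gcongr
    _ = (1 + ‖x‖) ^ m * |φ x - φ' x| +
        ε / (2 * D) * ((1 + ‖x‖) ^ m * Real.exp (-∑ i, x i)) := by ring
    _ ≤ ε / 2 + ε / (2 * D) * D := by gcongr; exacts [hφ' x, hD x hx]
    _ = ε := by field_simp; ring

/-- A real tempered distribution that annihilates every Schwartz function agreeing on the
orthant with a member of `expPoly` is zero. -/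
theorem eq_zero_of_expPoly {n : ℕ} (S : SchwartzMap (Fin n → ℝ) ℝ →L[ℝ] ℂ)
    (hS : ∀ (ψ : SchwartzMap (Fin n → ℝ) ℝ), ∀ a ∈ expPoly n, (∀ x ∈ Rplus n, ψ x = a x) →
      S ψ = 0) (φ : SchwartzMap (Fin n → ℝ) ℝ) : S φ = 0 := by
  refine eq_zero_of_moll S (fun η hη φ => ?_) φ
  obtain ⟨s, C, hC, hb⟩ := clm_bound S
  have hK : ∀ m : ℕ × ℕ, ∃ K, 0 ≤ K ∧ ∀ F : (Fin n → ℝ) → ℝ, Continuous F → ∀ M,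
      (∀ x, (1 + ‖x‖) ^ m.1 * |F x| ≤ M) →
        ∀ x, ‖x‖ ^ m.1 * ‖iteratedFDeriv ℝ m.2 (moll η F) x‖ ≤ K * M :=
    fun m => moll_bound η hη m.1 m.2
  choose K hK0 hK using hK
  set A := s.sup Prod.fst
  have key : ∀ ε : ℝ, 0 < ε → ‖S (mollS η hη (rapid_schwartz φ))‖ ≤ C * ((∑ m ∈ s, K m) * ε) := by
    intro ε hε
    obtain ⟨a, ha, hae⟩ := expPoly_dense (rapid_schwartz φ) A hε
    have hF : Rapid fun x => cut x * (φ x - a x) := by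
      refine rapid_cut (φ.continuous.sub (expPoly_continuous ha)) fun m => ?_
      obtain ⟨c, hc⟩ := (rapid_schwartz φ).decay m
      obtain ⟨d, hd⟩ := expPoly_bound ha m
      refine ⟨c + d, fun x hx => ?_⟩
      calc _ ≤ (1 + ‖x‖) ^ m * (|φ x| + |a x|) := by gcongr; exact abs_sub _ _
        _ ≤ _ := by rw [mul_add]; exact add_le_add (hc x) (hd x hx)
    -- Replacing `φ` by `φ - cut (φ - a)`, which is `a` near the orthant, changes the mollification by
    -- a Schwartz-small amount and makes it a member of `expPoly` on the orthant.
    obtain ⟨a', ha', hm⟩ := moll_expPoly η hη ha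
    have h0 : S (mollS η hη (rapid_schwartz φ) - mollS η hη hF) = 0 := by
      refine hS _ a' ha' fun x hx => ?_
      rw [← hm (fun x => φ x - cut x * (φ x - a x)) (fun x hx => by rw [cut_eq_one hx]; ring) x hx,
        sub_apply, mollS_apply, mollS_apply, moll_apply, moll_apply, moll_apply,
        ← integral_sub]
      · simp only [sub_mul]
      · have := φ.continuous
        have h : Continuous fun t => φ (x - t) := by fun_prop
        simpa only [smul_eq_mul, mul_comm] using integrable_mul_normed η h
      · have h : Continuous fun t => cut (x - t) * (φ (x - t) - a (x - t)) :=
          hF.cont.comp (continuous_const.sub continuous_id)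
        simpa only [smul_eq_mul, mul_comm] using integrable_mul_normed η h
    rw [map_sub, sub_eq_zero] at h0
    rw [h0]
    refine hb _ _ (mul_nonneg (Finset.sum_nonneg fun m _ => hK0 m) hε.le) fun m hms x => ?_
    have hA : m.1 ≤ A := Finset.le_sup (f := Prod.fst) hms
    refine (hK m _ hF.cont ε (fun x => ?_) x).trans ?_
    · refine (mul_le_mul_of_nonneg_right (pow_le_pow_right₀ ?_ hA) (abs_nonneg _)).trans
        (cut_bound hae hε.le x)
      linarith [norm_nonneg x]
    · exact mul_le_mul_of_nonneg_right
        (Finset.single_le_sum (f := K) (fun m _ => hK0 m) hms) hε.le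
  have hlim : Filter.Tendsto (fun ε : ℝ => C * ((∑ m ∈ s, K m) * ε))
      (nhdsWithin 0 (Set.Ioi 0)) (nhds 0) := by
    have : Continuous fun ε : ℝ => C * ((∑ m ∈ s, K m) * ε) := by fun_prop
    simpa using (this.tendsto 0).mono_left nhdsWithin_le_nhds
  have := ge_of_tendsto hlim (b := ‖S (mollS η hη (rapid_schwartz φ))‖) (by
    filter_upwards [self_mem_nhdsWithin] with ε hε using key ε hε)
  exact norm_le_zero_iff.mp this

/-! ### Uniqueness of distributions satisfying the recursion -/

/-- A Schwartz function that equals `e^{-c∑x}` on the orthant: mollification of a cut-off element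
of `expPoly`, which stays of this form on the orthant, rescaled. -/
lemma exists_test (n : ℕ) {c : ℝ} (hc : 0 < c) :
    ∃ w : SchwartzMap (Fin n → ℝ) ℝ, ∀ x ∈ Rplus n, w x = Real.exp (-(c * ∑ i, x i)) := by
  let η : ContDiffBump (0 : Fin n → ℝ) := ⟨1/2, 1, by norm_num, by norm_num⟩
  have hη : η.rOut ≤ 1 := le_rfl
  have ha : (fun x : Fin n → ℝ => Real.exp (-(c * ∑ i, x i))) ∈ expPoly n := by
    have := mem_expPoly (1 : MvPolynomial (Fin n) ℝ) hc
    simpa using this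
  have hF := rapid_cut (expPoly_continuous ha) (expPoly_bound ha)
  set κ := ∫ t, Real.exp (c * ∑ i, t i) * η.normed volume t with hκ
  have hκ0 : 0 < κ := by
    have hcont : Continuous fun t : Fin n → ℝ => Real.exp (c * ∑ i, t i) := by fun_prop
    have hi := integrable_mul_normed η hcont
    simp only [smul_eq_mul, mul_comm] at hi
    rw [hκ]
    refine (integral_pos_iff_support_of_nonneg
      (fun t => mul_nonneg (Real.exp_pos _).le (η.nonneg_normed t)) 
      (by simpa only [mul_comm] using hi)).2 ?_
    have : Function.support (fun t : Fin n → ℝ => Real.exp (c * ∑ i, t i) * η.normed volume t)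
        = Metric.ball 0 η.rOut := by
      rw [← η.support_normed_eq (μ := volume)]
      ext t
      simp [(Real.exp_pos _).ne']
    rw [this]
    exact Metric.measure_ball_pos _ _ η.rOut_pos
  -- Mollifying `e^{-c∑x}` multiplies it by the constant `κ`.
  refine ⟨κ⁻¹ • mollS η hη hF, fun x hx => ?_⟩
  have h : mollS η hη hF x = Real.exp (-(c * ∑ i, x i)) * κ := by
    rw [mollS_apply, moll_apply, hκ, ← integral_const_mul]
    refine integral_congr_ae (.of_forall fun t => ?_)
    dsimp only
    rcases le_or_gt η.rOut ‖t‖ with ht | ht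
    · rw [normed_eq_zero η ht]; simp
    · rw [cut_eq_one, one_mul, ← mul_assoc, ← Real.exp_add]
      · congr 2
        simp only [Pi.sub_apply, Finset.sum_sub_distrib]
        ring
      · intro i
        have h1 := (norm_le_pi_norm t i).trans (ht.le.trans hη)
        rw [Real.norm_eq_abs, abs_le] at h1
        have h2 : 0 < x i := hx i
        simp only [Pi.sub_apply]
        linarith
  rw [smul_apply, h, smul_eq_mul]
  field_simp

lemma growth_eval {n : ℕ} (p : MvPolynomial (Fin n) ℝ) :
    Function.HasTemperateGrowth fun x : Fin n → ℝ => MvPolynomial.eval x p := by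
  induction p using MvPolynomial.induction_on with
  | C a => simp
  | add p q hp hq => simp only [map_add]; exact hp.add hq
  | mul_X p i hp =>
    have h : Function.HasTemperateGrowth fun x : Fin n → ℝ => x i :=
      (ContinuousLinearMap.proj (R := ℝ) (φ := fun _ : Fin n => ℝ) i).hasTemperateGrowth
    simp only [map_mul, MvPolynomial.eval_X]
    exact hp.mul h

/-- The product of a Schwartz function with a polynomial. -/
noncomputable def pmul {n : ℕ} (w : SchwartzMap (Fin n → ℝ) ℝ) (p : MvPolynomial (Fin n) ℝ) :
    SchwartzMap (Fin n → ℝ) ℝ :=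
  SchwartzMap.smulLeftCLM ℝ (fun x => MvPolynomial.eval x p) w

lemma pmul_apply {n : ℕ} (w : SchwartzMap (Fin n → ℝ) ℝ) (p : MvPolynomial (Fin n) ℝ)
    (x : Fin n → ℝ) : pmul w p x = MvPolynomial.eval x p * w x := by
  rw [pmul, SchwartzMap.smulLeftCLM_apply_apply (growth_eval p), smul_eq_mul]

lemma pmul_add {n : ℕ} (w : SchwartzMap (Fin n → ℝ) ℝ) (p q : MvPolynomial (Fin n) ℝ) :
    pmul w (p + q) = pmul w p + pmul w q := by
  ext x; simp [pmul_apply, add_mul]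

lemma pmul_C {n : ℕ} (w : SchwartzMap (Fin n → ℝ) ℝ) (a : ℝ) :
    pmul w (MvPolynomial.C a) = a • w := by
  ext x; simp [pmul_apply]

open MvPolynomial in
/-- The difference `p - s_{ij}p` is divisible by `x_i - x_j`. -/
lemma exists_quotient {n : ℕ} (i j : Fin n) (p : MvPolynomial (Fin n) ℝ) :
    ∃ d, p - rename (Equiv.swap i j) p = (X i - X j) * d := by
  induction p using MvPolynomial.induction_on with
  | C a => exact ⟨0, by simp⟩
  | add p q hp hq =>
    obtain ⟨d, hd⟩ := hp
    obtain ⟨e, he⟩ := hq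
    exact ⟨d + e, by rw [mul_add, ← hd, ← he, map_add]; ring⟩
  | mul_X p l hp =>
    obtain ⟨d, hd⟩ := hp
    have : ∃ e : MvPolynomial (Fin n) ℝ, X l - rename (Equiv.swap i j) (X l) = (X i - X j) * e := by
      rw [rename_X]
      by_cases h1 : l = i
      · subst h1; exact ⟨1, by simp⟩
      by_cases h2 : l = j
      · subst h2; exact ⟨-1, by simp⟩
      rw [Equiv.swap_apply_of_ne_of_ne h1 h2]
      exact ⟨0, by simp⟩
    obtain ⟨e, he⟩ := this
    refine ⟨d * X l + rename (Equiv.swap i j) p * e, ?_⟩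
    rw [map_mul]
    linear_combination X l * hd + rename (Equiv.swap i j) p * he

/-- The polynomial quotient `(x_i p - x_j s_{ij}p) / (x_i - x_j)`, written as
`p + x_j (p - s_{ij}p) / (x_i - x_j)`. -/
noncomputable def quo {n : ℕ} (i j : Fin n) (p : MvPolynomial (Fin n) ℝ) :
    MvPolynomial (Fin n) ℝ :=
  p + MvPolynomial.X j * (exists_quotient i j p).choose

lemma eval_quo {n : ℕ} (i j : Fin n) (p : MvPolynomial (Fin n) ℝ) (x : Fin n → ℝ) :
    x i * MvPolynomial.eval x p - x j * MvPolynomial.eval (fun l => x (Equiv.swap i j l)) p =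
      (x i - x j) * MvPolynomial.eval x (quo i j p) := by
  have h := congrArg (MvPolynomial.eval x) (exists_quotient i j p).choose_spec
  rw [map_sub, MvPolynomial.eval_rename, map_mul] at h
  simp only [map_sub, MvPolynomial.eval_X] at h
  rw [quo, map_add, map_mul, MvPolynomial.eval_X]
  change _ - MvPolynomial.eval (fun l => x (Equiv.swap i j l)) p = _ at h
  linear_combination x j * h

lemma eval_quo_of_eq_zero {n : ℕ} (i j : Fin n) (p : MvPolynomial (Fin n) ℝ) {x : Fin n → ℝ}
    (hx : x j = 0) : MvPolynomial.eval x (quo i j p) = MvPolynomial.eval x p := by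
  simp [quo, hx]

open MvPolynomial in
lemma totalDegree_quo {n : ℕ} {i j : Fin n} (hij : i ≠ j) (p : MvPolynomial (Fin n) ℝ) :
    (quo i j p).totalDegree ≤ p.totalDegree := by
  set d := (exists_quotient i j p).choose with hd
  have h : p - rename (Equiv.swap i j) p = (X i - X j) * d :=
    (exists_quotient i j p).choose_spec
  refine (totalDegree_add _ _).trans (max_le le_rfl ?_)
  rw [← hd]
  by_cases h0 : d = 0
  · simp [h0]
  have hX : (X i - X j : MvPolynomial (Fin n) ℝ) ≠ 0 := by
    rw [sub_ne_zero]
    exact fun h => hij (X_injective h)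
  have h1 : (X i - X j : MvPolynomial (Fin n) ℝ).totalDegree = 1 := by
    refine le_antisymm ?_ ?_
    · refine (totalDegree_sub _ _).trans ?_
      simp
    · have : (Finsupp.single i 1 : Fin n →₀ ℕ) ∈ (X i - X j : MvPolynomial (Fin n) ℝ).support := by
        have hji : (Finsupp.single j 1 : Fin n →₀ ℕ) ≠ Finsupp.single i 1 := fun h =>
          hij (Finsupp.single_left_injective one_ne_zero h).symm
        simp [coeff_X, hji]
      simpa using le_totalDegree this
  have h2 := totalDegree_mul_of_isDomain hX h0
  rw [← h, h1] at h2
  have h3 := totalDegree_sub p (rename (Equiv.swap i j) p)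
  have h4 := totalDegree_rename_le (Equiv.swap i j) p
  have h5 := totalDegree_mul (X j) d
  rw [totalDegree_X] at h5
  omega

/-- The polynomial `α p + x_i ∂_i p + k ∑_{j≠i} quo i j p` on the right-hand side of the
recursion. -/
noncomputable def recPoly {n : ℕ} (k α : ℝ) (i : Fin n) (p : MvPolynomial (Fin n) ℝ) :
    MvPolynomial (Fin n) ℝ :=
  MvPolynomial.C α * p + MvPolynomial.X i * MvPolynomial.pderiv i p +
    MvPolynomial.C k * ∑ j ∈ ({i} : Finset (Fin n))ᶜ, quo i j p

open MvPolynomial in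
lemma totalDegree_recPoly {n : ℕ} (k α : ℝ) (i : Fin n) (m : Fin n →₀ ℕ) (a : ℝ) {D : ℕ}
    (hD : (monomial m a).totalDegree ≤ D) :
    (recPoly k α i (monomial m a)).totalDegree ≤ D := by
  have hC : ∀ (b : ℝ) (q : MvPolynomial (Fin n) ℝ), q.totalDegree ≤ D →
      (C b * q).totalDegree ≤ D := fun b q hq => by
    have := totalDegree_mul (C b) q
    rw [totalDegree_C] at this
    omega
  refine (totalDegree_add _ _).trans (max_le ((totalDegree_add _ _).trans (max_le ?_ ?_)) ?_)
  · exact hC _ _ hD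
  · rw [X_mul_pderiv_monomial]
    exact (totalDegree_smul_le _ _).trans hD
  · exact hC _ _ (totalDegree_finsetSum_le fun j hj =>
      (totalDegree_quo (by simpa [eq_comm] using hj) _).trans hD)

open MvPolynomial in
/-- The values on `p(x) e^{-c∑x}` are determined, by induction on the degree of `p`, by the
recursion and the value on `e^{-c∑x}`. Together with the density of these functions, a distribution
supported on the orthant that solves the recursion with zero initial values vanishes. -/
theorem eq_zero_of_recursion {n : ℕ} {k α : ℝ} (S : SchwartzMap (Fin n → ℝ) ℝ →L[ℝ] ℂ)
    (hz : ∀ ψ : SchwartzMap (Fin n → ℝ) ℝ, (∀ x ∈ Rplus n, ψ x = 0) → S ψ = 0)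
    (hbase : ∀ c : ℝ, 0 < c → ∀ w : SchwartzMap (Fin n → ℝ) ℝ,
      (∀ x ∈ Rplus n, w x = Real.exp (-(c * ∑ i, x i))) → S w = 0)
    (hrec : ∀ c : ℝ, 0 < c → ∀ w : SchwartzMap (Fin n → ℝ) ℝ,
      (∀ x ∈ Rplus n, w x = Real.exp (-(c * ∑ i, x i))) → ∀ i p,
        (c : ℂ) * S (pmul w (X i * p)) = S (pmul w (recPoly k α i p)))
    (φ : SchwartzMap (Fin n → ℝ) ℝ) : S φ = 0 := by
  have hpoly : ∀ c : ℝ, 0 < c → ∀ w : SchwartzMap (Fin n → ℝ) ℝ,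
      (∀ x ∈ Rplus n, w x = Real.exp (-(c * ∑ i, x i))) → ∀ (D : ℕ) (p : MvPolynomial (Fin n) ℝ),
        p.totalDegree ≤ D → S (pmul w p) = 0 := by
    intro c hc w hw D
    have hconst : ∀ a : ℝ, S (pmul w (C a)) = 0 := fun a => by
      rw [pmul_C, map_smul, hbase c hc w hw, smul_zero]
    have hsum : ∀ p : MvPolynomial (Fin n) ℝ,
        (∀ m ∈ p.support, S (pmul w (monomial m (coeff m p))) = 0) → S (pmul w p) = 0 := by
      intro p hp
      let L : MvPolynomial (Fin n) ℝ →+ ℂ :=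
        { toFun := fun p => S (pmul w p)
          map_zero' := by simpa using hconst 0
          map_add' := fun p q => by rw [pmul_add, map_add] }
      change L p = 0
      rw [p.as_sum, map_sum]
      exact Finset.sum_eq_zero hp
    induction D with
    | zero =>
      intro p hp
      rw [totalDegree_eq_zero_iff_eq_C.mp (Nat.le_zero.mp hp)]
      exact hconst _
    | succ D ih =>
      intro p hp
      refine hsum p fun m hm => ?_
      by_cases h0 : m = 0
      · rw [h0]; exact hconst _
      obtain ⟨i, hi⟩ := Finsupp.ne_iff.mp h0
      have hi1 : Finsupp.single i 1 ≤ m := by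
        rw [Finsupp.single_le_iff]
        exact Nat.one_le_iff_ne_zero.mpr hi
      -- A nonconstant monomial is `x_i` times one of lower degree, to which the recursion applies.
      obtain ⟨m', rfl⟩ := exists_add_of_le hi1
      have hX : (X i * monomial m' (coeff (Finsupp.single i 1 + m') p) : MvPolynomial (Fin n) ℝ) =
          monomial (Finsupp.single i 1 + m') (coeff (Finsupp.single i 1 + m') p) := by
        rw [X, monomial_mul, one_mul]
      have hdeg := le_totalDegree hm
      rw [Finsupp.sum_add_index' (by simp) (by simp), Finsupp.sum_single_index (by simp)] at hdeg
      have hd : (monomial m' (coeff (Finsupp.single i 1 + m') p)).totalDegree ≤ D := by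
        refine (totalDegree_monomial_le _ _).trans ?_
        change (m'.sum fun _ e => e) ≤ D
        omega
      have h := hrec c hc w hw i (monomial m' (coeff (Finsupp.single i 1 + m') p))
      rw [ih _ (totalDegree_recPoly k α i _ _ hd), hX] at h
      exact (mul_eq_zero.mp h).resolve_left (by exact_mod_cast hc.ne')
  refine eq_zero_of_expPoly S (fun ψ a ha hψ => ?_) φ
  have : ∃ ψ' : SchwartzMap (Fin n → ℝ) ℝ, (∀ x ∈ Rplus n, ψ' x = a x) ∧ S ψ' = 0 := by
    clear hψ
    refine Submodule.span_induction ?_ ⟨0, by simp⟩ ?_ ?_ ha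
    · rintro _ ⟨p, c, hc, rfl⟩
      obtain ⟨w, hw⟩ := exists_test n hc
      exact ⟨pmul w p, fun x hx => by rw [pmul_apply, hw x hx], hpoly c hc w hw _ p le_rfl⟩
    · rintro f g - - ⟨u, hu, hu0⟩ ⟨v, hv, hv0⟩
      exact ⟨u + v, fun x hx => by simp [hu x hx, hv x hx], by rw [map_add, hu0, hv0, add_zero]⟩
    · rintro b f - ⟨u, hu, hu0⟩
      exact ⟨b • u, fun x hx => by simp [hu x hx], by rw [map_smul, hu0, smul_zero]⟩
  obtain ⟨ψ', h1, h2⟩ := this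
  have h3 := hz (ψ - ψ') fun x hx => by rw [sub_apply, hψ x hx, h1 x hx, sub_self]
  rwa [map_sub, h2, sub_zero] at h3

/-! ### The recursion on the faces of the orthant -/

lemma PB.eval {m n : ℕ} {y : (Fin m → ℝ) → Fin n → ℝ} (hy : ∀ l, PB fun x => y x l)
    (p : MvPolynomial (Fin n) ℝ) : PB fun x => MvPolynomial.eval (y x) p := by
  induction p using MvPolynomial.induction_on with
  | C a => simpa using PB.const a
  | add p q hp hq => simpa using hp.add hq
  | mul_X p l hp => simpa using hp.mul (hy l)

open MvPolynomial in
lemma hasDerivAt_eval {n : ℕ} (p : MvPolynomial (Fin n) ℝ) (y : Fin n → ℝ) (i : Fin n) :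
    HasDerivAt (fun t => eval (Function.update y i t) p) (eval y (pderiv i p)) (y i) := by
  induction p using MvPolynomial.induction_on with
  | C a => simpa using hasDerivAt_const (y i) a
  | add p q hp hq => simp only [map_add]; exact hp.add hq
  | mul_X p l hp =>
    have hl : HasDerivAt (fun t => Function.update y i t l) (eval y (pderiv i (X l))) (y i) := by
      by_cases h : l = i
      · subst h; simpa using hasDerivAt_id' (y l)
      · have h1 : Pi.single (M := fun _ => MvPolynomial (Fin n) ℝ) i 1 l = 0 := by simp [h]
        simpa [Function.update_of_ne h, pderiv_X, h1] using hasDerivAt_const (y i) (y l)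
    have := hp.mul hl
    simp only [Function.update_eq_self] at this
    simp only [map_mul, eval_X, Derivation.leibniz, smul_eq_mul, map_add]
    refine (this.congr_deriv ?_)
    ring

/-- The point `σ·(x₁,…,x_r,0,…,0)`. -/
noncomputable def face {n r : ℕ} (σ : Equiv.Perm (Fin n)) (x : Fin r → ℝ) : Fin n → ℝ :=
  fun l => embOrth n r x (σ l)

lemma face_of_lt {n r : ℕ} (σ : Equiv.Perm (Fin n)) (x : Fin r → ℝ) {l : Fin n}
    (h : (σ l : ℕ) < r) : face σ x l = x ⟨σ l, h⟩ := by simp [face, embOrth, h]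

lemma face_of_le {n r : ℕ} (σ : Equiv.Perm (Fin n)) (x : Fin r → ℝ) {l : Fin n}
    (h : r ≤ (σ l : ℕ)) : face σ x l = 0 := by simp [face, embOrth, h]

lemma face_pos {n r : ℕ} (σ : Equiv.Perm (Fin n)) {x : Fin r → ℝ} (hx : x ∈ Rplus r) {l : Fin n}
    (h : (σ l : ℕ) < r) : 0 < face σ x l := by
  rw [face_of_lt σ x h]; exact hx _

lemma face_PB {n r : ℕ} (σ : Equiv.Perm (Fin n)) (l : Fin n) :
    PB fun x : Fin r → ℝ => face σ x l := by
  by_cases h : (σ l : ℕ) < r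
  · simpa only [face_of_lt σ _ h] using PB.coord _
  · simpa only [face_of_le σ _ (not_lt.mp h)] using PB.const 0

lemma face_mul_swap {n r : ℕ} (σ : Equiv.Perm (Fin n)) (x : Fin r → ℝ) (i j : Fin n) :
    face (σ * Equiv.swap i j) x = fun l => face σ x (Equiv.swap i j l) := rfl

lemma face_update {n r : ℕ} (σ : Equiv.Perm (Fin n)) (x : Fin r → ℝ) {i : Fin n}
    (h : (σ i : ℕ) < r) (t : ℝ) :
    face σ (Function.update x ⟨σ i, h⟩ t) = Function.update (face σ x) i t := by
  funext l
  by_cases hl : l = i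
  · subst hl; simp [face_of_lt σ _ h]
  rw [Function.update_of_ne hl]
  by_cases hr : (σ l : ℕ) < r
  · rw [face_of_lt σ _ hr, face_of_lt σ _ hr, Function.update_of_ne]
    intro h1
    rw [Fin.mk.injEq] at h1
    exact hl (σ.injective (Fin.ext h1))
  · rw [face_of_le σ _ (not_lt.mp hr), face_of_le σ _ (not_lt.mp hr)]

lemma face_comp_swap {n r : ℕ} (σ : Equiv.Perm (Fin n)) (x : Fin r → ℝ) {i j : Fin n}
    (hi : (σ i : ℕ) < r) (hj : (σ j : ℕ) < r) :
    face σ (fun b => x (Equiv.swap ⟨σ i, hi⟩ ⟨σ j, hj⟩ b)) =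
      fun l => face σ x (Equiv.swap i j l) := by
  funext l
  by_cases h1 : l = i
  · subst h1
    rw [Equiv.swap_apply_left, face_of_lt σ _ hi, face_of_lt σ _ hj, Equiv.swap_apply_left]
  by_cases h2 : l = j
  · subst h2
    rw [Equiv.swap_apply_right, face_of_lt σ _ hi, face_of_lt σ _ hj, Equiv.swap_apply_right]
  rw [Equiv.swap_apply_of_ne_of_ne h1 h2]
  by_cases hr : (σ l : ℕ) < r
  · rw [face_of_lt σ _ hr, face_of_lt σ _ hr, Equiv.swap_apply_of_ne_of_ne]
    · intro h; rw [Fin.mk.injEq] at h; exact h1 (σ.injective (Fin.ext h))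
    · intro h; rw [Fin.mk.injEq] at h; exact h2 (σ.injective (Fin.ext h))
  · rw [face_of_le σ _ (not_lt.mp hr), face_of_le σ _ (not_lt.mp hr)]

/-- The number of coordinates vanishing on a face. -/
lemma card_face {n r : ℕ} (hrn : r ≤ n) (σ : Equiv.Perm (Fin n)) :
    (#{j : Fin n | r ≤ (σ j : ℕ)} : ℝ) = n - r := by
  have h : #{j : Fin n | r ≤ (σ j : ℕ)} = #{j : Fin n | r ≤ (j : ℕ)} :=
    Finset.card_equiv σ (by simp)
  have h2 : #{j : Fin n | (j : ℕ) < r} = r := by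
    have := Fin.card_filter_val_lt (n := n) (m := r)
    simpa [hrn] using this
  have h3 := Finset.card_filter_add_card_filter_not (s := (univ : Finset (Fin n)))
    (fun j : Fin n => (j : ℕ) < r)
  simp only [not_lt, card_univ, Fintype.card_fin] at h3
  rw [h, eq_sub_iff_add_eq, ← Nat.cast_add]
  congr 1
  omega

/-- The integral of `p(x) e^{-c∑x}` against the Riesz-type density on the face `σ`. -/
noncomputable def J {n : ℕ} (r : ℕ) (k α c : ℝ) (σ : Equiv.Perm (Fin n))
    (p : MvPolynomial (Fin n) ℝ) : ℝ :=
  ∫ x in Rplus r, MvPolynomial.eval (face σ x) p * rho r k α c 0 x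

open MvPolynomial in
/-- The recursion along a coordinate that does not vanish on the face. Each of the `n - r`
vanishing coordinates contributes `k p`, which shifts the parameter of `recPoly`. -/
lemma J_rec {n r : ℕ} (hrn : r ≤ n) {k α c : ℝ} (hk : 0 < k) (hα : 0 < α) (hc : 0 < c)
    (σ : Equiv.Perm (Fin n)) {i : Fin n} (hi : (σ i : ℕ) < r) (p : MvPolynomial (Fin n) ℝ) :
    c * J r k α c σ (X i * p) = J r k α c σ (recPoly k (α - k * (n - r)) i p) := by
  set a : Fin r := ⟨σ i, hi⟩ with ha
  set e : Fin r → Fin n := fun b => σ.symm (Fin.castLE hrn b) with he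
  have hσe : ∀ b, σ (e b) = Fin.castLE hrn b := fun b => by simp [he]
  have hlt : ∀ b, (σ (e b) : ℕ) < r := fun b => by rw [hσe]; exact b.2
  have hmk : ∀ b, (⟨σ (e b), hlt b⟩ : Fin r) = b := fun b => by
    ext; simp [hσe]
  have hea : e a = i := by
    rw [← σ.injective.eq_iff, hσe]; ext; simp [ha]
  have hinj : Function.Injective e := fun b b' h => by
    rw [← hmk b, ← hmk b']; simp [h]
  have hswap : ∀ b (x : Fin r → ℝ), face σ (fun l => x (Equiv.swap a b l)) =
      fun l => face σ x (Equiv.swap i (e b) l) := fun b x => by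
    have := face_comp_swap σ x hi (hlt b)
    rwa [hmk] at this
  have hpb : ∀ q : MvPolynomial (Fin n) ℝ, PB fun x : Fin r → ℝ => eval (face σ x) q :=
    fun q => PB.eval (fun l => face_PB σ l) q
  have hrec := recursion hk hα hc a (f := fun x => eval (face σ x) p)
    (f' := fun x => eval (face σ x) (pderiv i p)) (q := fun b x => eval (face σ x) (quo i (e b) p))
    (hpb p) (hpb _) (fun b => hpb _)
    (fun b => by
      simp only [hswap]
      exact PB.eval (y := fun x l => face σ x (Equiv.swap i (e b) l)) (fun l => face_PB σ _) p)
    (fun x => by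
      have := hasDerivAt_eval p (face σ x) i
      simp only [← face_update σ x hi] at this
      rwa [face_of_lt σ x hi] at this)
    (fun b _ x => by
      have h := eval_quo i (e b) p (face σ x)
      rw [face_of_lt σ x hi, face_of_lt σ x (hlt b), hmk] at h
      rw [hswap]
      exact h)
  have h1 : ∀ x : Fin r → ℝ, eval (face σ x) (X i * p) = x a * eval (face σ x) p := fun x => by
    rw [map_mul, eval_X, face_of_lt σ x hi]
  simp only [J, h1]
  rw [hrec]
  congr 1
  funext x
  congr 1
  have hsum : ∑ j ∈ ({i} : Finset (Fin n))ᶜ, eval (face σ x) (quo i j p) =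
      (∑ b ∈ ({a} : Finset (Fin r))ᶜ, eval (face σ x) (quo i (e b) p)) +
        (n - r) * eval (face σ x) p := by
    rw [← Finset.sum_filter_add_sum_filter_not _ (fun j : Fin n => (σ j : ℕ) < r)]
    congr 1
    · have : ({j ∈ ({i} : Finset (Fin n))ᶜ | (σ j : ℕ) < r} : Finset (Fin n)) =
          (({a} : Finset (Fin r))ᶜ).image e := by
        ext j
        simp only [mem_filter, mem_compl, mem_singleton, mem_image]
        constructor
        · rintro ⟨h, h'⟩
          have h2 : e ⟨σ j, h'⟩ = j := by
            rw [← σ.injective.eq_iff, hσe]; ext; simp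
          exact ⟨⟨σ j, h'⟩, fun h3 => h (by rw [← h2, h3, hea]), h2⟩
        · rintro ⟨b, hb, rfl⟩
          exact ⟨fun h => hb (hinj (h.trans hea.symm)), hlt b⟩
      rw [this, Finset.sum_image fun _ _ _ _ h => hinj h]
    · rw [← card_face hrn σ, ← nsmul_eq_mul, ← Finset.sum_const]
      have : ({j ∈ ({i} : Finset (Fin n))ᶜ | ¬ (σ j : ℕ) < r} : Finset (Fin n)) =
          ({j : Fin n | r ≤ (σ j : ℕ)} : Finset (Fin n)) := by
        ext j
        simp only [mem_filter, mem_compl, mem_singleton, mem_univ, true_and, not_lt]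
        refine ⟨fun h => h.2, fun h => ⟨?_, h⟩⟩
        rintro rfl
        omega
      rw [this]
      refine Finset.sum_congr rfl fun j hj => eval_quo_of_eq_zero i j p (face_of_le σ x ?_)
      simpa using hj
  simp only [recPoly, map_add, map_mul, eval_C, eval_X, map_sum, hsum, face_of_lt σ x hi]
  ring

open MvPolynomial in
/-- The right-hand side of the recursion along a coordinate that vanishes on the face: the
quotients by the non-vanishing coordinates move the integral to neighbouring faces. -/
lemma J_recPoly_of_le {n r : ℕ} (hrn : r ≤ n) {k α c : ℝ} (hk : 0 < k) (hα : 0 < α) (hc : 0 < c)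
    (σ : Equiv.Perm (Fin n)) {i : Fin n} (hi : r ≤ (σ i : ℕ)) (p : MvPolynomial (Fin n) ℝ) :
    J r k α c σ (recPoly k (k * (r - n + 1)) i p) =
      k * ∑ j ∈ {j : Fin n | (σ j : ℕ) < r}, J r k α c (σ * Equiv.swap i j) p := by
  have hpb : ∀ (τ : Equiv.Perm (Fin n)) (q : MvPolynomial (Fin n) ℝ),
      PB fun x : Fin r → ℝ => eval (face τ x) q :=
    fun τ q => PB.eval (fun l => face_PB τ l) q
  simp only [J]
  rw [← integral_finsetSum _ fun j _ => (hpb (σ * Equiv.swap i j) p).integrable hk hα hc le_rfl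
    zero_le_one, ← integral_const_mul]
  refine setIntegral_congr_fun (measurableSet_Rplus r) fun x hx => ?_
  rw [← Finset.sum_mul, ← mul_assoc]
  congr 1
  have hsum : ∑ j ∈ ({i} : Finset (Fin n))ᶜ, eval (face σ x) (quo i j p) =
      (∑ j ∈ {j : Fin n | (σ j : ℕ) < r}, eval (face (σ * Equiv.swap i j) x) p) +
        (n - r - 1) * eval (face σ x) p := by
    rw [← Finset.sum_filter_add_sum_filter_not _ (fun j : Fin n => (σ j : ℕ) < r)]
    congr 1
    · have : ({j ∈ ({i} : Finset (Fin n))ᶜ | (σ j : ℕ) < r} : Finset (Fin n)) =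
          ({j : Fin n | (σ j : ℕ) < r} : Finset (Fin n)) := by
        ext j
        simp only [mem_filter, mem_compl, mem_singleton, mem_univ, true_and]
        refine ⟨fun h => h.2, fun h => ⟨?_, h⟩⟩
        rintro rfl
        omega
      rw [this]
      refine Finset.sum_congr rfl fun j hj => ?_
      have hj' : (σ j : ℕ) < r := by simpa using hj
      have h := eval_quo i j p (face σ x)
      rw [face_of_le σ x hi] at h
      rw [face_mul_swap]
      exact mul_left_cancel₀ (face_pos σ hx hj').ne' (by linear_combination h)
    · have : ({j ∈ ({i} : Finset (Fin n))ᶜ | ¬ (σ j : ℕ) < r} : Finset (Fin n)) =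
          ({j : Fin n | r ≤ (σ j : ℕ)} : Finset (Fin n)).erase i := by
        ext j
        simp only [mem_filter, mem_compl, mem_singleton, mem_univ, true_and, not_lt, mem_erase]
      rw [this, ← card_face hrn σ, Finset.sum_congr rfl (g := fun _ => eval (face σ x) p),
        Finset.sum_const, nsmul_eq_mul, Finset.cast_card_erase_of_mem (by simpa using hi)]
      intro j hj
      refine eval_quo_of_eq_zero i j p (face_of_le σ x ?_)
      simp only [mem_erase, mem_filter, mem_univ, true_and] at hj
      exact hj.2
  simp only [recPoly, map_add, map_mul, eval_C, eval_X, map_sum, hsum, face_of_le σ x hi]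
  ring

open MvPolynomial in
lemma J_add {n r : ℕ} {k α c : ℝ} (hk : 0 < k) (hα : 0 < α) (hc : 0 < c)
    (σ : Equiv.Perm (Fin n)) (p q : MvPolynomial (Fin n) ℝ) :
    J r k α c σ (p + q) = J r k α c σ p + J r k α c σ q := by
  have hpb : ∀ q : MvPolynomial (Fin n) ℝ, PB fun x : Fin r → ℝ => eval (face σ x) q :=
    fun q => PB.eval (fun l => face_PB σ l) q
  simp only [J]
  rw [← integral_add ((hpb p).integrable hk hα hc le_rfl zero_le_one)
    ((hpb q).integrable hk hα hc le_rfl zero_le_one)]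
  simp only [map_add, add_mul]

open MvPolynomial in
lemma J_C_mul {n r : ℕ} {k α c : ℝ} (σ : Equiv.Perm (Fin n)) (a : ℝ)
    (p : MvPolynomial (Fin n) ℝ) : J r k α c σ (C a * p) = a * J r k α c σ p := by
  simp only [J, map_mul, eval_C, mul_assoc]
  rw [integral_const_mul]

lemma recPoly_eq {n : ℕ} (k α β : ℝ) (i : Fin n) (p : MvPolynomial (Fin n) ℝ) :
    recPoly k α i p = MvPolynomial.C (α - β) * p + recPoly k β i p := by
  simp only [recPoly, map_sub]
  ring

open MvPolynomial in
/-- Summed over all faces, the defects of the recursion cancel. -/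
lemma sum_J_rec {n r : ℕ} (hrn : r ≤ n) {k c : ℝ} (hk : 0 < k) (hc : 0 < c)
    (i : Fin n) (p : MvPolynomial (Fin n) ℝ) :
    c * ∑ σ : Equiv.Perm (Fin n), J r k (k * (n - r + 1)) c σ (X i * p) =
      ∑ σ : Equiv.Perm (Fin n), J r k (k * (n - r + 1)) c σ (recPoly k (k * (r - n + 1)) i p) := by
  have hα : 0 < k * ((n : ℝ) - r + 1) := by
    have : (r : ℝ) ≤ n := by exact_mod_cast hrn
    exact mul_pos hk (by linarith)
  set α := k * ((n : ℝ) - r + 1) with hαd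
  -- The defect of the recursion on a single face: a multiple of the integral over the same face if
  -- `x_i` does not vanish there, and minus a sum over adjacent faces if it does.
  have h1 : ∀ σ : Equiv.Perm (Fin n), c * J r k α c σ (X i * p) =
      J r k α c σ (recPoly k (k * (r - n + 1)) i p) +
        (k * ((if (σ i : ℕ) < r then ∑ j ∈ {j : Fin n | r ≤ (σ j : ℕ)}, J r k α c σ p else 0)
          - (if r ≤ (σ i : ℕ) then
            ∑ j ∈ {j : Fin n | (σ j : ℕ) < r}, J r k α c (σ * Equiv.swap i j) p else 0))) := by
    intro σ
    by_cases hi : (σ i : ℕ) < r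
    · rw [if_pos hi, if_neg (not_le.mpr hi), J_rec hrn hk hα hc σ hi,
        recPoly_eq k _ (k * (r - n + 1)), J_add hk hα hc, J_C_mul, Finset.sum_const, nsmul_eq_mul,
        card_face hrn σ, hαd]
      ring
    · have hi' := not_lt.mp hi
      rw [if_neg hi, if_pos hi', J_recPoly_of_le hrn hk hα hc σ hi' p]
      have : J r k α c σ (X i * p) = 0 := by
        simp [J, face_of_le σ _ hi']
      rw [this]
      ring
  rw [Finset.mul_sum, Finset.sum_congr rfl fun σ _ => h1 σ, Finset.sum_add_distrib,
    ← Finset.mul_sum, Finset.sum_sub_distrib]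
  simp only [← Finset.sum_filter]
  simp only [Finset.sum_filter]
  -- The substitution `σ ↦ σ (i j)` matches the two kinds of defect.
  have h2 : (∑ σ : Equiv.Perm (Fin n), if (σ i : ℕ) < r then
      ∑ j : Fin n, (if r ≤ (σ j : ℕ) then J r k α c σ p else 0) else 0) =
      ∑ σ : Equiv.Perm (Fin n), if r ≤ (σ i : ℕ) then
      ∑ j : Fin n, (if (σ j : ℕ) < r then J r k α c (σ * Equiv.swap i j) p else 0) else 0 := by
    have e1 : ∀ (P : Prop) [Decidable P] (f : Fin n → ℝ), (if P then ∑ j, f j else 0) =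
        ∑ j, if P then f j else 0 := fun P _ f => by split_ifs <;> simp
    simp only [e1]
    rw [Finset.sum_comm, Finset.sum_comm (s := univ) (t := univ) (f := fun σ j => if r ≤ _ then _ else _)]
    refine Finset.sum_congr rfl fun j _ => ?_
    refine (Fintype.sum_equiv (Equiv.mulRight (Equiv.swap i j)) _ _ fun σ => ?_).symm
    simp only [Equiv.coe_mulRight, Equiv.Perm.mul_apply, Equiv.swap_apply_left,
      Equiv.swap_apply_right]
    split_ifs <;> rfl
  rw [h2, sub_self, mul_zero, add_zero]

/-! ### The recursion for the Riesz distributions -/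

/-- Real Schwartz functions as complex ones. -/
noncomputable def toC (n : ℕ) : SchwartzMap (Fin n → ℝ) ℝ →L[ℝ] SchwartzMap (Fin n → ℝ) ℂ :=
  SchwartzMap.postcompCLM Complex.ofRealCLM

lemma toC_apply {n : ℕ} (φ : SchwartzMap (Fin n → ℝ) ℝ) (x : Fin n → ℝ) :
    toC n φ x = (φ x : ℂ) := by
  rw [toC, SchwartzMap.postcompCLM_apply]; rfl

lemma face_one {n : ℕ} (x : Fin n → ℝ) : face (1 : Equiv.Perm (Fin n)) x = x := by
  funext l
  rw [face_of_lt (1 : Equiv.Perm (Fin n)) x (l := l) (by simp)]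
  rfl

lemma dnk_pos (n : ℕ) {k : ℝ} (hk : 0 < k) : 0 < dnk n k :=
  Finset.prod_pos fun j _ => div_pos (Real.Gamma_pos_of_pos (by positivity))
    (Real.Gamma_pos_of_pos (by positivity))

/-- Two entire functions that agree on a real ray are equal. -/
lemma eq_of_real_ray {f g : ℂ → ℂ} (hf : Differentiable ℂ f) (hg : Differentiable ℂ g) (b : ℝ)
    (h : ∀ t : ℝ, b < t → f t = g t) : f = g := by
  refine AnalyticOnNhd.eq_of_frequently_eq (z₀ := ((b + 1 : ℝ) : ℂ)) (fun z _ => hf.analyticAt z)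
    (fun z _ => hg.analyticAt z) ?_
  have h1 : Filter.Tendsto (fun t : ℝ => (t : ℂ)) (nhdsWithin (b + 1) (Set.Ioi (b + 1)))
      (nhdsWithin ((b + 1 : ℝ) : ℂ) {((b + 1 : ℝ) : ℂ)}ᶜ) := by
    refine tendsto_nhdsWithin_of_tendsto_nhds_of_eventually_within _ ?_ ?_
    · exact (Complex.continuous_ofReal.tendsto _).mono_left nhdsWithin_le_nhds
    · filter_upwards [self_mem_nhdsWithin] with t ht
      simp only [Set.mem_compl_iff, Set.mem_singleton_iff, Complex.ofReal_inj]
      exact ne_of_gt ht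
  refine h1.frequently (Filter.Eventually.frequently ?_)
  filter_upwards [self_mem_nhdsWithin] with t ht
  refine h t ?_
  have : b + 1 < t := ht
  linarith

/-- At `μ = α + k(n-1)` the multivariable Gamma function is the product occurring in the
Laguerre–Selberg integral. -/
lemma Gammank_eq (n : ℕ) (k α : ℝ) :
    Gammank n k ((α + k * ((n : ℝ) - 1) : ℝ) : ℂ) =
      ((∏ j ∈ range n, Real.Gamma (α + k * j) : ℝ) : ℂ) := by
  rw [Gammank, Complex.ofReal_prod, ← Finset.prod_range_reflect]
  refine Finset.prod_congr rfl fun j hj => ?_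
  rw [← Complex.Gamma_ofReal, ← Complex.ofReal_sub]
  congr 2
  have : j + 1 ≤ n := by simpa [Nat.succ_le_iff] using hj
  rw [Nat.sub_sub, Nat.cast_sub (by omega)]
  push_cast
  ring

section Riesz

variable {n : ℕ} {k : ℝ} {R : ℂ → (SchwartzMap (Fin n → ℝ) ℂ →L[ℂ] ℂ)}

/-- Every `R_μ` only sees the values of `φ` on the open orthant. -/
lemma riesz_vanish (hR : IsRieszFamily n k R) (μ : ℂ) {φ : SchwartzMap (Fin n → ℝ) ℂ}
    (hφ : ∀ x ∈ Rplus n, φ x = 0) : R μ φ = 0 := by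
  have := eq_of_real_ray (hR.1 φ) (g := fun _ => 0) (differentiable_const _) (k * ((n : ℝ) - 1))
    (fun t ht => by
      rw [hR.2 t (by simpa using ht) φ]
      rw [setIntegral_congr_fun (g := fun _ => 0) (measurableSet_Rplus n) fun x hx => by
        simp [hφ x hx]]
      simp)
  exact congrFun this μ

/-- In the range of the defining integral, the values of `R` on polynomials times `e^{-c∑x}` are
the integrals `J` for the full orthant. -/
lemma riesz_pmul (hR : IsRieszFamily n k R) {α c : ℝ} (hα : 0 < α)
    {w : SchwartzMap (Fin n → ℝ) ℝ} (hw : ∀ x ∈ Rplus n, w x = Real.exp (-(c * ∑ i, x i)))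
    (p : MvPolynomial (Fin n) ℝ) :
    R ((α + k * ((n : ℝ) - 1) : ℝ) : ℂ) (toC n (pmul w p)) =
      ((dnk n k * ∏ j ∈ range n, Real.Gamma (α + k * j) : ℝ) : ℂ)⁻¹ * (J n k α c 1 p : ℂ) := by
  rw [hR.2 _ (by rw [Complex.ofReal_re]; linarith), Gammank_eq, ← Complex.ofReal_mul]
  congr 1
  rw [J, ← integral_complex_ofReal]
  refine setIntegral_congr_fun (measurableSet_Rplus n) fun x hx => ?_
  have h1 : ∀ i, (x i : ℂ) ^ (((α + k * ((n : ℝ) - 1) : ℝ) : ℂ) -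
      ((k * ((n : ℝ) - 1) : ℝ) : ℂ) - 1) = ((x i ^ (α - 1) : ℝ) : ℂ) := fun i => by
    rw [Complex.ofReal_cpow (hx i).le]
    congr 1
    push_cast
    ring
  simp only [h1, toC_apply, pmul_apply, hw x hx, face_one, rho, vd_zero]
  rw [Finset.prod_mul_distrib, ← Real.exp_sum, Finset.sum_neg_distrib, ← Finset.mul_sum,
    ← Complex.ofReal_prod]
  push_cast
  ring

/-- The value `c^{-nμ}` of `R_μ` on `e^{-c∑x}`, by continuation from large `μ`. -/
lemma riesz_base (hk : 0 < k) (hR : IsRieszFamily n k R) (μ : ℂ) {c : ℝ} (hc : 0 < c)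
    {w : SchwartzMap (Fin n → ℝ) ℝ} (hw : ∀ x ∈ Rplus n, w x = Real.exp (-(c * ∑ i, x i))) :
    R μ (toC n w) = (c : ℂ) ^ (-(n * μ)) := by
  have hc' : (c : ℂ) ≠ 0 := by exact_mod_cast hc.ne'
  refine congrFun (eq_of_real_ray (hR.1 _) (g := fun μ => (c : ℂ) ^ (-(n * μ))) ?_
    (k * ((n : ℝ) - 1)) fun t ht => ?_) μ
  · intro z
    have : DifferentiableAt ℂ (fun μ : ℂ => -(n * μ)) z := by fun_prop
    exact this.const_cpow (Or.inl hc')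
  · have h := riesz_pmul hR (α := t - k * ((n : ℝ) - 1)) (by linarith) hw 1
    have h1 : pmul w 1 = w := by ext x; simp [pmul_apply]
    rw [h1, sub_add_cancel] at h
    rw [h, J]
    simp only [map_one, one_mul]
    rw [integral_rho n hk (by linarith) hc, sub_add_cancel]
    have hpos : 0 < dnk n k * ∏ j ∈ range n, Real.Gamma (t - k * ((n : ℝ) - 1) + k * j) :=
      mul_pos (dnk_pos n hk) (Finset.prod_pos fun j _ => Real.Gamma_pos_of_pos (by
        have : 0 < t - k * ((n : ℝ) - 1) := by linarith
        positivity))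
    have : ((dnk n k * ∏ j ∈ range n, Real.Gamma (t - k * ((n : ℝ) - 1) + k * j) : ℝ) : ℂ) ≠ 0 := by
      exact_mod_cast hpos.ne'
    rw [Complex.ofReal_mul (c ^ _), mul_comm (Complex.ofReal (c ^ _)), inv_mul_cancel_left₀ this,
      Complex.ofReal_cpow hc.le]
    push_cast
    rfl

/-- The recursion for `R_μ` at `μ = α + k(n-1)`, with no restriction on the real number `α`. -/
lemma riesz_rec (hk : 0 < k) (hR : IsRieszFamily n k R) (α : ℝ) {c : ℝ} (hc : 0 < c)
    {w : SchwartzMap (Fin n → ℝ) ℝ} (hw : ∀ x ∈ Rplus n, w x = Real.exp (-(c * ∑ i, x i)))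
    (i : Fin n) (p : MvPolynomial (Fin n) ℝ) :
    c * R ((α + k * ((n : ℝ) - 1) : ℝ) : ℂ) (toC n (pmul w (MvPolynomial.X i * p))) =
      R ((α + k * ((n : ℝ) - 1) : ℝ) : ℂ) (toC n (pmul w (recPoly k α i p))) := by
  -- The parameter is moved out of `recPoly` so that both sides are entire in it.
  have hsplit : ∀ (μ : ℂ) (β : ℝ), R μ (toC n (pmul w (recPoly k β i p))) =
      (β : ℂ) * R μ (toC n (pmul w p)) + R μ (toC n (pmul w (recPoly k 0 i p))) := by
    intro μ β
    have h1 : toC n (pmul w (recPoly k β i p)) =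
        (β : ℂ) • toC n (pmul w p) + toC n (pmul w (recPoly k 0 i p)) := by
      ext x
      rw [recPoly_eq k β 0]
      simp [toC_apply, pmul_apply]
      ring
    rw [h1, map_add, map_smul, smul_eq_mul]
  have key := eq_of_real_ray
    (f := fun μ => c * R μ (toC n (pmul w (MvPolynomial.X i * p))))
    (g := fun μ => (μ - ((k * ((n : ℝ) - 1) : ℝ) : ℂ)) * R μ (toC n (pmul w p)) +
      R μ (toC n (pmul w (recPoly k 0 i p))))
    ((differentiable_const _).mul (hR.1 _))
    (((differentiable_id.sub_const _).mul (hR.1 _)).add (hR.1 _)) (k * ((n : ℝ) - 1))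
    (fun t ht => by
      have hα : 0 < t - k * ((n : ℝ) - 1) := by linarith
      have hJ := J_rec (le_refl n) hk hα hc 1 (i := i) (by simp) p
      rw [sub_self, mul_zero, sub_zero] at hJ
      have h1 := riesz_pmul hR hα hw (MvPolynomial.X i * p)
      have h2 := riesz_pmul hR hα hw (recPoly k (t - k * ((n : ℝ) - 1)) i p)
      rw [sub_add_cancel] at h1 h2
      have h3 := hsplit t (t - k * ((n : ℝ) - 1))
      rw [Complex.ofReal_sub] at h3
      change (c : ℂ) * _ = _
      rw [← h3, h2, h1, ← hJ]
      push_cast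
      ring)
  have h := congrFun key ((α + k * ((n : ℝ) - 1) : ℝ) : ℂ)
  rw [h, hsplit _ α]
  push_cast
  ring

end Riesz

/-! ### The singular measures on the faces -/

lemma integrable_rpow_div {α : ℝ} (hα : 0 < α) {M : ℕ} (hM : α + 1 ≤ M) :
    IntegrableOn (fun t : ℝ => t ^ (α - 1) * ((1 + t) ^ M)⁻¹) (Set.Ioi 0) := by
  have hm : Measurable fun t : ℝ => t ^ (α - 1) * ((1 + t) ^ M)⁻¹ := by fun_prop
  rw [← Set.Ioc_union_Ioi_eq_Ioi zero_le_one]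
  refine IntegrableOn.union ?_ ?_
  · have h : IntegrableOn (fun t : ℝ => t ^ (α - 1)) (Set.Ioc 0 1) := by
      have := intervalIntegral.intervalIntegrable_rpow' (a := 0) (b := 1) (r := α - 1) (by linarith)
      rwa [intervalIntegrable_iff_integrableOn_Ioc_of_le zero_le_one] at this
    refine h.mono' hm.aestronglyMeasurable ?_
    filter_upwards [ae_restrict_mem measurableSet_Ioc] with t ht
    have h1 : (1 : ℝ) ≤ (1 + t) ^ M := one_le_pow₀ (by linarith [ht.1])
    have h2 := Real.rpow_nonneg ht.1.le (α - 1)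
    rw [Real.norm_eq_abs, abs_of_nonneg (by positivity)]
    exact mul_le_of_le_one_right h2 (inv_le_one_of_one_le₀ h1)
  · have h := integrableOn_Ioi_rpow_of_lt (a := -2) (by norm_num) zero_lt_one
    refine h.mono' hm.aestronglyMeasurable ?_
    filter_upwards [ae_restrict_mem measurableSet_Ioi] with t ht
    have ht1 : 1 < t := ht
    have ht0 : 0 < t := by linarith
    rw [Real.norm_eq_abs, abs_of_nonneg (by positivity)]
    calc t ^ (α - 1) * ((1 + t) ^ M)⁻¹ ≤ t ^ (α - 1) * (t ^ M)⁻¹ := by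
          gcongr; linarith
      _ = t ^ (α - 1 - M) := by
          rw [← Real.rpow_natCast, ← Real.rpow_neg ht0.le, ← Real.rpow_add ht0]; rfl
      _ ≤ t ^ (-2 : ℝ) := Real.rpow_le_rpow_of_exponent_le ht1.le (by linarith)

/-- The density `D(x)^{α-1} ω_k(x)` of the Riesz measure. -/
noncomputable def faceDens (r : ℕ) (k α : ℝ) (x : Fin r → ℝ) : ℝ :=
  (∏ i, x i) ^ (α - 1) * wk r k x

lemma measurable_dens (r : ℕ) (k α : ℝ) : Measurable (faceDens r k α) := by
  unfold faceDens wk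
  fun_prop

lemma faceDens_nonneg {r : ℕ} {k α : ℝ} {x : Fin r → ℝ} (hx : x ∈ Rplus r) : 0 ≤ faceDens r k α x :=
  mul_nonneg (Real.rpow_nonneg (Finset.prod_nonneg fun i _ => (hx i).le) _)
    (by rw [← vd_zero]; exact vd_nonneg le_rfl x)

lemma faceDens_mul_exp {r : ℕ} {k α c : ℝ} {x : Fin r → ℝ} (hx : x ∈ Rplus r) :
    faceDens r k α x * Real.exp (-(c * ∑ i, x i)) = rho r k α c 0 x := by
  rw [faceDens, rho, vd_zero, Finset.prod_mul_distrib, ← Real.exp_sum, Finset.sum_neg_distrib,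
    ← Finset.mul_sum, Real.finsetProd_rpow _ _ fun i _ => (hx i).le]
  ring

/-- The density on the face has temperate growth. -/
lemma integrable_dens {r : ℕ} {k α : ℝ} (hk : 0 < k) (hα : 0 < α) :
    ∃ m : ℕ, IntegrableOn (fun x => faceDens r k α x * ((1 + ‖x‖) ^ m)⁻¹) (Rplus r) := by
  obtain ⟨N, hN⟩ := vd_le (n := r) hk
  set M := ⌈α + 1⌉₊
  have hM : α + 1 ≤ M := Nat.le_ceil _
  refine ⟨r * (N + M), ?_⟩
  have hprod : IntegrableOn (fun x : Fin r → ℝ => ∏ i, (x i ^ (α - 1) * ((1 + x i) ^ M)⁻¹))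
      (Rplus r) := by
    rw [IntegrableOn, restrict_Rplus]
    exact Integrable.fintype_prod fun i => integrable_rpow_div hα hM
  refine hprod.mono' ?_ ?_
  · exact ((measurable_dens r k α).mul (by fun_prop)).aestronglyMeasurable
  filter_upwards [ae_restrict_mem (measurableSet_Rplus r)] with x hx
  have hd := faceDens_nonneg (k := k) (α := α) hx
  have hg := one_le_grow hx
  rw [Real.norm_eq_abs, abs_of_nonneg (by positivity), Finset.prod_mul_distrib,
    Real.finsetProd_rpow _ _ fun i _ => (hx i).le, Finset.prod_inv_distrib, Finset.prod_pow]
  change _ ≤ _ * (grow x ^ M)⁻¹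
  have h1 : wk r k x ≤ grow x ^ N := by
    rw [← vd_zero]; exact hN 0 le_rfl zero_le_one x hx
  have h2 : grow x ≤ (1 + ‖x‖) ^ r := by
    have : ∏ i : Fin r, (1 + x i) ≤ ∏ _i : Fin r, (1 + ‖x‖) :=
      Finset.prod_le_prod (fun i _ => by linarith [hx i]) fun i _ => by
        have := norm_le_pi_norm x i
        rw [Real.norm_eq_abs, abs_of_pos (hx i)] at this
        linarith
    simpa [grow] using this
  have h3 : grow x ^ (N + M) ≤ (1 + ‖x‖) ^ (r * (N + M)) := by
    rw [pow_mul]; exact pow_le_pow_left₀ (by linarith) h2 _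
  have h4 : 0 ≤ (∏ i, x i) ^ (α - 1) :=
    Real.rpow_nonneg (Finset.prod_nonneg fun i _ => (hx i).le) _
  have hg0 : 0 < grow x := by linarith
  calc faceDens r k α x * ((1 + ‖x‖) ^ (r * (N + M)))⁻¹
      ≤ ((∏ i, x i) ^ (α - 1) * grow x ^ N) * (grow x ^ (N + M))⁻¹ := by
        rw [faceDens]; gcongr
    _ = _ := by
        rw [pow_add]; field_simp

/-- The face map as a continuous linear map. -/
noncomputable def faceL {n : ℕ} (r : ℕ) (σ : Equiv.Perm (Fin n)) :
    (Fin r → ℝ) →L[ℝ] (Fin n → ℝ) :=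
  ContinuousLinearMap.pi fun l =>
    if h : (σ l : ℕ) < r then ContinuousLinearMap.proj ⟨σ l, h⟩ else 0

lemma faceL_apply {n r : ℕ} (σ : Equiv.Perm (Fin n)) (x : Fin r → ℝ) : faceL r σ x = face σ x := by
  funext l
  by_cases h : (σ l : ℕ) < r
  · rw [face_of_lt σ x h]; simp [faceL, h]
  · rw [face_of_le σ x (not_lt.mp h)]; simp [faceL, h]

lemma antilipschitz_face {n r : ℕ} (hrn : r ≤ n) (σ : Equiv.Perm (Fin n)) :
    AntilipschitzWith 1 (faceL r σ) := by
  refine ContinuousLinearMap.antilipschitz_of_bound _ fun x => ?_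
  rw [NNReal.coe_one, one_mul, pi_norm_le_iff_of_nonneg (norm_nonneg _)]
  intro b
  have hb : (σ (σ.symm (Fin.castLE hrn b)) : ℕ) < r := by simp
  have h := norm_le_pi_norm (faceL r σ x) (σ.symm (Fin.castLE hrn b))
  rw [faceL_apply, face_of_lt σ x hb] at h
  rw [faceL_apply]
  convert h using 3
  ext; simp

/-- The Riesz measure of a face, as a tempered distribution on the whole space. -/
lemma exists_face_clm {n r : ℕ} (hrn : r ≤ n) {k α : ℝ} (hk : 0 < k) (hα : 0 < α)
    (σ : Equiv.Perm (Fin n)) :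
    ∃ N : SchwartzMap (Fin n → ℝ) ℂ →L[ℂ] ℂ, ∀ φ,
      N φ = ∫ x in Rplus r, φ (face σ x) * (faceDens r k α x : ℂ) := by
  set ν : Measure (Fin r → ℝ) :=
    (volume.restrict (Rplus r)).withDensity fun x => ENNReal.ofReal (faceDens r k α x) with hν
  have hm : Measurable fun x => ENNReal.ofReal (faceDens r k α x) :=
    (measurable_dens r k α).ennreal_ofReal
  have hfin : ∀ᵐ x ∂volume.restrict (Rplus r), ENNReal.ofReal (faceDens r k α x) < ⊤ :=
    .of_forall fun x => ENNReal.ofReal_lt_top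
  have : ν.HasTemperateGrowth := by
    obtain ⟨m, h⟩ := integrable_dens (r := r) hk hα
    refine ⟨⟨m, ?_⟩⟩
    rw [hν, integrable_withDensity_iff_integrable_smul' hm hfin]
    refine IntegrableOn.congr_fun h (fun x hx => ?_) (measurableSet_Rplus r)
    rw [ENNReal.toReal_ofReal (faceDens_nonneg hx), smul_eq_mul, Real.rpow_neg (by positivity),
      Real.rpow_natCast]
  refine ⟨(SchwartzMap.integralCLM ℂ ν).comp
    (SchwartzMap.compCLMOfAntilipschitz ℂ (faceL r σ).hasTemperateGrowth
      (antilipschitz_face hrn σ)), fun φ => ?_⟩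
  rw [ContinuousLinearMap.comp_apply, SchwartzMap.integralCLM_apply, hν,
    integral_withDensity_eq_integral_toReal_smul hm hfin]
  refine setIntegral_congr_fun (measurableSet_Rplus r) fun x hx => ?_
  rw [ENNReal.toReal_ofReal (faceDens_nonneg hx)]
  change faceDens r k α x • φ (faceL r σ x) = _
  rw [faceL_apply, Complex.real_smul, mul_comm]

/-- Continuous functions agreeing on the open orthant agree on its faces. -/
lemma eq_on_face {n r : ℕ} {f g : (Fin n → ℝ) → ℂ} (hf : Continuous f) (hg : Continuous g)
    (h : ∀ x ∈ Rplus n, f x = g x) (σ : Equiv.Perm (Fin n)) {x : Fin r → ℝ} (hx : x ∈ Rplus r) :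
    f (face σ x) = g (face σ x) := by
  have hl : ∀ f : (Fin n → ℝ) → ℂ, Continuous f → Filter.Tendsto
      (fun t : ℝ => f (fun l => face σ x l + t)) (nhdsWithin 0 (Set.Ioi 0))
      (nhds (f (face σ x))) := fun f hf => by
    have : Continuous fun t : ℝ => f (fun l => face σ x l + t) := by fun_prop
    simpa using (this.tendsto 0).mono_left nhdsWithin_le_nhds
  refine tendsto_nhds_unique_of_eventuallyEq (hl f hf) (hl g hg) ?_
  filter_upwards [self_mem_nhdsWithin] with t ht
  refine h _ fun l => ?_
  have ht0 : 0 < t := ht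
  by_cases hr : (σ l : ℕ) < r
  · linarith [face_pos σ hx hr]
  · rw [face_of_le σ x (not_lt.mp hr)]; linarith

lemma sum_face {n r : ℕ} (hrn : r ≤ n) (σ : Equiv.Perm (Fin n)) (x : Fin r → ℝ) :
    ∑ l, face σ x l = ∑ b, x b := by
  obtain ⟨m, rfl⟩ := Nat.exists_eq_add_of_le hrn
  simp only [face]
  rw [Equiv.sum_comp σ (embOrth (r + m) r x), Fin.sum_univ_add]
  simp [embOrth]

/-- The face measure on polynomials times `e^{-c∑x}` is the integral `J`. -/
lemma integral_face {n r : ℕ} (hrn : r ≤ n) {k α c : ℝ}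
    {w : SchwartzMap (Fin n → ℝ) ℝ} (hw : ∀ x ∈ Rplus n, w x = Real.exp (-(c * ∑ i, x i)))
    (σ : Equiv.Perm (Fin n)) (p : MvPolynomial (Fin n) ℝ) :
    ∫ x in Rplus r, toC n (pmul w p) (face σ x) * (faceDens r k α x : ℂ) = (J r k α c σ p : ℂ) := by
  rw [J, ← integral_complex_ofReal]
  refine setIntegral_congr_fun (measurableSet_Rplus r) fun x hx => ?_
  have h := eq_on_face (f := toC n (pmul w p))
    (g := fun y => ((MvPolynomial.eval y p * Real.exp (-(c * ∑ i, y i)) : ℝ) : ℂ))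
    (toC n (pmul w p)).continuous
    (Complex.continuous_ofReal.comp ((continuous_eval p).mul (by fun_prop)))
    (fun y hy => by rw [toC_apply, pmul_apply, hw y hy]) σ hx
  rw [h, sum_face hrn, ← faceDens_mul_exp hx]
  push_cast
  ring

/-! ### Identification at the discrete Wallach points -/

/-- The distribution `R_{kr}` is the average over all faces of the Riesz measures: both solve the
same recursion with the same values on `e^{-c∑x}`. -/
theorem riesz_eq {n r : ℕ} {k : ℝ} (hk : 0 < k) (hrn : r + 1 ≤ n)
    {R : ℂ → (SchwartzMap (Fin n → ℝ) ℂ →L[ℂ] ℂ)} (hR : IsRieszFamily n k R)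
    (φ : SchwartzMap (Fin n → ℝ) ℂ) :
    R ((k * (r : ℝ) : ℝ) : ℂ) φ =
      (1 / (Nat.factorial n : ℂ)) * ∑ σ : Equiv.Perm (Fin n),
        (((dnk r k * ∏ j ∈ Finset.range r, Real.Gamma (k * n - k * j) : ℝ) : ℂ))⁻¹ *
          ∫ x in Rplus r, φ (face σ x) * (faceDens r k (k * ((n : ℝ) - r + 1)) x : ℂ) := by
  have hrn' : r ≤ n := by omega
  have hα : 0 < k * ((n : ℝ) - r + 1) := by
    have : (r : ℝ) ≤ n := by exact_mod_cast hrn'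
    exact mul_pos hk (by linarith)
  set K : ℝ := dnk r k * ∏ j ∈ Finset.range r, Real.Gamma (k * n - k * j) with hKdef
  have hK : (K : ℂ) ≠ 0 := by
    have : 0 < K := mul_pos (dnk_pos r hk) (Finset.prod_pos fun j hj =>
      Real.Gamma_pos_of_pos (by
        have : (j : ℝ) < n := by
          have := Finset.mem_range.mp hj
          exact_mod_cast (by omega : j < n)
        nlinarith))
    exact_mod_cast this.ne'
  clear_value K
  choose N hN using exists_face_clm (n := n) hrn' hk hα
  set T : SchwartzMap (Fin n → ℝ) ℂ →L[ℂ] ℂ :=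
    (1 / (Nat.factorial n : ℂ)) • ∑ σ : Equiv.Perm (Fin n), (K : ℂ)⁻¹ • N σ with hT
  have hTa : ∀ φ, T φ = (1 / (Nat.factorial n : ℂ)) * ∑ σ : Equiv.Perm (Fin n), (K : ℂ)⁻¹ *
      ∫ x in Rplus r, φ (face σ x) * (faceDens r k (k * ((n : ℝ) - r + 1)) x : ℂ) := fun φ => by
    simp [hT, hN]
  set μ : ℂ := ((k * (r : ℝ) : ℝ) : ℂ) with hμ
  rw [← hTa, ← sub_eq_zero]
  have hreal : ∀ ψ : SchwartzMap (Fin n → ℝ) ℝ, R μ (toC n ψ) - T (toC n ψ) = 0 := by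
    intro ψ
    -- This `α` satisfies `α + k(n-1) = kr`; it is not positive, so the recursion for `R_{kr}` is only
    -- available by analytic continuation.
    refine eq_zero_of_recursion (k := k) (α := k * ((r : ℝ) - n + 1))
      (((R μ - T).restrictScalars ℝ).comp (toC n)) ?_ ?_ ?_ ψ
    · intro ψ hψ
      change R μ (toC n ψ) - T (toC n ψ) = 0
      have h0 : ∀ x ∈ Rplus n, toC n ψ x = 0 := fun x hx => by rw [toC_apply, hψ x hx]; simp
      rw [riesz_vanish hR μ h0, hTa, zero_sub, neg_eq_zero]
      refine mul_eq_zero_of_right _ (Finset.sum_eq_zero fun σ _ => mul_eq_zero_of_right _ ?_)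
      rw [setIntegral_congr_fun (g := fun _ => 0) (measurableSet_Rplus r) fun x hx => by
        dsimp only
        rw [eq_on_face (toC n ψ).continuous continuous_const h0 σ hx, zero_mul]]
      simp
    · intro c hc w hw
      change R μ (toC n w) - T (toC n w) = 0
      have h1 : pmul w 1 = w := by ext x; simp [pmul_apply]
      have hJ : ∀ σ : Equiv.Perm (Fin n), J r k (k * ((n : ℝ) - r + 1)) c σ 1 =
          c ^ (-(n * (k * r))) * K := fun σ => by
        simp only [J, map_one, one_mul]
        rw [integral_rho r hk hα hc, hKdef, ← Finset.prod_range_reflect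
          (fun j => Real.Gamma (k * n - k * j))]
        congr 2
        · ring
        · refine Finset.prod_congr rfl fun j hj => ?_
          have : j + 1 ≤ r := by simpa [Nat.succ_le_iff] using hj
          rw [Nat.sub_sub, Nat.cast_sub (by omega)]
          push_cast
          ring_nf
      rw [riesz_base hk hR μ hc hw, hTa, ← h1]
      simp only [integral_face hrn' hw, hJ]
      rw [Finset.sum_const, Finset.card_univ, Fintype.card_perm, Fintype.card_fin, nsmul_eq_mul,
        Complex.ofReal_mul, Complex.ofReal_cpow hc.le]
      have hf : (Nat.factorial n : ℂ) ≠ 0 := by exact_mod_cast (Nat.factorial_pos n).ne'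
      rw [hμ]
      push_cast
      field_simp
      ring
    · intro c hc w hw i p
      change (c : ℂ) * (R μ (toC n _) - T (toC n _)) = R μ (toC n _) - T (toC n _)
      have h1 := riesz_rec hk hR (k * ((r : ℝ) - n + 1)) hc hw i p
      have h2 := congrArg (fun t : ℝ => (t : ℂ)) (sum_J_rec hrn' hk hc i p)
      have h3 : k * ((r : ℝ) - n + 1) + k * ((n : ℝ) - 1) = k * r := by ring
      rw [h3, ← hμ] at h1
      rw [mul_sub, h1, hTa, hTa]
      simp only [integral_face hrn' hw, ← Finset.mul_sum]
      push_cast at h2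
      rw [← h2]
      ring
  have hdec : φ = toC n (SchwartzMap.postcompCLM Complex.reCLM φ) +
      Complex.I • toC n (SchwartzMap.postcompCLM Complex.imCLM φ) := by
    ext x
    simp only [add_apply, smul_apply, toC_apply, SchwartzMap.postcompCLM_apply,
      Complex.reCLM_apply, Complex.imCLM_apply, smul_eq_mul]
    rw [mul_comm, Complex.re_add_im]
  rw [hdec, map_add, map_smul, map_add, map_smul, add_sub_add_comm, hreal, ← smul_sub, hreal]
  simp

/-- Positivity of `R_{kr}`, from the explicit formula. -/
theorem riesz_nonneg {n r : ℕ} {k : ℝ} (hk : 0 < k) (hrn : r + 1 ≤ n)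
    {R : ℂ → (SchwartzMap (Fin n → ℝ) ℂ →L[ℂ] ℂ)} (hR : IsRieszFamily n k R)
    (φ : SchwartzMap (Fin n → ℝ) ℂ) (hφ : ∀ x, 0 ≤ (φ x).re ∧ (φ x).im = 0) :
    0 ≤ (R ((k * (r : ℝ) : ℝ) : ℂ) φ).re ∧ (R ((k * (r : ℝ) : ℝ) : ℂ) φ).im = 0 := by
  have hreal_int : ∀ σ : Equiv.Perm (Fin n),
      ∫ x in Rplus r, φ (face σ x) * (faceDens r k (k * ((n : ℝ) - r + 1)) x : ℂ) =
      ((∫ x in Rplus r, (φ (face σ x)).re * faceDens r k (k * ((n : ℝ) - r + 1)) x : ℝ) : ℂ) := by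
    intro σ
    rw [← integral_complex_ofReal]
    congr 1
    funext x
    rw [Complex.ofReal_mul]
    congr 1
    exact Complex.ext (by simp) (by simp [(hφ _).2])
  have heq : R ((k * (r : ℝ) : ℝ) : ℂ) φ = (((1 / (Nat.factorial n : ℝ)) *
      ∑ σ : Equiv.Perm (Fin n),
        (dnk r k * ∏ j ∈ Finset.range r, Real.Gamma (k * n - k * j))⁻¹ *
        ∫ x in Rplus r, (φ (face σ x)).re * faceDens r k (k * ((n : ℝ) - r + 1)) x : ℝ) : ℂ) := by
    rw [riesz_eq hk hrn hR φ]
    simp only [hreal_int]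
    push_cast
    rfl
  rw [heq, Complex.ofReal_re, Complex.ofReal_im]
  refine ⟨mul_nonneg (by positivity) (Finset.sum_nonneg fun σ _ => mul_nonneg ?_ ?_), rfl⟩
  · refine inv_nonneg.mpr (mul_nonneg (dnk_pos r hk).le (Finset.prod_nonneg fun j hj => ?_))
    have h1 : (j : ℝ) ≤ n := by
      have := Finset.mem_range.mp hj
      exact_mod_cast (by omega : j ≤ n)
    exact Real.Gamma_nonneg_of_nonneg (by nlinarith)
  · exact setIntegral_nonneg (measurableSet_Rplus r) fun x hx =>
      mul_nonneg (hφ _).1 (faceDens_nonneg hx)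

end RieszWallach

/-- Riesz distributions at the discrete Wallach points: for
`r ∈ {1,…,n-1}`, `R_{kr}` is the positive measure
`⟨R_{kr}, φ⟩ = (1/n!) Σ_{σ∈S_n} (d_r(k)Γ_r(kn;k))⁻¹ ∫_{(0,∞)^r}
  φ(σ·(x,0)) (x₁⋯x_r)^{k(n-r+1)-1} ∏_{i<j≤r}|x_i-x_j|^{2k} dx`;
in particular `⟨R_{kr}, φ⟩ ≥ 0` for nonnegative `φ`. -/
theorem riesz_discrete_wallach (n : ℕ) (hn : 2 ≤ n) (k : ℝ) (hk : 0 < k)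
    (R : ℂ → (SchwartzMap (Fin n → ℝ) ℂ →L[ℂ] ℂ)) (hR : IsRieszFamily n k R)
    (r : ℕ) (hr1 : 1 ≤ r) (hrn : r ≤ n - 1) :
    (∀ φ : SchwartzMap (Fin n → ℝ) ℂ,
      R ((k * (r : ℝ) : ℝ) : ℂ) φ =
        (1 / (Nat.factorial n : ℂ)) * ∑ σ : Equiv.Perm (Fin n),
          (((dnk r k * ∏ j ∈ Finset.range r, Real.Gamma (k * n - k * j) : ℝ) : ℂ))⁻¹ *
            ∫ x in Rplus r,
              φ (fun i => embOrth n r x (σ i)) *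
                ((((∏ i, x i) ^ (k * ((n : ℝ) - r + 1) - 1) : ℝ)) : ℂ) *
                (wk r k x : ℂ)) ∧
    (∀ φ : SchwartzMap (Fin n → ℝ) ℂ, (∀ x, 0 ≤ (φ x).re ∧ (φ x).im = 0) →
      0 ≤ (R ((k * (r : ℝ) : ℝ) : ℂ) φ).re ∧ (R ((k * (r : ℝ) : ℝ) : ℂ) φ).im = 0) := by
  have hrn' : r + 1 ≤ n := by omega
  refine ⟨fun φ => ?_, RieszWallach.riesz_nonneg hk hrn' hR⟩
  rw [RieszWallach.riesz_eq hk hrn' hR φ]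
  simp only [RieszWallach.faceDens, Complex.ofReal_mul, mul_assoc]
  rfl
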